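/- arXiv:2006.13867 — 2 statements merged into one kernel-verified Lean document; each statement's English description precedes it below -/
import Mathlib

section
/- Assume that S_ξ ⊆ Ω for every ξ ∈ K. Then ū^K : ℝⁿ → ℝ is a convex function of class C^{1,1} satisfying ∇ū^K(ℝⁿ) = ∇ū^K(Ω) = K. Moreover, for every x ∈ ℝⁿ the set H(x, ∇ū^K(x), K) is nonempty, and for every matrix H_x ∈ H(x, ∇ū^K(x), K) one has, as x' → x, ū^K(x') ≤ ū^K(x) + ∇ū^K(x)·(x'−x) + (1/2)(x'−x)ᵀ H_x (x'−x) + o(|x'−x|²). -/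
open MeasureTheory Metric Set Asymptotics
open scoped RealInnerProductSpace Topology

noncomputable section

abbrev Euc (n : ℕ) := EuclideanSpace ℝ (Fin n)

/-- The `K`-envelope of `u`. -/
def KEnv {n : ℕ} (K Ω : Set (Euc n)) (u : Euc n → ℝ) (x : Euc n) : ℝ :=
  sSup {z : ℝ | ∃ a : ℝ, ∃ ξ ∈ K, (∀ y ∈ closure Ω, a + ⟪ξ, y⟫ ≤ u y) ∧ z = a + ⟪ξ, x⟫}

/-- The set of minimizers `S_ξ = argmin_{x ∈ cl Ω} (u x − ξ·x)`. -/
def Sset {n : ℕ} (Ω : Set (Euc n)) (u : Euc n → ℝ) (ξ : Euc n) : Set (Euc n) :=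
  {x ∈ closure Ω | ∀ y ∈ closure Ω, u x - ⟪ξ, x⟫ ≤ u y - ⟪ξ, y⟫}

/-- The normal cone of `K` at `ξ`. -/
def normalCone {n : ℕ} (K : Set (Euc n)) (ξ : Euc n) : Set (Euc n) :=
  {v | ∀ ξ' ∈ K, ⟪v, ξ' - ξ⟫ ≤ 0}

/-- The family of "touching Hessians" `H(x, ξ, K)`: convex combinations of at most `n+1`
Hessians of `u` at contact points, allowing a shift by a normal vector of `K` at `ξ`. -/
def Hset {n : ℕ} (Ω : Set (Euc n)) (u : Euc n → ℝ) (K : Set (Euc n)) (x ξ : Euc n) :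
    Set (Euc n →L[ℝ] Euc n →L[ℝ] ℝ) :=
  {H | ∃ m : ℕ, 1 ≤ m ∧ m ≤ n + 1 ∧ ∃ lam : Fin m → ℝ, ∃ s : Fin m → Euc n,
    (∀ i, 0 ≤ lam i) ∧ (∑ i, lam i) = 1 ∧ (∀ i, s i ∈ Sset Ω u ξ ∩ Ω) ∧
    (x - ∑ i, lam i • s i) ∈ normalCone K ξ ∧
    H = ∑ i, lam i • fderiv ℝ (fderiv ℝ u) (s i)}

/-!
Sion's minimax theorem, applied on the convex hull of the graph of `u` times `K`, yields for every
`x` a slope `ξ ∈ K` and a convex combination `c` of points of `S_ξ` with `x - c` normal to `K` at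
`ξ`; Carathéodory's theorem brings the number of points down to `n + 1`. Such a combination is a
dual certificate for the envelope at `x`: averaging an admissible affine function over the contact
points moved by `h` gives `ū(x + h) - ū(x) ≤ ∑ λᵢ (u(sᵢ + h) - u(sᵢ))`, while `ξ` itself is
admissible and gives `ū(x + h) ≥ ū(x) + ξ·h`. As `∇u(sᵢ) = ξ`, Taylor's formula for `u` at the `sᵢ`
bounds `ū` from above to second order. The contact points lie in one compact subset of `Ω`, so the
quadratic bound is uniform in `x`, and a convex function with uniform quadratic upper bounds along
its slopes has Lipschitz gradient.
-/

open Module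
open scoped NNReal

section ConvexHull

lemma convexHull_range_eq_image_stdSimplex {ι 𝕜 E : Type*} [Fintype ι] [Field 𝕜] [LinearOrder 𝕜]
    [IsStrictOrderedRing 𝕜] [AddCommGroup E] [Module 𝕜 E] (z : ι → E) :
    convexHull 𝕜 (range z) = (fun w : ι → 𝕜 => ∑ i, w i • z i) '' stdSimplex 𝕜 ι := by
  classical
  have hvertices : range z =
      Fintype.linearCombination 𝕜 z '' range fun i => Pi.single i (1 : 𝕜) := by
    simp [← range_comp, Function.comp_def]
  rw [hvertices, ← LinearMap.image_convexHull, convexHull_rangle_single_eq_stdSimplex]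
  rfl

lemma mem_convexHull_iff_exists_fin {𝕜 E : Type*} [Field 𝕜] [LinearOrder 𝕜]
    [IsStrictOrderedRing 𝕜] [AddCommGroup E] [Module 𝕜 E] [FiniteDimensional 𝕜 E] {d : ℕ}
    (hd : finrank 𝕜 E ≤ d) {S : Set E} {x : E} :
    x ∈ convexHull 𝕜 S ↔ ∃ w ∈ stdSimplex 𝕜 (Fin (d + 1)), ∃ z : Fin (d + 1) → E,
      (∀ i, z i ∈ S) ∧ ∑ i, w i • z i = x := by
  constructor
  · rw [convexHull_eq_union]
    simp only [mem_iUnion]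
    rintro ⟨t, htS, ht, hx⟩
    have : Nonempty t := (convexHull_nonempty_iff.1 ⟨x, hx⟩).to_subtype
    have hcard : Fintype.card t ≤ Fintype.card (Fin (d + 1)) := by
      rw [Fintype.card_fin]
      exact ht.card_le_finrank_succ.trans (by grw [Submodule.finrank_le, hd])
    obtain ⟨g⟩ := Function.Embedding.nonempty_of_card_le hcard
    obtain ⟨z, hz⟩ : ∃ z : Fin (d + 1) → t, z.Surjective :=
      ⟨_, Function.invFun_surjective g.injective⟩
    have hrange : range (fun i => (z i : E)) = t := by
      rw [range_comp' Subtype.val, hz.range_eq, image_univ, Subtype.range_coe]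
    rw [← hrange, convexHull_range_eq_image_stdSimplex] at hx
    obtain ⟨w, hw, hwx⟩ := hx
    exact ⟨w, hw, _, fun i => htS (z i).2, hwx⟩
  · rintro ⟨w, hw, z, hz, rfl⟩
    exact (convex_convexHull 𝕜 S).sum_mem (fun i _ => hw.1 i) hw.2
      fun i _ => subset_convexHull 𝕜 S (hz i)

lemma isCompact_convexHull {E : Type*} [AddCommGroup E] [Module ℝ E] [FiniteDimensional ℝ E]
    [TopologicalSpace E] [ContinuousAdd E] [ContinuousSMul ℝ E] {S : Set E} (hS : IsCompact S) :
    IsCompact (convexHull ℝ S) := by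
  have hparam : convexHull ℝ S =
      (fun p : (Fin (finrank ℝ E + 1) → ℝ) × (Fin (finrank ℝ E + 1) → E) => ∑ i, p.1 i • p.2 i) ''
        stdSimplex ℝ _ ×ˢ univ.pi fun _ => S := by
    ext x
    rw [mem_convexHull_iff_exists_fin le_rfl]
    simp [and_assoc]
  rw [hparam]
  exact ((isCompact_stdSimplex ℝ _).prod (isCompact_univ_pi fun _ => hS)).image (by fun_prop)

lemma mem_convexHull_minimizers {𝕜 E : Type*} [Field 𝕜] [LinearOrder 𝕜]
    [IsStrictOrderedRing 𝕜] [AddCommGroup E] [Module 𝕜 E] {S : Set E} {x : E} (L : E →ₗ[𝕜] 𝕜)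
    (hx : x ∈ convexHull 𝕜 S) (hmin : ∀ y ∈ S, L x ≤ L y) :
    x ∈ convexHull 𝕜 {z ∈ S | ∀ y ∈ S, L z ≤ L y} := by
  obtain ⟨ι, _, z, w, hz, -, hw, hw1, rfl⟩ := eq_pos_convex_span_of_mem_convexHull hx
  have hzS (i : ι) : z i ∈ S := hz (mem_range_self i)
  set m := L (∑ i, w i • z i) with hm
  have hsum : ∑ i, w i * m = ∑ i, w i * L (z i) := by
    rw [← Finset.sum_mul, hw1, one_mul, hm, map_sum]
    simp only [map_smul, smul_eq_mul]
  have hterm (i : ι) : w i * m = w i * L (z i) :=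
    (Finset.sum_eq_sum_iff_of_le fun i _ =>
      mul_le_mul_of_nonneg_left (hmin _ (hzS i)) (hw i).le).1 hsum i (Finset.mem_univ i)
  refine (convex_convexHull 𝕜 _).sum_mem (fun i _ => (hw i).le) hw1 fun i _ =>
    subset_convexHull 𝕜 _ ⟨hzS i, fun y hy => ?_⟩
  rw [← mul_left_cancel₀ (hw i).ne' (hterm i)]
  exact hmin y hy

end ConvexHull

section Minimax

variable {E : Type*} [NormedAddCommGroup E] [InnerProductSpace ℝ E]

lemma exists_isSaddlePointOn_add_inner {C : Set (E × ℝ)} {K : Set E} (hC : IsCompact C)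
    (hCconv : Convex ℝ C) (hCne : C.Nonempty) (hK : IsCompact K) (hKconv : Convex ℝ K)
    (hKne : K.Nonempty) (x : E) :
    ∃ q ∈ C, ∃ ξ ∈ K, IsSaddlePointOn C K (fun q η => q.2 + ⟪η, x - q.1⟫) q ξ := by
  refine Sion.exists_isSaddlePointOn hCne hCconv hC
    (fun η _ => Continuous.lowerSemicontinuous (by fun_prop) |>.lowerSemicontinuousOn C)
    (fun η _ => ConvexOn.quasiconvexOn ?_) hKconv hKne hK
    (fun q _ => Continuous.upperSemicontinuous (by fun_prop) |>.upperSemicontinuousOn K)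
    (fun q _ => ConcaveOn.quasiconcaveOn ?_)
  · refine (((LinearMap.snd ℝ E ℝ - innerₗ E η ∘ₗ LinearMap.fst ℝ E ℝ).convexOn hCconv).add_const
      ⟪η, x⟫).congr fun q _ => ?_
    simp [inner_sub_right, sub_add_eq_add_sub, add_sub_assoc]
  · refine (((innerₗ E (x - q.1)).concaveOn hKconv).add_const q.2).congr fun η _ => ?_
    exact (congrArg (· + q.2) (real_inner_comm _ _)).trans (add_comm _ _)

theorem exists_slope_exists_mem_convexHull_minimizers [FiniteDimensional ℝ E] {A K : Set E}
    {u : E → ℝ} (hA : IsCompact A) (hAne : A.Nonempty) (hu : ContinuousOn u A) (hK : IsCompact K)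
    (hKconv : Convex ℝ K) (hKne : K.Nonempty) (x : E) :
    ∃ ξ ∈ K, ∃ c ∈ convexHull ℝ {s ∈ A | ∀ y ∈ A, u s - ⟪ξ, s⟫ ≤ u y - ⟪ξ, y⟫},
      ∀ η ∈ K, ⟪x - c, η - ξ⟫ ≤ 0 := by
  -- Convexifying the graph of `u` makes the minimax theorem applicable. The saddle point minimizes
  -- a linear functional over the hull, so it is a combination of minimizers on the graph itself.
  let G : Set (E × ℝ) := (fun y => (y, u y)) '' A
  have hG : IsCompact G := hA.image_of_continuousOn (continuousOn_id.prodMk hu)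
  obtain ⟨⟨c, v⟩, hcv, ξ, hξ, hsaddle⟩ := exists_isSaddlePointOn_add_inner
    (isCompact_convexHull hG) (convex_convexHull ℝ G) (hAne.image _).convexHull hK hKconv hKne x
  refine ⟨ξ, hξ, c, ?_, fun η hη => ?_⟩
  · let L : E × ℝ →ₗ[ℝ] ℝ := LinearMap.snd ℝ E ℝ - innerₗ E ξ ∘ₗ LinearMap.fst ℝ E ℝ
    have hmin (q) (hq : q ∈ G) : L (c, v) ≤ L q := by
      have := hsaddle q (subset_convexHull ℝ G hq) ξ hξ
      simp only [inner_sub_right] at this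
      simp only [L, LinearMap.sub_apply, LinearMap.comp_apply, LinearMap.fst_apply,
        LinearMap.snd_apply, innerₗ_apply_apply]
      linarith
    have hc : c ∈ LinearMap.fst ℝ E ℝ '' convexHull ℝ {q ∈ G | ∀ q' ∈ G, L q ≤ L q'} :=
      ⟨_, mem_convexHull_minimizers L hcv hmin, rfl⟩
    rw [LinearMap.image_convexHull] at hc
    refine convexHull_mono ?_ hc
    rintro _ ⟨_, ⟨⟨s, hs, rfl⟩, hle⟩, rfl⟩
    exact ⟨hs, fun y hy => by simpa [L] using hle _ (mem_image_of_mem _ hy)⟩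
  · have := hsaddle _ hcv η hη
    rw [inner_sub_right, real_inner_comm η, real_inner_comm ξ]
    linarith

end Minimax

section SecondOrder

variable {E F : Type*} [NormedAddCommGroup E] [NormedSpace ℝ E] [NormedAddCommGroup F]
  [NormedSpace ℝ F] {f : E → F}

lemma hasFDerivAt_taylor_two_remainder {s h : E} (hs : ContDiffAt ℝ 2 f s)
    (hf : DifferentiableAt ℝ f (s + h)) :
    HasFDerivAt
      (fun h => f (s + h) - f s - fderiv ℝ f s h - (1 / 2 : ℝ) • fderiv ℝ (fderiv ℝ f) s h h)
      (fderiv ℝ f (s + h) - fderiv ℝ f s - fderiv ℝ (fderiv ℝ f) s h) h := by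
  set B := fderiv ℝ (fderiv ℝ f) s
  have hsymm : IsSymmSndFDerivAt ℝ f s := hs.isSymmSndFDerivAt (by simp)
  have hquad : HasFDerivAt (fun h => (1 / 2 : ℝ) • B h h) (B h) h := by
    refine ((B.hasFDerivAt.clm_apply (hasFDerivAt_id h)).const_smul (1 / 2 : ℝ)).congr_fderiv ?_
    ext v
    change (1 / 2 : ℝ) • (B h v + B v h) = B h v
    rw [hsymm v h, ← two_smul ℝ, smul_smul]
    norm_num
  have hshift : HasFDerivAt (fun h => f (s + h)) (fderiv ℝ f (s + h)) h :=
    (hasFDerivAt_comp_add_left s).2 hf.hasFDerivAt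
  exact ((hshift.sub_const _).sub (fderiv ℝ f s).hasFDerivAt).sub hquad

lemma taylor_two_isLittleO {s : E} (hf : ContDiffAt ℝ 2 f s) :
    (fun h => f (s + h) - f s - fderiv ℝ f s h - (1 / 2 : ℝ) • fderiv ℝ (fderiv ℝ f) s h h)
      =o[𝓝 0] fun h => ‖h‖ ^ 2 := by
  have hdiff : ∀ᶠ h in 𝓝 (0 : E), DifferentiableAt ℝ f (s + h) := by
    have htend : Filter.Tendsto (s + ·) (𝓝 0) (𝓝 s) := by
      simpa using (continuous_const_add s).tendsto 0
    filter_upwards [htend.eventually (hf.eventually (by simp))] with h hh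
    exact hh.differentiableAt (by simp)
  obtain ⟨r, hr, hball⟩ := Metric.eventually_nhds_iff_ball.1 hdiff
  have hderiv : (fun h => fderiv ℝ f (s + h) - fderiv ℝ f s - fderiv ℝ (fderiv ℝ f) s h)
      =o[𝓝 0] fun h => ‖h‖ ^ 1 := by
    have : DifferentiableAt ℝ (fderiv ℝ f) s :=
      (hf.fderiv_right (m := 1) (by norm_num)).differentiableAt (by simp)
    simpa using (hasFDerivAt_iff_isLittleO_nhds_zero.1 this.hasFDerivAt).norm_right
  have := (convex_ball (0 : E) r).isLittleO_pow_succ (mem_ball_self hr)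
    (fun h hh => (hasFDerivAt_taylor_two_remainder hf (hball h hh)).hasFDerivWithinAt)
    (by simpa only [sub_zero] using hderiv.mono nhdsWithin_le_nhds)
  simpa [(isOpen_ball.nhdsWithin_eq (mem_ball_self hr))] using this

lemma norm_add_sub_sub_fderiv_le {s h : E} {C : ℝ}
    (hf : ∀ y ∈ closedBall s ‖h‖, DifferentiableAt ℝ f y)
    (hC : ∀ y ∈ closedBall s ‖h‖, ‖fderiv ℝ f y - fderiv ℝ f s‖ ≤ C * ‖h‖) :
    ‖f (s + h) - f s - fderiv ℝ f s h‖ ≤ C * ‖h‖ ^ 2 := by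
  have := (convex_closedBall s ‖h‖).norm_image_sub_le_of_norm_fderiv_le' hf hC
    (mem_closedBall_self (norm_nonneg h)) (show s + h ∈ closedBall s ‖h‖ by simp)
  simpa [add_sub_cancel_left, mul_assoc, sq] using this

lemma exists_forall_norm_add_sub_sub_fderiv_le [ProperSpace E] {S U : Set E} (hS : IsCompact S)
    (hU : IsOpen U) (hSU : S ⊆ U) (hf : ContDiffOn ℝ 2 f U) :
    ∃ δ > 0, ∃ C : ℝ≥0, ∀ s ∈ S, ∀ h : E, ‖h‖ ≤ δ →
      s + h ∈ U ∧ ‖f (s + h) - f s - fderiv ℝ f s h‖ ≤ C * ‖h‖ ^ 2 := by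
  obtain ⟨δ, hδ, hδU⟩ := hS.exists_cthickening_subset_open hU hSU
  have hf' : ContDiffOn ℝ 1 (fderiv ℝ f) U := hf.fderiv_of_isOpen hU (by norm_num)
  obtain ⟨C, hC⟩ := hS.cthickening.exists_bound_of_continuousOn
    ((hf'.continuousOn_fderiv_of_isOpen hU (by norm_num)).mono hδU)
  have hball {s h : E} (hs : s ∈ S) (hh : ‖h‖ ≤ δ) : closedBall s ‖h‖ ⊆ cthickening δ S :=
    (closedBall_subset_closedBall hh).trans (closedBall_subset_cthickening hs δ)
  refine ⟨δ, hδ, C.toNNReal, fun s hs h hh => ⟨hδU (hball hs hh (by simp)), ?_⟩⟩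
  have hnhds (y) (hy : y ∈ closedBall s ‖h‖) : U ∈ 𝓝 y := hU.mem_nhds (hδU (hball hs hh hy))
  refine norm_add_sub_sub_fderiv_le
    (fun y hy => (hf.differentiableOn (by simp)).differentiableAt (hnhds y hy)) fun y hy => ?_
  calc ‖fderiv ℝ f y - fderiv ℝ f s‖ ≤ C.toNNReal * ‖y - s‖ :=
        (convex_closedBall s ‖h‖).norm_image_sub_le_of_norm_fderiv_le
          (fun z hz => (hf'.differentiableOn (by simp)).differentiableAt (hnhds z hz))
          (fun z hz => (hC z (hball hs hh hz)).trans (Real.le_coe_toNNReal C))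
          (mem_closedBall_self (norm_nonneg h)) hy
    _ ≤ C.toNNReal * ‖h‖ := by gcongr; exact mem_closedBall_iff_norm.1 hy

end SecondOrder

section SupportingSlopes

variable {E : Type*} [NormedAddCommGroup E] [InnerProductSpace ℝ E] {f : E → ℝ} {p : E → E}

lemma convexOn_univ_of_inner_le (hlow : ∀ x h, f x + ⟪p x, h⟫ ≤ f (x + h)) :
    ConvexOn ℝ univ f := by
  refine ⟨convex_univ, fun x _ y _ a b ha hb hab => ?_⟩
  set z := a • x + b • y with hz
  have hx : f z + ⟪p z, x - z⟫ ≤ f x := by simpa using hlow z (x - z)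
  have hy : f z + ⟪p z, y - z⟫ ≤ f y := by simpa using hlow z (y - z)
  have hbary : a * ⟪p z, x - z⟫ + b * ⟪p z, y - z⟫ = 0 := by
    rw [← inner_smul_right, ← inner_smul_right, ← inner_add_right, smul_sub, smul_sub,
      sub_add_sub_comm, ← hz, ← add_smul, hab, one_smul, sub_self, inner_zero_right]
  calc f z = a * (f z + ⟪p z, x - z⟫) + b * (f z + ⟪p z, y - z⟫) := by
        linear_combination (-f z) * hab - hbary
    _ ≤ a • f x + b • f y := by simp only [smul_eq_mul]; gcongr

lemma le_add_inner_add_sq_of_norm_le {δ M : ℝ} {C : ℝ≥0} (hδ : 0 < δ)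
    (hlow : ∀ x h, f x + ⟪p x, h⟫ ≤ f (x + h)) (hM : ∀ x, ‖p x‖ ≤ M)
    (hup : ∀ x h, ‖h‖ ≤ δ → f (x + h) ≤ f x + ⟪p x, h⟫ + C * ‖h‖ ^ 2) (x h : E) :
    f (x + h) ≤ f x + ⟪p x, h⟫ + (C + 2 * M / δ) * ‖h‖ ^ 2 := by
  have hM0 : 0 ≤ M := (norm_nonneg _).trans (hM x)
  rcases le_or_gt ‖h‖ δ with hh | hh
  · refine (hup x h hh).trans ?_
    gcongr
    exact le_add_of_nonneg_right (by positivity)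
  have hback : f (x + h) - ⟪p (x + h), h⟫ ≤ f x := by
    simpa [← sub_eq_add_neg] using hlow (x + h) (-h)
  have hslopes : ⟪p (x + h) - p x, h⟫ ≤ 2 * M * ‖h‖ :=
    (real_inner_le_norm _ _).trans (by
      gcongr
      linarith [norm_sub_le (p (x + h)) (p x), hM (x + h), hM x])
  have hfar : 2 * M * ‖h‖ ≤ (C + 2 * M / δ) * ‖h‖ ^ 2 :=
    calc 2 * M * ‖h‖ = 2 * M / δ * (δ * ‖h‖) := by field_simp
      _ ≤ (C + 2 * M / δ) * (‖h‖ * ‖h‖) := by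
        gcongr
        exact le_add_of_nonneg_left C.2
      _ = _ := by ring
  rw [inner_sub_left] at hslopes
  linarith

lemma lipschitzWith_of_inner_le_of_le_add_sq {C : ℝ≥0}
    (hlow : ∀ x h, f x + ⟪p x, h⟫ ≤ f (x + h))
    (hup : ∀ x h, f (x + h) ≤ f x + ⟪p x, h⟫ + C * ‖h‖ ^ 2) : LipschitzWith (2 * C) p := by
  refine LipschitzWith.of_dist_le_mul fun x y => ?_
  rw [dist_comm x y, dist_eq_norm, dist_eq_norm]
  rcases eq_or_ne (p x) (p y) with heq | hne
  · simp only [heq, sub_self, norm_zero]; positivity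
  have hslopes : 0 < ‖p x - p y‖ := norm_pos_iff.2 (sub_ne_zero.2 hne)
  have hpoints : 0 < ‖y - x‖ := norm_pos_iff.2 (sub_ne_zero.2 fun h => hne (by rw [h]))
  have hgap (w : E) : ⟪p x - p y, w⟫ ≤ C * ‖y - x‖ ^ 2 + C * ‖w‖ ^ 2 := by
    have hbelow := hlow x (y - x + w)
    have hleg₁ := hup x (y - x)
    have hleg₂ := hup y w
    rw [← add_assoc, add_sub_cancel, inner_add_right] at hbelow
    rw [add_sub_cancel] at hleg₁
    rw [inner_sub_left]
    linarith
  -- the direction of the slope gap, with length balancing the two quadratic terms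
  set w := (‖y - x‖ / ‖p x - p y‖) • (p x - p y)
  have hw : ‖w‖ = ‖y - x‖ := by
    rw [norm_smul, Real.norm_of_nonneg (by positivity), div_mul_cancel₀ _ hslopes.ne']
  have hinner : ⟪p x - p y, w⟫ = ‖p x - p y‖ * ‖y - x‖ := by
    rw [inner_smul_right, real_inner_self_eq_norm_sq]
    field_simp
  have hprod : ‖p x - p y‖ * ‖y - x‖ ≤ 2 * C * ‖y - x‖ * ‖y - x‖ := by
    linarith [hinner ▸ hw ▸ hgap w]
  simpa using le_of_mul_le_mul_right hprod hpoints

lemma hasGradientAt_of_inner_le_of_le_add_sq [CompleteSpace E] {x ξ : E} {C : ℝ}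
    (hlow : ∀ᶠ h in 𝓝 0, f x + ⟪ξ, h⟫ ≤ f (x + h))
    (hup : ∀ᶠ h in 𝓝 0, f (x + h) ≤ f x + ⟪ξ, h⟫ + C * ‖h‖ ^ 2) : HasGradientAt f ξ x := by
  rw [hasGradientAt_iff_isLittleO_nhds_zero]
  refine IsBigO.trans_isLittleO (g := fun h => ‖h‖ ^ 2) (IsBigO.of_bound C ?_)
    (isLittleO_norm_pow_id one_lt_two)
  filter_upwards [hlow, hup] with h hh₁ hh₂
  rw [Real.norm_of_nonneg (by linarith), Real.norm_of_nonneg (by positivity)]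
  linarith

lemma contDiff_one_of_hasGradientAt [CompleteSpace E] (hf : ∀ x, HasGradientAt f (p x) x)
    (hp : Continuous p) : ContDiff ℝ 1 f := by
  refine contDiff_one_iff_hasFDerivAt.2 ⟨_, ?_, hf⟩
  exact (InnerProductSpace.toDual ℝ E).continuous.comp hp

end SupportingSlopes

lemma sum_mul_add_inner {ι E : Type*} [Fintype ι] [NormedAddCommGroup E] [InnerProductSpace ℝ E]
    {w : ι → ℝ} (hw : ∑ i, w i = 1) (s : ι → E) (a : ℝ) (η : E) :
    ∑ i, w i * (a + ⟪η, s i⟫) = a + ⟪η, ∑ i, w i • s i⟫ := by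
  simp only [mul_add, Finset.sum_add_distrib, ← Finset.sum_mul, hw, one_mul, inner_sum,
    inner_smul_right]

section Envelope

variable {n m : ℕ} {K Ω : Set (Euc n)} {u : Euc n → ℝ} {x ξ : Euc n} {lam : Fin m → ℝ}
  {s : Fin m → Euc n}

lemma add_inner_le_KEnv (hK : Bornology.IsBounded K) (hΩ : Ω.Nonempty) {a : ℝ} (hξ : ξ ∈ K)
    (ha : ∀ y ∈ closure Ω, a + ⟪ξ, y⟫ ≤ u y) (x : Euc n) : a + ⟪ξ, x⟫ ≤ KEnv K Ω u x := by
  obtain ⟨y, hy⟩ := hΩ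
  obtain ⟨M, hM⟩ := hK.exists_norm_le
  refine le_csSup ⟨u y + M * ‖x - y‖, ?_⟩ ⟨a, ξ, hξ, ha, rfl⟩
  rintro _ ⟨b, η, hη, hb, rfl⟩
  calc b + ⟪η, x⟫ = b + ⟪η, y⟫ + ⟪η, x - y⟫ := by rw [inner_sub_right]; ring
    _ ≤ u y + M * ‖x - y‖ := by
      gcongr
      · exact hb y (subset_closure hy)
      · exact (real_inner_le_norm _ _).trans (by gcongr; exact hM η hη)

lemma fderiv_eq_innerSL_of_mem_Sset (hΩ : IsOpen Ω) {s : Euc n} (hs : s ∈ Sset Ω u ξ)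
    (hsΩ : s ∈ Ω) (hu : DifferentiableAt ℝ u s) : fderiv ℝ u s = innerSL ℝ ξ := by
  have hmin : IsLocalMin (fun y => u y - innerSL ℝ ξ y) s := by
    filter_upwards [hΩ.mem_nhds hsΩ] with y hy using hs.2 y (subset_closure hy)
  exact sub_eq_zero.1 (hmin.hasFDerivAt_eq_zero (hu.hasFDerivAt.sub (innerSL ℝ ξ).hasFDerivAt))

lemma isCompact_biUnion_Sset (hK : IsCompact K) (hΩ : Bornology.IsBounded Ω)
    (hu : ContinuousOn u (closure Ω)) : IsCompact (⋃ ξ ∈ K, Sset Ω u ξ) := by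
  let P : Set (Euc n × Euc n) := K ×ˢ closure Ω
  let admissible (y : Euc n) : Set (Euc n × Euc n) := {p ∈ P | u p.2 - ⟪p.1, p.2⟫ ≤ u y - ⟪p.1, y⟫}
  have hP : IsCompact P := hK.prod hΩ.isCompact_closure
  have hclosed (y : Euc n) : IsClosed (admissible y) :=
    hP.isClosed.isClosed_le
      ((hu.comp continuousOn_snd fun p hp => hp.2).sub (by fun_prop)) (by fun_prop)
  have hproj : ⋃ ξ ∈ K, Sset Ω u ξ = Prod.snd '' (P ∩ ⋂ y ∈ closure Ω, admissible y) := by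
    ext s
    simp only [Sset, P, admissible, mem_iUnion, mem_image, Prod.exists, mem_inter_iff, mem_iInter,
      mem_ofPred_eq, mem_prod, exists_prop, exists_eq_right]
    grind
  rw [hproj]
  exact (hP.inter_right (isClosed_biInter fun y _ => hclosed y)).image continuous_snd

/-- The data from which the elements of `Hset Ω u K x ξ` are formed: a convex combination of
interior contact points of slope `ξ ∈ K` from which `x` differs by a vector normal to `K` at `ξ`.
Such a combination certifies the value of `KEnv K Ω u` at `x`. -/
structure IsContactCombination (K Ω : Set (Euc n)) (u : Euc n → ℝ) (x ξ : Euc n)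
    (lam : Fin m → ℝ) (s : Fin m → Euc n) : Prop where
  slope_mem : ξ ∈ K
  weights_mem : lam ∈ stdSimplex ℝ (Fin m)
  contact_mem : ∀ i, s i ∈ Sset Ω u ξ ∩ Ω
  sub_mem_normalCone : x - ∑ i, lam i • s i ∈ normalCone K ξ

lemma exists_isContactCombination (hK : IsCompact K) (hKconv : Convex ℝ K) (hKne : K.Nonempty)
    (hΩ : Bornology.IsBounded Ω) (hΩne : Ω.Nonempty) (hu : ContinuousOn u (closure Ω))
    (hS : ∀ ξ ∈ K, Sset Ω u ξ ⊆ Ω) (x : Euc n) :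
    ∃ ξ, ∃ (lam : Fin (n + 1) → ℝ) (s : Fin (n + 1) → Euc n),
      IsContactCombination K Ω u x ξ lam s := by
  obtain ⟨ξ, hξ, c, hc, hnormal⟩ := exists_slope_exists_mem_convexHull_minimizers
    hΩ.isCompact_closure hΩne.closure hu hK hKconv hKne x
  obtain ⟨lam, hlam, s, hs, rfl⟩ :=
    (mem_convexHull_iff_exists_fin finrank_euclideanSpace_fin.le).1 hc
  exact ⟨ξ, lam, s, hξ, hlam, fun i => ⟨hs i, hS ξ hξ (hs i)⟩, hnormal⟩

lemma isContactCombination_single (hξ : ξ ∈ K) {s : Euc n} (hs : s ∈ Sset Ω u ξ ∩ Ω) :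
    IsContactCombination K Ω u s ξ (fun _ : Fin 1 => 1) fun _ => s where
  slope_mem := hξ
  weights_mem := ⟨fun _ => zero_le_one, by simp⟩
  contact_mem _ := hs
  sub_mem_normalCone := by simp [normalCone]

lemma mem_Hset_iff (hξ : ξ ∈ K) {H : Euc n →L[ℝ] Euc n →L[ℝ] ℝ} :
    H ∈ Hset Ω u K x ξ ↔ ∃ m, 1 ≤ m ∧ m ≤ n + 1 ∧ ∃ (lam : Fin m → ℝ) (s : Fin m → Euc n),
      IsContactCombination K Ω u x ξ lam s ∧ H = ∑ i, lam i • fderiv ℝ (fderiv ℝ u) (s i) := by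
  constructor
  · rintro ⟨m, hm, hmn, lam, s, hlam, hsum, hs, hnormal, rfl⟩
    exact ⟨m, hm, hmn, lam, s, ⟨hξ, ⟨hlam, hsum⟩, hs, hnormal⟩, rfl⟩
  · rintro ⟨m, hm, hmn, lam, s, h, rfl⟩
    exact ⟨m, hm, hmn, lam, s, h.weights_mem.1, h.weights_mem.2, h.contact_mem,
      h.sub_mem_normalCone, rfl⟩

namespace IsContactCombination

lemma exists_le_eq_add_inner (h : IsContactCombination K Ω u x ξ lam s) :
    ∃ a : ℝ, (∀ y ∈ closure Ω, a + ⟪ξ, y⟫ ≤ u y) ∧ ∀ i, u (s i) = a + ⟪ξ, s i⟫ := by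
  obtain ⟨i₀, -⟩ : (Finset.univ : Finset (Fin m)).Nonempty :=
    Finset.nonempty_of_sum_ne_zero (h.weights_mem.2.trans_ne one_ne_zero)
  have hmin (i) : ∀ y ∈ closure Ω, u (s i) - ⟪ξ, s i⟫ ≤ u y - ⟪ξ, y⟫ := (h.contact_mem i).1.2
  refine ⟨u (s i₀) - ⟪ξ, s i₀⟫, fun y hy => by linarith [hmin i₀ y hy], fun i => ?_⟩
  linarith [hmin i₀ (s i) (h.contact_mem i).1.1, hmin i (s i₀) (h.contact_mem i₀).1.1]

lemma KEnv_add_le (h : IsContactCombination K Ω u x ξ lam s) {v : Euc n}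
    (hv : ∀ i, s i + v ∈ closure Ω) :
    KEnv K Ω u (x + v) ≤ ∑ i, lam i * u (s i + v) + ⟪ξ, x - ∑ i, lam i • s i⟫ := by
  obtain ⟨a, ha, -⟩ := h.exists_le_eq_add_inner
  refine csSup_le ⟨_, a, ξ, h.slope_mem, ha, rfl⟩ ?_
  rintro _ ⟨b, η, hη, hb, rfl⟩
  have hcenter : ∑ i, lam i • (s i + v) = ∑ i, lam i • s i + v := by
    simp only [smul_add, Finset.sum_add_distrib, ← Finset.sum_smul, h.weights_mem.2, one_smul]
  have haverage : b + ⟪η, ∑ i, lam i • s i + v⟫ ≤ ∑ i, lam i * u (s i + v) := by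
    rw [← hcenter, ← sum_mul_add_inner h.weights_mem.2]
    gcongr with i
    · exact h.weights_mem.1 i
    · exact hb _ (hv i)
  have hnormal : ⟪η, x - ∑ i, lam i • s i⟫ ≤ ⟪ξ, x - ∑ i, lam i • s i⟫ := by
    rw [← sub_nonpos, ← inner_sub_left, real_inner_comm]
    exact h.sub_mem_normalCone η hη
  calc b + ⟪η, x + v⟫ = b + ⟪η, ∑ i, lam i • s i + v⟫ + ⟪η, x - ∑ i, lam i • s i⟫ := by
        rw [add_assoc, ← inner_add_right]; congr 2; abel
    _ ≤ _ := add_le_add haverage hnormal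

lemma KEnv_eq (h : IsContactCombination K Ω u x ξ lam s) (hK : Bornology.IsBounded K)
    (hΩ : Ω.Nonempty) {a : ℝ} (ha : ∀ y ∈ closure Ω, a + ⟪ξ, y⟫ ≤ u y)
    (hs : ∀ i, u (s i) = a + ⟪ξ, s i⟫) : KEnv K Ω u x = a + ⟪ξ, x⟫ := by
  refine le_antisymm ?_ (add_inner_le_KEnv hK hΩ h.slope_mem ha x)
  have := h.KEnv_add_le (v := 0) fun i => by simpa using (h.contact_mem i).1.1
  simp only [add_zero, hs, sum_mul_add_inner h.weights_mem.2] at this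
  rwa [add_assoc, ← inner_add_right, add_sub_cancel] at this

lemma KEnv_add_inner_le (h : IsContactCombination K Ω u x ξ lam s) (hK : Bornology.IsBounded K)
    (hΩ : Ω.Nonempty) (v : Euc n) : KEnv K Ω u x + ⟪ξ, v⟫ ≤ KEnv K Ω u (x + v) := by
  obtain ⟨a, ha, hs⟩ := h.exists_le_eq_add_inner
  rw [h.KEnv_eq hK hΩ ha hs, add_assoc, ← inner_add_right]
  exact add_inner_le_KEnv hK hΩ h.slope_mem ha _

lemma KEnv_add_le_add_sum (h : IsContactCombination K Ω u x ξ lam s)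
    (hK : Bornology.IsBounded K) (hΩ : Ω.Nonempty) {v : Euc n}
    (hv : ∀ i, s i + v ∈ closure Ω) :
    KEnv K Ω u (x + v) ≤ KEnv K Ω u x + ∑ i, lam i * (u (s i + v) - u (s i)) := by
  obtain ⟨a, ha, hs⟩ := h.exists_le_eq_add_inner
  refine (h.KEnv_add_le hv).trans_eq ?_
  simp only [mul_sub, Finset.sum_sub_distrib]
  rw [h.KEnv_eq hK hΩ ha hs]
  simp only [hs, sum_mul_add_inner h.weights_mem.2]
  rw [inner_sub_right]
  ring


lemma fderiv_eq (h : IsContactCombination K Ω u x ξ lam s) (hΩ : IsOpen Ω)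
    (hu : ContDiffOn ℝ 2 u Ω) (i : Fin m) : fderiv ℝ u (s i) = innerSL ℝ ξ :=
  fderiv_eq_innerSL_of_mem_Sset hΩ (h.contact_mem i).1 (h.contact_mem i).2 <|
    (hu.differentiableOn two_ne_zero).differentiableAt (hΩ.mem_nhds (h.contact_mem i).2)

lemma exists_forall_KEnv_add_le_add_sq {S : Set (Euc n)} (hK : Bornology.IsBounded K)
    (hΩo : IsOpen Ω) (hΩ : Ω.Nonempty) (hu : ContDiffOn ℝ 2 u Ω) (hS : IsCompact S) (hSΩ : S ⊆ Ω) :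
    ∃ δ > 0, ∃ C : ℝ≥0, ∀ {m : ℕ} {x ξ : Euc n} {lam : Fin m → ℝ} {s : Fin m → Euc n},
      IsContactCombination K Ω u x ξ lam s → (∀ i, s i ∈ S) → ∀ v, ‖v‖ ≤ δ →
        KEnv K Ω u (x + v) ≤ KEnv K Ω u x + ⟪ξ, v⟫ + C * ‖v‖ ^ 2 := by
  obtain ⟨δ, hδ, C, hC⟩ := exists_forall_norm_add_sub_sub_fderiv_le hS hΩo hSΩ hu
  refine ⟨δ, hδ, C, fun {m x ξ lam s} h hs v hv => ?_⟩
  have hterm (i) : u (s i + v) - u (s i) ≤ ⟪ξ, v⟫ + C * ‖v‖ ^ 2 := by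
    have := (Real.le_norm_self _).trans (hC _ (hs i) v hv).2
    rw [h.fderiv_eq hΩo hu, innerSL_apply_apply] at this
    linarith
  calc KEnv K Ω u (x + v) ≤ KEnv K Ω u x + ∑ i, lam i * (u (s i + v) - u (s i)) :=
        h.KEnv_add_le_add_sum hK hΩ fun i => subset_closure (hC _ (hs i) v hv).1
    _ ≤ KEnv K Ω u x + ∑ i, lam i * (⟪ξ, v⟫ + C * ‖v‖ ^ 2) := by
      gcongr with i
      · exact h.weights_mem.1 i
      · exact hterm i
    _ = KEnv K Ω u x + ⟪ξ, v⟫ + C * ‖v‖ ^ 2 := by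
      rw [← Finset.sum_mul, h.weights_mem.2, one_mul, add_assoc]

lemma hasGradientAt_KEnv (h : IsContactCombination K Ω u x ξ lam s)
    (hK : Bornology.IsBounded K) (hΩ : Ω.Nonempty) (hΩo : IsOpen Ω) (hu : ContDiffOn ℝ 2 u Ω) :
    HasGradientAt (KEnv K Ω u) ξ x := by
  obtain ⟨δ, hδ, C, hC⟩ := exists_forall_KEnv_add_le_add_sq (S := range s) hK hΩo hΩ hu
    (finite_range s).isCompact (range_subset_iff.2 fun i => (h.contact_mem i).2)
  refine hasGradientAt_of_inner_le_of_le_add_sq (C := C) (.of_forall (h.KEnv_add_inner_le hK hΩ)) ?_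
  filter_upwards [closedBall_mem_nhds 0 hδ] with v hv
  exact hC h mem_range_self v (mem_closedBall_zero_iff.1 hv)

lemma isLittleO_KEnv_sub_taylor_two (h : IsContactCombination K Ω u x ξ lam s)
    (hK : Bornology.IsBounded K) (hΩ : Ω.Nonempty) (hΩo : IsOpen Ω) (hu : ContDiffOn ℝ 2 u Ω) :
    (fun v => max 0 (KEnv K Ω u (x + v) - KEnv K Ω u x - ⟪ξ, v⟫
        - (1 / 2) * (∑ i, lam i • fderiv ℝ (fderiv ℝ u) (s i)) v v))
      =o[𝓝 0] fun v => ‖v‖ ^ 2 := by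
  let R (i : Fin m) (v : Euc n) : ℝ := u (s i + v) - u (s i) - fderiv ℝ u (s i) v
    - (1 / 2 : ℝ) • fderiv ℝ (fderiv ℝ u) (s i) v v
  have hR : (fun v => ∑ i, lam i * R i v) =o[𝓝 0] fun v => ‖v‖ ^ 2 :=
    IsLittleO.fun_sum fun i _ => (taylor_two_isLittleO
      (hu.contDiffAt (hΩo.mem_nhds (h.contact_mem i).2))).const_mul_left (lam i)
  have hnear : ∀ᶠ v in 𝓝 (0 : Euc n), ∀ i, s i + v ∈ closure Ω := by
    refine Filter.eventually_all.2 fun i => ?_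
    have hlim : Filter.Tendsto (s i + ·) (𝓝 0) (𝓝 (s i)) := by
      simpa using (continuous_const_add (s i)).tendsto 0
    filter_upwards [hlim (hΩo.mem_nhds (h.contact_mem i).2)] with v hv using subset_closure hv
  refine IsBigO.trans_isLittleO (IsBigO.of_bound 1 ?_) hR
  filter_upwards [hnear] with v hv
  have hsum : ∑ i, lam i * R i v = ∑ i, lam i * (u (s i + v) - u (s i)) - ⟪ξ, v⟫
      - (1 / 2) * (∑ i, lam i • fderiv ℝ (fderiv ℝ u) (s i)) v v := by
    simp only [R, h.fderiv_eq hΩo hu, mul_sub, Finset.sum_sub_distrib, ← Finset.sum_mul,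
      h.weights_mem.2, one_mul, sum_apply, smul_apply, Finset.mul_sum, smul_eq_mul,
      innerSL_apply_apply, mul_left_comm (1 / 2 : ℝ)]
  rw [one_mul, Real.norm_of_nonneg (le_max_left _ _)]
  refine max_le (norm_nonneg _) (le_trans ?_ (Real.le_norm_self _))
  rw [hsum]
  linarith [h.KEnv_add_le_add_sum hK hΩ hv]

end IsContactCombination

lemma exists_isContactCombination_gradient (hK : IsCompact K) (hKconv : Convex ℝ K)
    (hKne : K.Nonempty) (hΩo : IsOpen Ω) (hΩ : Bornology.IsBounded Ω) (hΩne : Ω.Nonempty)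
    (hu : ContinuousOn u (closure Ω)) (hu2 : ContDiffOn ℝ 2 u Ω)
    (hS : ∀ ξ ∈ K, Sset Ω u ξ ⊆ Ω) (x : Euc n) :
    ∃ (lam : Fin (n + 1) → ℝ) (s : Fin (n + 1) → Euc n),
      IsContactCombination K Ω u x (gradient (KEnv K Ω u) x) lam s := by
  obtain ⟨ξ, lam, s, h⟩ := exists_isContactCombination hK hKconv hKne hΩ hΩne hu hS x
  exact ⟨lam, s, (h.hasGradientAt_KEnv hK.isBounded hΩne hΩo hu2).gradient ▸ h⟩

lemma image_gradient_KEnv_eq (hK : IsCompact K) (hKconv : Convex ℝ K)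
    (hKne : K.Nonempty) (hΩo : IsOpen Ω) (hΩ : Bornology.IsBounded Ω) (hΩne : Ω.Nonempty)
    (hu : ContinuousOn u (closure Ω)) (hu2 : ContDiffOn ℝ 2 u Ω)
    (hS : ∀ ξ ∈ K, Sset Ω u ξ ⊆ Ω) {T : Set (Euc n)} (hT : Ω ⊆ T) :
    gradient (KEnv K Ω u) '' T = K := by
  refine Subset.antisymm ?_ fun ξ hξ => ?_
  · rintro _ ⟨x, -, rfl⟩
    obtain ⟨_, _, h⟩ :=
      exists_isContactCombination_gradient hK hKconv hKne hΩo hΩ hΩne hu hu2 hS x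
    exact h.slope_mem
  · obtain ⟨s, hs⟩ : (Sset Ω u ξ).Nonempty := hΩ.isCompact_closure.exists_isMinOn hΩne.closure
      (hu.sub (f := u) (g := fun y => ⟪ξ, y⟫) (by fun_prop))
    have hsΩ : s ∈ Ω := hS ξ hξ hs
    have h := isContactCombination_single hξ ⟨hs, hsΩ⟩
    exact ⟨s, hT hsΩ, (h.hasGradientAt_KEnv hK.isBounded hΩne hΩo hu2).gradient⟩

lemma exists_lipschitzWith_gradient_KEnv (hK : IsCompact K) (hKconv : Convex ℝ K)
    (hKne : K.Nonempty) (hΩo : IsOpen Ω) (hΩ : Bornology.IsBounded Ω) (hΩne : Ω.Nonempty)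
    (hu : ContinuousOn u (closure Ω)) (hu2 : ContDiffOn ℝ 2 u Ω)
    (hS : ∀ ξ ∈ K, Sset Ω u ξ ⊆ Ω) : ∃ L, LipschitzWith L (gradient (KEnv K Ω u)) := by
  choose lam s h using exists_isContactCombination_gradient hK hKconv hKne hΩo hΩ hΩne hu hu2 hS
  obtain ⟨M, hM⟩ := hK.isBounded.exists_norm_le
  have hgrad (x) : ‖gradient (KEnv K Ω u) x‖ ≤ M := hM _ (h x).slope_mem
  have hlow (x) := (h x).KEnv_add_inner_le hK.isBounded hΩne
  obtain ⟨δ, hδ, C, hC⟩ :=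
    IsContactCombination.exists_forall_KEnv_add_le_add_sq hK.isBounded hΩo hΩne hu2
      (isCompact_biUnion_Sset hK hΩ hu) (iUnion₂_subset hS)
  have hlocal (x v : Euc n) (hv : ‖v‖ ≤ δ) := hC (h x)
    (fun i => mem_iUnion₂_of_mem (h x).slope_mem ((h x).contact_mem i).1) v hv
  have hM0 : 0 ≤ M := (norm_nonneg _).trans (hgrad 0)
  refine ⟨2 * (C + ⟨2 * M / δ, by positivity⟩), lipschitzWith_of_inner_le_of_le_add_sq hlow ?_⟩
  exact le_add_inner_add_sq_of_norm_le hδ hlow hgrad hlocal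

end Envelope

/-- Sharp `C^{1,1}` regularity of the `K`-envelope when all contact sets are interior. -/
theorem stmt_8 {n : ℕ} (K Ω : Set (Euc n)) (u : Euc n → ℝ)
    (hKcp : IsCompact K) (hKcv : Convex ℝ K) (hKne : K.Nonempty)
    (hΩo : IsOpen Ω) (hΩb : Bornology.IsBounded Ω) (hΩne : Ω.Nonempty)
    (hu : ContinuousOn u (closure Ω)) (hu2 : ContDiffOn ℝ 2 u Ω)
    (hSsub : ∀ ξ ∈ K, Sset Ω u ξ ⊆ Ω) :
    ConvexOn ℝ univ (KEnv K Ω u) ∧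
    ContDiff ℝ 1 (KEnv K Ω u) ∧
    (∃ L : NNReal, LipschitzWith L (fun x => gradient (KEnv K Ω u) x)) ∧
    (fun x => gradient (KEnv K Ω u) x) '' univ = K ∧
    (fun x => gradient (KEnv K Ω u) x) '' Ω = K ∧
    ∀ x : Euc n,
      (Hset Ω u K x (gradient (KEnv K Ω u) x)).Nonempty ∧
      ∀ Hx ∈ Hset Ω u K x (gradient (KEnv K Ω u) x),
        (fun x' => max 0 (KEnv K Ω u x' - KEnv K Ω u x -
            ⟪gradient (KEnv K Ω u) x, x' - x⟫ - (1 / 2) * Hx (x' - x) (x' - x)))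
          =o[𝓝 x] (fun x' => ‖x' - x‖ ^ 2) := by
  choose lam s h using
    exists_isContactCombination_gradient hKcp hKcv hKne hΩo hΩb hΩne hu hu2 hSsub
  obtain ⟨L, hL⟩ := exists_lipschitzWith_gradient_KEnv hKcp hKcv hKne hΩo hΩb hΩne hu hu2 hSsub
  have himage {T : Set (Euc n)} (hT : Ω ⊆ T) : gradient (KEnv K Ω u) '' T = K :=
    image_gradient_KEnv_eq hKcp hKcv hKne hΩo hΩb hΩne hu hu2 hSsub hT
  refine ⟨convexOn_univ_of_inner_le fun x => (h x).KEnv_add_inner_le hKcp.isBounded hΩne,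
    contDiff_one_of_hasGradientAt
      (fun x => (h x).hasGradientAt_KEnv hKcp.isBounded hΩne hΩo hu2) hL.continuous,
    ⟨L, hL⟩, himage (subset_univ Ω), himage subset_rfl, fun x => ⟨?_, fun Hx hHx => ?_⟩⟩
  · exact ⟨_, (mem_Hset_iff (h x).slope_mem).2
      ⟨n + 1, Nat.le_add_left 1 n, le_rfl, lam x, s x, h x, rfl⟩⟩
  · obtain ⟨m, -, -, lam', s', h', rfl⟩ := (mem_Hset_iff (h x).slope_mem).1 hHx
    have := (h'.isLittleO_KEnv_sub_taylor_two hKcp.isBounded hΩne hΩo hu2).comp_tendsto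
      (tendsto_sub_nhds_zero_iff.2 (Filter.tendsto_id (x := 𝓝 x)))
    simpa only [Function.comp_def, id, add_sub_cancel] using this
end
end

section
/- For every bounded connected open set E ⊆ ℝⁿ with smooth boundary, there exists a convex function φ : ℝⁿ → ℝ of class C^{1,1} such that ∇φ(ℝⁿ) = ∇φ(cl(E)) = K and Δφ(x) ≤ Per_K(E) / |E| for almost every x ∈ ℝⁿ, where |E| denotes the Lebesgue measure of E. -/
open MeasureTheory Metric Set
open scoped RealInnerProductSpace ENNReal Topology

noncomputable section

/-- The Laplacian of `φ` at `x`, as the trace of the second derivative in the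
standard orthonormal coordinates. -/
def lapl {n : ℕ} (φ : Euc n → ℝ) (x : Euc n) : ℝ :=
  ∑ i : Fin n, fderiv ℝ (fderiv ℝ φ) x (EuclideanSpace.single i 1) (EuclideanSpace.single i 1)

/-- The anisotropic norm `|v|_{K*} = sup {v·z : z ∈ K}`. -/
def anisoNorm {n : ℕ} (K : Set (Euc n)) (v : Euc n) : ℝ :=
  sSup {r : ℝ | ∃ z ∈ K, r = ⟪v, z⟫}

/-!
Fix `c` slightly larger than `Per_K(E) / |E|`. Integrating over a thin layer inside `∂E` gives a
`C¹` cutoff `w ≥ 0` vanishing outside `E` with `∫ N_K(-∇(w²)) < c ∫ w²`, where `N_K = anisoNorm K`.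
On the grid of mesh `h`, give the edge `{x, y}` the weight `w x * w y`. After discretisation the
inequality says that `g = c h² w (w - τ) - N_K(discrete field)` has positive sum, so the projection
of `g` to the kernel of the graph Laplacian, which is constant on each component, is nonnegative on
some component; on the union `C` of the components where it is largest, some `U` has weighted graph
Laplacian at most `g`. If `U` is touched from below by an affine function of slope `p ∈ K`, the
inequality `⟪p, v⟫ ≤ N_K(v)` absorbs the field term, so the discrete Laplacian of `U` is at most
`c h²` at the contact point. The largest convex function with slopes in `K` below `U` inherits this
bound everywhere, and each slope `p ∈ K` is attained where `U - ⟪p, ·⟫` is minimal on `C ⊆ E`.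

As `h → 0` and `c → Per_K(E) / |E|`, an ultralimit `φ` of these envelopes is convex with slopes in
`K`, and its second differences are bounded, so it is `C^{1,1}`. Where `φ` is twice differentiable,
touching the discrete functions from below by the second-order Taylor polynomial of `φ` minus a
small multiple of `‖·‖²` bounds `Δφ`.
-/

/-! ### The anisotropic norm -/

section AnisoNorm

variable {n : ℕ} {K : Set (Euc n)}

lemma inner_le_anisoNorm (hK : IsCompact K) (v : Euc n) {z : Euc n} (hz : z ∈ K) :
    ⟪v, z⟫ ≤ anisoNorm K v := by
  have hbdd : BddAbove ((fun z => ⟪v, z⟫) '' K) := (hK.image (by fun_prop)).bddAbove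
  refine le_csSup (hbdd.mono ?_) ⟨z, hz, rfl⟩
  rintro r ⟨y, hy, rfl⟩
  exact mem_image_of_mem _ hy

lemma anisoNorm_le (hne : K.Nonempty) {v : Euc n} {c : ℝ} (h : ∀ z ∈ K, ⟪v, z⟫ ≤ c) :
    anisoNorm K v ≤ c := by
  obtain ⟨z₀, hz₀⟩ := hne
  refine csSup_le ⟨_, z₀, hz₀, rfl⟩ ?_
  rintro r ⟨z, hz, rfl⟩
  exact h z hz

lemma anisoNorm_nonneg (hK : IsCompact K) (h0 : 0 ∈ K) (v : Euc n) : 0 ≤ anisoNorm K v := by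
  simpa using inner_le_anisoNorm hK v h0

lemma anisoNorm_add_le (hK : IsCompact K) (hne : K.Nonempty) (v w : Euc n) :
    anisoNorm K (v + w) ≤ anisoNorm K v + anisoNorm K w :=
  anisoNorm_le hne fun z hz => (inner_add_left v w z).trans_le
    (add_le_add (inner_le_anisoNorm hK v hz) (inner_le_anisoNorm hK w hz))

lemma anisoNorm_smul (K : Set (Euc n)) {t : ℝ} (ht : 0 ≤ t) (v : Euc n) :
    anisoNorm K (t • v) = t * anisoNorm K v := by
  rw [anisoNorm, anisoNorm, ← smul_eq_mul, ← Real.sSup_smul_of_nonneg ht]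
  congr 1
  ext r
  simp only [mem_ofPred_eq, mem_smul_set, real_inner_smul_left, smul_eq_mul]
  aesop

lemma anisoNorm_zero (K : Set (Euc n)) : anisoNorm K 0 = 0 := by
  simpa using anisoNorm_smul K le_rfl 0

lemma exists_anisoNorm_le_mul_norm (hK : IsCompact K) (hne : K.Nonempty) :
    ∃ R : ℝ, ∀ v : Euc n, anisoNorm K v ≤ R * ‖v‖ := by
  obtain ⟨R, hKR⟩ := hK.isBounded.exists_norm_le
  refine ⟨R, fun v => anisoNorm_le hne fun z hz => ?_⟩
  calc ⟪v, z⟫ ≤ ‖v‖ * ‖z‖ := real_inner_le_norm v z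
    _ ≤ ‖v‖ * R := by gcongr; exact hKR z hz
    _ = R * ‖v‖ := mul_comm _ _

lemma exists_forall_lipschitzWith_of_le_add_anisoNorm (hK : IsCompact K) (hne : K.Nonempty) :
    ∃ R, ∀ φ : Euc n → ℝ, (∀ x v, φ (x + v) ≤ φ x + anisoNorm K v) → LipschitzWith R φ := by
  obtain ⟨R, hR⟩ := exists_anisoNorm_le_mul_norm hK hne
  refine ⟨R.toNNReal, fun φ hφ => LipschitzWith.of_le_add_mul' R fun x y => ?_⟩
  calc φ x = φ (y + (x - y)) := by rw [add_sub_cancel]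
    _ ≤ φ y + anisoNorm K (x - y) := hφ _ _
    _ ≤ φ y + R * dist x y := by rw [dist_eq_norm]; gcongr; exact hR _

lemma uniformContinuous_anisoNorm (hK : IsCompact K) (hne : K.Nonempty) :
    UniformContinuous (anisoNorm K) := by
  obtain ⟨R, hR⟩ := exists_forall_lipschitzWith_of_le_add_anisoNorm hK hne
  exact (hR _ (anisoNorm_add_le hK hne)).uniformContinuous

lemma mem_of_forall_inner_le_anisoNorm (hK : IsCompact K) (hcv : Convex ℝ K)
    (hne : K.Nonempty) {p : Euc n} (h : ∀ v, ⟪v, p⟫ ≤ anisoNorm K v) : p ∈ K := by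
  by_contra hp
  obtain ⟨g, u, hgu, hup⟩ := geometric_hahn_banach_closed_point hcv hK.isClosed hp
  set v := (InnerProductSpace.toDual ℝ (Euc n)).symm g
  have hg : ∀ x, g x = ⟪v, x⟫ := fun x => InnerProductSpace.toDual_symm_apply.symm
  have hvu : anisoNorm K v ≤ u := anisoNorm_le hne fun z hz => hg z ▸ (hgu z hz).le
  exact absurd (h v) (not_le.2 (hvu.trans_lt (hg p ▸ hup)))

end AnisoNorm

/-! ### Subgradients of convex functions -/

lemma exists_continuousLinearMap_support_of_convexOn {F : Type*} [TopologicalSpace F]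
    [AddCommGroup F] [Module ℝ F] [IsTopologicalAddGroup F] [ContinuousSMul ℝ F] {φ : F → ℝ}
    (hcv : ConvexOn ℝ univ φ) (hc : Continuous φ) (x₀ : F) :
    ∃ g : F →L[ℝ] ℝ, ∀ x, φ x₀ + g (x - x₀) ≤ φ x := by
  -- Separate `(x₀, φ x₀)` from the open strict epigraph of `φ`.
  have hopen : IsOpen {q : F × ℝ | q.1 ∈ univ ∧ φ q.1 < q.2} := by
    simp only [mem_univ, true_and]
    exact isOpen_lt (by fun_prop) continuous_snd
  obtain ⟨f, hf⟩ :=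
    geometric_hahn_banach_open_point (x := (x₀, φ x₀)) hcv.convex_strict_epigraph hopen (by simp)
  have hsplit (x : F) (t : ℝ) : f (x, t) = f (x, 0) + t * f (0, 1) := by
    rw [← smul_eq_mul, ← map_smul, ← map_add]
    simp
  have hslope : f (0, 1) < 0 := by
    have := hf (x₀, φ x₀ + 1) (by simp)
    rw [hsplit x₀ (φ x₀ + 1), hsplit x₀ (φ x₀)] at this
    linarith
  refine ⟨(-(f (0, 1))⁻¹) • f.comp (.inl ℝ F ℝ), fun x => le_of_forall_gt_imp_ge_of_dense ?_⟩
  intro t ht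
  have hsep := hf (x, t) (by simpa using ht)
  rw [hsplit x t, hsplit x₀ (φ x₀)] at hsep
  have hval : ((-(f (0, 1))⁻¹) • f.comp (.inl ℝ F ℝ)) (x - x₀) =
      (f (x, 0) - f (x₀, 0)) / -f (0, 1) := by
    simp [← map_sub, div_eq_inv_mul, inv_neg]
  have hquot : (f (x, 0) - f (x₀, 0)) / -f (0, 1) ≤ t - φ x₀ := by
    rw [div_le_iff₀ (neg_pos.2 hslope)]
    linarith
  linarith

/-- `p` is a subgradient of `φ` at `x`: the affine function of slope `p` through `(x, φ x)` stays
below `φ` on the whole space. -/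
def IsSubgradientAt {F : Type*} [NormedAddCommGroup F] [InnerProductSpace ℝ F] (φ : F → ℝ)
    (p x : F) : Prop :=
  ∀ y, φ x + ⟪p, y - x⟫ ≤ φ y

lemma exists_isSubgradientAt {F : Type*} [NormedAddCommGroup F] [InnerProductSpace ℝ F]
    [CompleteSpace F] {φ : F → ℝ} (hcv : ConvexOn ℝ univ φ) (hc : Continuous φ) (x : F) :
    ∃ p, IsSubgradientAt φ p x := by
  obtain ⟨g, hg⟩ := exists_continuousLinearMap_support_of_convexOn hcv hc x
  exact ⟨(InnerProductSpace.toDual ℝ F).symm g, fun y => by simpa using hg y⟩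

lemma mem_of_isSubgradientAt {n : ℕ} {K : Set (Euc n)} (hK : IsCompact K) (hcv : Convex ℝ K)
    (hne : K.Nonempty) {φ : Euc n → ℝ} (hφ : ∀ x v, φ (x + v) ≤ φ x + anisoNorm K v)
    {p x : Euc n} (hp : IsSubgradientAt φ p x) : p ∈ K := by
  refine mem_of_forall_inner_le_anisoNorm hK hcv hne fun v => ?_
  have hlow := hp (x + v)
  rw [add_sub_cancel_left, real_inner_comm] at hlow
  linarith [hφ x v]

/-! ### Laplacians on finite weighted graphs -/

section GraphLaplacian

variable {ι : Type*} [Fintype ι] {c : ι → ι → ℝ}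

/-- The Laplacian of the finite graph with vertex set `ι` and edge weights `c`. -/
def graphLaplacian (c : ι → ι → ℝ) : EuclideanSpace ℝ ι →ₗ[ℝ] EuclideanSpace ℝ ι where
  toFun u := WithLp.toLp 2 fun x => ∑ y, c x y * (u y - u x)
  map_add' u v := by
    ext x
    simp only [PiLp.add_apply, ← Finset.sum_add_distrib]
    exact Finset.sum_congr rfl fun y _ => by ring
  map_smul' t u := by
    ext x
    simp only [PiLp.smul_apply, smul_eq_mul, RingHom.id_apply, Finset.mul_sum]
    exact Finset.sum_congr rfl fun y _ => by ring

lemma graphLaplacian_apply (c : ι → ι → ℝ) (u : EuclideanSpace ℝ ι) (x : ι) :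
    graphLaplacian c u x = ∑ y, c x y * (u y - u x) := rfl

lemma inner_graphLaplacian (hc : ∀ x y, c x y = c y x) (u v : EuclideanSpace ℝ ι) :
    ⟪graphLaplacian c u, v⟫ = -(∑ x, ∑ y, c x y * ((u y - u x) * (v y - v x))) / 2 := by
  have hinner : ⟪graphLaplacian c u, v⟫ = ∑ x, ∑ y, c x y * ((u y - u x) * v x) := by
    simp only [PiLp.inner_apply, graphLaplacian_apply, RCLike.inner_apply, conj_trivial,
      Finset.mul_sum]
    exact Finset.sum_congr rfl fun x _ => Finset.sum_congr rfl fun y _ => by ring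
  have hswap : ∑ x, ∑ y, c x y * ((u y - u x) * v x) = ∑ x, ∑ y, c x y * ((u x - u y) * v y) := by
    rw [Finset.sum_comm]
    exact Finset.sum_congr rfl fun x _ => Finset.sum_congr rfl fun y _ => by rw [hc x y]
  have hsplit : ∑ x, ∑ y, c x y * ((u y - u x) * (v y - v x)) =
      -(∑ x, ∑ y, c x y * ((u x - u y) * v y)) - ∑ x, ∑ y, c x y * ((u y - u x) * v x) := by
    simp only [← Finset.sum_neg_distrib, ← Finset.sum_sub_distrib]
    exact Finset.sum_congr rfl fun x _ => Finset.sum_congr rfl fun y _ => by ring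
  rw [hsplit, ← hswap, hinner]
  ring

lemma isSymmetric_graphLaplacian (hc : ∀ x y, c x y = c y x) :
    (graphLaplacian c).IsSymmetric := fun u v => by
  rw [inner_graphLaplacian hc, real_inner_comm, inner_graphLaplacian hc]
  simp only [mul_comm (u _ - u _)]

lemma sum_graphLaplacian_apply (hc : ∀ x y, c x y = c y x) (u : EuclideanSpace ℝ ι) :
    ∑ x, graphLaplacian c u x = 0 := by
  simpa [PiLp.inner_apply] using inner_graphLaplacian hc u (WithLp.toLp 2 fun _ => 1)

lemma eq_of_graphLaplacian_eq_zero (hc : ∀ x y, c x y = c y x) (hc0 : ∀ x y, 0 ≤ c x y)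
    {v : EuclideanSpace ℝ ι} (hv : graphLaplacian c v = 0) {x y : ι} (hxy : 0 < c x y) :
    v x = v y := by
  have henergy := inner_graphLaplacian hc v v
  rw [hv, inner_zero_left] at henergy
  have hterm (x y : ι) : 0 ≤ c x y * ((v y - v x) * (v y - v x)) :=
    mul_nonneg (hc0 x y) (mul_self_nonneg _)
  have hsum : ∑ x, ∑ y, c x y * ((v y - v x) * (v y - v x)) = 0 := by linarith
  have hrow := (Fintype.sum_eq_zero_iff_of_nonneg fun x => Finset.sum_nonneg fun y _ =>
    hterm x y).1 hsum
  have hedge := congrFun ((Fintype.sum_eq_zero_iff_of_nonneg (hterm x)).1 (congrFun hrow x)) y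
  have hdiff := mul_self_eq_zero.1 ((mul_eq_zero.1 hedge).resolve_left hxy.ne')
  linarith

lemma exists_graphLaplacian_le_of_sum_nonneg [Nonempty ι] (hc : ∀ x y, c x y = c y x)
    (hc0 : ∀ x y, 0 ≤ c x y) (g : ι → ℝ) (hg : 0 ≤ ∑ x, g x) :
    ∃ (C : Set ι) (u : ι → ℝ), C.Nonempty ∧ (∀ x ∈ C, ∀ y, 0 < c x y → y ∈ C) ∧
      ∀ x ∈ C, ∑ y, c x y * (u y - u x) ≤ g x := by
  -- The orthogonal projection `v` of `g` to the kernel is constant along edges; `C` is the set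
  -- where it is largest.
  obtain ⟨_, ⟨u, rfl⟩, v, hv, hgv⟩ :=
    (LinearMap.range (graphLaplacian c)).exists_add_mem_mem_orthogonal (WithLp.toLp 2 g)
  rw [(isSymmetric_graphLaplacian hc).orthogonal_range, LinearMap.mem_ker] at hv
  have hsplit (x : ι) : g x = graphLaplacian c u x + v x := congrArg (fun f => f x) hgv
  have hsum : 0 ≤ ∑ x, v x := by
    simpa only [hsplit, Finset.sum_add_distrib, sum_graphLaplacian_apply hc, zero_add] using hg
  obtain ⟨x₀, hx₀⟩ := Finite.exists_max fun x => v x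
  have hmax : 0 ≤ v x₀ := by
    by_contra! hneg
    exact hsum.not_gt
      (Finset.sum_neg (fun x _ => (hx₀ x).trans_lt hneg) Finset.univ_nonempty)
  refine ⟨{x | v x = v x₀}, u, ⟨x₀, rfl⟩, fun x hx y hxy => ?_, fun x hx => ?_⟩
  · exact (eq_of_graphLaplacian_eq_zero hc hc0 hv hxy).symm.trans hx
  · have hx : v x = v x₀ := hx
    rw [hsplit, graphLaplacian_apply, hx]
    exact le_add_of_nonneg_right hmax

end GraphLaplacian

section StepGraph

variable {F J : Type*} [AddCommGroup F] [Fintype J] {s : J → F}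

open Classical in
/-- The edge weight between `x` and `y` in the graph whose edges are the translations by the
steps `s j`: the product of the vertex weights, counted with the number of steps leading from
`x` to `y`. -/
def stepWeight (s : J → F) (w : F → ℝ) (x y : F) : ℝ :=
  w x * w y * ∑ j, if y = x + s j then 1 else 0

lemma stepWeight_comm (σ : Equiv.Perm J) (hσ : ∀ j, s (σ j) = -s j) (w : F → ℝ) (x y : F) :
    stepWeight s w x y = stepWeight s w y x := by
  rw [stepWeight, stepWeight, mul_comm (w x), ← Equiv.sum_comp σ]
  congr! 3 with j
  rw [hσ, ← sub_eq_add_neg, eq_sub_iff_add_eq, eq_comm]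

lemma stepWeight_nonneg {w : F → ℝ} (hw : ∀ x, 0 ≤ w x) (x y : F) : 0 ≤ stepWeight s w x y :=
  mul_nonneg (mul_nonneg (hw x) (hw y)) (Finset.sum_nonneg fun j _ => by positivity)

lemma stepWeight_pos {w : F → ℝ} {x : F} {j : J} (hx : 0 < w x) (hy : 0 < w (x + s j)) :
    0 < stepWeight s w x (x + s j) :=
  mul_pos (mul_pos hx hy)
    (Finset.sum_pos' (fun _ _ => by positivity) ⟨j, Finset.mem_univ _, by simp⟩)

lemma sum_stepWeight_mul {w : F → ℝ} {S : Finset F} {x : F}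
    (hS : ∀ j, x + s j ∉ S → w (x + s j) = 0) (G : F → ℝ) :
    ∑ y ∈ S, stepWeight s w x y * G y = w x * ∑ j, w (x + s j) * G (x + s j) := by
  classical
  calc ∑ y ∈ S, stepWeight s w x y * G y
      = w x * ∑ j, ∑ y ∈ S, if y = x + s j then w y * G y else 0 := by
        rw [Finset.sum_comm, Finset.mul_sum]
        refine Finset.sum_congr rfl fun y _ => ?_
        rw [stepWeight, mul_assoc, mul_assoc, Finset.sum_mul]
        simp only [Finset.mul_sum, ite_mul, mul_ite, one_mul, zero_mul, mul_zero]
    _ = w x * ∑ j, w (x + s j) * G (x + s j) := by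
        congr! 2 with j
        rw [Finset.sum_ite_eq']
        split_ifs with hj
        · rfl
        · rw [hS j hj, zero_mul]

lemma exists_stepLaplacian_le_of_sum_nonneg (σ : Equiv.Perm J) (hσ : ∀ j, s (σ j) = -s j)
    {w : F → ℝ} (hw : ∀ x, 0 ≤ w x) {S : Finset F} (hSne : S.Nonempty)
    (hSw : ∀ x ∈ S, 0 < w x) (hS : ∀ x ∈ S, ∀ j, x + s j ∉ S → w (x + s j) = 0)
    (g : F → ℝ) (hg : 0 ≤ ∑ x ∈ S, g x) :
    ∃ (C : Finset F) (u : F → ℝ), C ⊆ S ∧ C.Nonempty ∧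
      (∀ x ∈ C, ∀ j, 0 < w (x + s j) → x + s j ∈ C) ∧
      ∀ x ∈ C, w x * ∑ j, w (x + s j) * (u (x + s j) - u x) ≤ g x := by
  classical
  have : Nonempty S := hSne.to_subtype
  obtain ⟨C, u, ⟨x₀, hx₀⟩, hedge, hle⟩ :=
    exists_graphLaplacian_le_of_sum_nonneg (ι := S) (c := fun x y => stepWeight s w x y)
      (fun x y => stepWeight_comm σ hσ w x y) (fun x y => stepWeight_nonneg hw x y)
      (fun x => g x) (by rwa [Finset.sum_coe_sort S g])
  have hC (x : F) (hx : x ∈ C.toFinset.map (Function.Embedding.subtype _)) :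
      ∃ hxS : x ∈ S, ⟨x, hxS⟩ ∈ C := by simpa using hx
  refine ⟨C.toFinset.map (.subtype _), fun x => if hx : x ∈ S then u ⟨x, hx⟩ else 0,
    fun x hx => (hC x hx).1, ⟨x₀, by simpa using hx₀⟩, fun x hx j hj => ?_, fun x hx => ?_⟩
  · obtain ⟨hxS, hxC⟩ := hC x hx
    have hjS : x + s j ∈ S := by
      by_contra hjS
      exact hj.ne' (hS x hxS j hjS)
    simpa [hjS] using hedge _ hxC ⟨_, hjS⟩ (stepWeight_pos (hSw x hxS) hj)
  · obtain ⟨hxS, hxC⟩ := hC x hx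
    rw [← sum_stepWeight_mul (hS x hxS) (fun y =>
      (if hy : y ∈ S then u ⟨y, hy⟩ else 0) - if hx : x ∈ S then u ⟨x, hx⟩ else 0),
      ← Finset.sum_coe_sort]
    simpa [hxS] using hle _ hxC

end StepGraph

/-! ### Convex envelopes with constrained slopes -/

section ConvexEnvelope

variable {n : ℕ} {K : Set (Euc n)} {C : Finset (Euc n)} {U : Euc n → ℝ}

/-- The objective function whose minimum over the standard simplex is the envelope: the convex
combination `∑ y, l y • y` of nodes carries the value `∑ y, l y * U y`, and the displacement
from there to `x` is paid for in the anisotropic norm. -/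
def envelopeCost (K : Set (Euc n)) (C : Finset (Euc n)) (U : Euc n → ℝ) (x : Euc n)
    (l : C → ℝ) : ℝ :=
  ∑ y, l y * U y + anisoNorm K (x - ∑ y, l y • (y : Euc n))

/-- The largest convex function with slopes in `K` that is at most `U` on the finite set `C`. -/
def convexEnvelope (K : Set (Euc n)) (C : Finset (Euc n)) (U : Euc n → ℝ) (x : Euc n) : ℝ :=
  sInf (envelopeCost K C U x '' stdSimplex ℝ C)

lemma isCompact_envelopeCost_image (hK : IsCompact K) (hne : K.Nonempty) (x : Euc n) :
    IsCompact (envelopeCost K C U x '' stdSimplex ℝ C) := by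
  have := (uniformContinuous_anisoNorm hK hne).continuous
  unfold envelopeCost
  exact (isCompact_stdSimplex ℝ C).image (by fun_prop)

lemma convexEnvelope_le_envelopeCost (hK : IsCompact K) (hne : K.Nonempty) (x : Euc n)
    {l : C → ℝ} (hl : l ∈ stdSimplex ℝ C) : convexEnvelope K C U x ≤ envelopeCost K C U x l :=
  csInf_le (isCompact_envelopeCost_image hK hne x).bddBelow (mem_image_of_mem _ hl)

lemma exists_convexEnvelope_eq (hK : IsCompact K) (hne : K.Nonempty) (hC : C.Nonempty)
    (x : Euc n) : ∃ l ∈ stdSimplex ℝ C, convexEnvelope K C U x = envelopeCost K C U x l := by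
  classical
  have : Nonempty C := hC.to_subtype
  have hsimplex : (stdSimplex ℝ C).Nonempty :=
    ⟨_, ite_eq_mem_stdSimplex ℝ (Classical.arbitrary C)⟩
  obtain ⟨l, hl, h⟩ := (isCompact_envelopeCost_image hK hne x).sInf_mem (hsimplex.image _)
  exact ⟨l, hl, h.symm⟩

lemma convexEnvelope_le (hK : IsCompact K) (hne : K.Nonempty) {y : Euc n} (hy : y ∈ C) :
    convexEnvelope K C U y ≤ U y := by
  classical
  simpa [envelopeCost, anisoNorm_zero] using convexEnvelope_le_envelopeCost (U := U) hK hne y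
    (ite_eq_mem_stdSimplex ℝ (⟨y, hy⟩ : C))

lemma convexEnvelope_add_le (hK : IsCompact K) (hne : K.Nonempty) (hC : C.Nonempty)
    (x v : Euc n) : convexEnvelope K C U (x + v) ≤ convexEnvelope K C U x + anisoNorm K v := by
  obtain ⟨l, hl, hx⟩ := exists_convexEnvelope_eq (U := U) hK hne hC x
  calc convexEnvelope K C U (x + v) ≤ envelopeCost K C U (x + v) l :=
        convexEnvelope_le_envelopeCost hK hne _ hl
    _ ≤ envelopeCost K C U x l + anisoNorm K v := by
        rw [envelopeCost, envelopeCost, add_assoc, add_sub_right_comm]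
        gcongr
        exact anisoNorm_add_le hK hne _ _
    _ = _ := by rw [hx]

lemma envelopeCost_combo_le (hK : IsCompact K) (hne : K.Nonempty) (x y : Euc n) (l l' : C → ℝ)
    {a b : ℝ} (ha : 0 ≤ a) (hb : 0 ≤ b) :
    envelopeCost K C U (a • x + b • y) (a • l + b • l') ≤
      a * envelopeCost K C U x l + b * envelopeCost K C U y l' := by
  have hvalue : ∑ z : C, (a • l + b • l') z * U z = a * ∑ z, l z * U z + b * ∑ z, l' z * U z := by
    simp only [Pi.add_apply, Pi.smul_apply, smul_eq_mul, add_mul, mul_assoc, Finset.mul_sum,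
      Finset.sum_add_distrib]
  have hpoint : a • x + b • y - ∑ z, (a • l + b • l') z • (z : Euc n) =
      a • (x - ∑ z, l z • (z : Euc n)) + b • (y - ∑ z, l' z • (z : Euc n)) := by
    simp only [Pi.add_apply, Pi.smul_apply, smul_eq_mul, add_smul, mul_smul, smul_sub,
      Finset.smul_sum, Finset.sum_add_distrib]
    abel
  have hnorm := anisoNorm_add_le hK hne (a • (x - ∑ z, l z • (z : Euc n)))
    (b • (y - ∑ z, l' z • (z : Euc n)))
  rw [anisoNorm_smul K ha, anisoNorm_smul K hb] at hnorm
  rw [envelopeCost, envelopeCost, envelopeCost, hvalue, hpoint]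
  linarith

lemma convexOn_convexEnvelope (hK : IsCompact K) (hne : K.Nonempty) (hC : C.Nonempty) :
    ConvexOn ℝ univ (convexEnvelope K C U) := by
  refine ⟨convex_univ, fun x _ y _ a b ha hb hab => ?_⟩
  obtain ⟨l, hl, hx⟩ := exists_convexEnvelope_eq (U := U) hK hne hC x
  obtain ⟨l', hl', hy⟩ := exists_convexEnvelope_eq (U := U) hK hne hC y
  rw [hx, hy]
  exact (convexEnvelope_le_envelopeCost hK hne _
    (convex_stdSimplex ℝ C hl hl' ha hb hab)).trans (envelopeCost_combo_le hK hne x y l l' ha hb)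

lemma le_convexEnvelope (hK : IsCompact K) (hC : C.Nonempty) {p : Euc n} (hp : p ∈ K) {t : ℝ}
    (ht : ∀ y ∈ C, t + ⟪p, y⟫ ≤ U y) (x : Euc n) : t + ⟪p, x⟫ ≤ convexEnvelope K C U x := by
  obtain ⟨l, ⟨hl0, hl1⟩, hx⟩ := exists_convexEnvelope_eq (U := U) hK ⟨p, hp⟩ hC x
  set b := ∑ y, l y • (y : Euc n) with hb
  have hnodes : t + ⟪p, b⟫ ≤ ∑ y, l y * U y :=
    calc t + ⟪p, b⟫ = ∑ y : C, l y * (t + ⟪p, (y : Euc n)⟫) := by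
          simp only [hb, inner_sum, inner_smul_right, mul_add, Finset.sum_add_distrib,
            ← Finset.sum_mul, hl1, one_mul]
      _ ≤ ∑ y, l y * U y :=
          Finset.sum_le_sum fun y _ => mul_le_mul_of_nonneg_left (ht y y.2) (hl0 y)
  have hslope := inner_le_anisoNorm hK (x - b) hp
  rw [real_inner_comm, inner_sub_right] at hslope
  rw [hx, envelopeCost]
  linarith

lemma exists_isSubgradientAt_convexEnvelope (hK : IsCompact K) (hC : C.Nonempty) {p : Euc n}
    (hp : p ∈ K) : ∃ y ∈ C, IsSubgradientAt (convexEnvelope K C U) p y := by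
  obtain ⟨y, hy, hmin⟩ := C.exists_min_image (fun y => U y - ⟪p, y⟫) hC
  refine ⟨y, hy, fun x => ?_⟩
  have hle := le_convexEnvelope (U := U) hK hC hp (t := U y - ⟪p, y⟫)
    (fun z hz => by linarith [hmin z hz]) x
  have := convexEnvelope_le (U := U) hK ⟨p, hp⟩ hy
  rw [inner_sub_right]
  linarith

lemma convexEnvelope_add_inner_eq_of_mem_support (hK : IsCompact K) {x p : Euc n} (hpK : p ∈ K)
    (hp : IsSubgradientAt (convexEnvelope K C U) p x) {l : C → ℝ} (hl : l ∈ stdSimplex ℝ C)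
    (hx : convexEnvelope K C U x = envelopeCost K C U x l) {y : C} (hy : l y ≠ 0) :
    convexEnvelope K C U x + ⟪p, (y : Euc n) - x⟫ = U y := by
  have hgap (z : C) : 0 ≤ l z * (U z - (convexEnvelope K C U x + ⟪p, (z : Euc n) - x⟫)) :=
    mul_nonneg (hl.1 z)
      (sub_nonneg.2 ((hp z).trans (convexEnvelope_le hK ⟨p, hpK⟩ z.2)))
  have hsum : ∑ z : C, l z * (U z - (convexEnvelope K C U x + ⟪p, (z : Euc n) - x⟫)) ≤ 0 := by
    have hslope := inner_le_anisoNorm hK (x - ∑ z, l z • (z : Euc n)) hpK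
    rw [real_inner_comm] at hslope
    have hcost := hx
    rw [envelopeCost] at hcost
    simp only [inner_sub_right, inner_sum, inner_smul_right] at hslope
    simp only [inner_sub_right, mul_sub, mul_add, Finset.sum_sub_distrib, Finset.sum_add_distrib,
      ← Finset.sum_mul, hl.2, one_mul]
    linarith
  have hzero := congrFun ((Fintype.sum_eq_zero_iff_of_nonneg hgap).1
    (hsum.antisymm (Finset.sum_nonneg fun z _ => hgap z))) y
  have := (mul_eq_zero.1 hzero).resolve_left hy
  linarith

/-- The sum of the increments of `φ` from `x` along the steps `s j`; for the steps of a cubic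
grid this is the unnormalised discrete Laplacian. -/
def discreteLaplacian {F J : Type*} [AddCommGroup F] [Fintype J] (s : J → F) (φ : F → ℝ)
    (x : F) : ℝ :=
  ∑ j, (φ (x + s j) - φ x)

lemma convexEnvelope_add_le_sum (hK : IsCompact K) (hne : K.Nonempty) (hC : C.Nonempty)
    (x v : Euc n) {l : C → ℝ} (hl : l ∈ stdSimplex ℝ C) :
    convexEnvelope K C U (x + v) ≤ ∑ y : C, l y * convexEnvelope K C U (y + v) +
      anisoNorm K (x - ∑ y, l y • (y : Euc n)) := by
  set b := ∑ y, l y • (y : Euc n) with hb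
  have hjensen := (convexOn_convexEnvelope (U := U) hK hne hC).map_sum_le (t := Finset.univ)
    (w := l) (p := fun y : C => (y : Euc n) + v) (fun y _ => hl.1 y) hl.2 fun _ _ => mem_univ _
  have hbary : ∑ y : C, l y • ((y : Euc n) + v) = b + v := by
    simp only [smul_add, Finset.sum_add_distrib, ← Finset.sum_smul, hl.2, one_smul, hb]
  rw [hbary] at hjensen
  calc convexEnvelope K C U (x + v) = convexEnvelope K C U (b + v + (x - b)) := by
        congr 1; abel
    _ ≤ convexEnvelope K C U (b + v) + anisoNorm K (x - b) := convexEnvelope_add_le hK hne hC _ _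
    _ ≤ _ := by gcongr; exact hjensen

lemma discreteLaplacian_convexEnvelope_le_sum {J : Type*} [Fintype J] (s : J → Euc n)
    (hK : IsCompact K) (hne : K.Nonempty) (hC : C.Nonempty) {x : Euc n} {l : C → ℝ}
    (hl : l ∈ stdSimplex ℝ C) (hx : convexEnvelope K C U x = envelopeCost K C U x l)
    (hU : ∀ y : C, l y ≠ 0 → convexEnvelope K C U y = U y) :
    discreteLaplacian s (convexEnvelope K C U) x ≤
      ∑ y : C, l y * discreteLaplacian s (convexEnvelope K C U) y := by
  set φ := convexEnvelope K C U
  have hφx : φ x = ∑ y : C, l y * φ y + anisoNorm K (x - ∑ y, l y • (y : Euc n)) := by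
    rw [hx, envelopeCost]
    congr! 2 with y
    rcases eq_or_ne (l y) 0 with hy | hy
    · simp [hy]
    · rw [hU y hy]
  calc discreteLaplacian s φ x
      ≤ ∑ j, ∑ y : C, l y * (φ (y + s j) - φ y) := Finset.sum_le_sum fun j _ => by
        simp only [mul_sub, Finset.sum_sub_distrib]
        linarith [convexEnvelope_add_le_sum (U := U) hK hne hC x (s j) hl]
    _ = ∑ y : C, l y * discreteLaplacian s φ y := by
        simp only [discreteLaplacian, Finset.mul_sum]
        exact Finset.sum_comm

-- At `x`, the increments of the envelope are dominated by their averages over the nodes carrying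
-- an optimal convex combination, where the envelope touches `U`.
lemma discreteLaplacian_convexEnvelope_le {J : Type*} [Fintype J] {s : J → Euc n} {κ : ℝ}
    (hK : IsCompact K) (hcv : Convex ℝ K) (hne : K.Nonempty) (hC : C.Nonempty)
    (hcontact : ∀ y ∈ C, ∀ p ∈ K, (∀ z ∈ C, U y + ⟪p, z - y⟫ ≤ U z) →
      (∀ j, y + s j ∈ C) ∧ discreteLaplacian s U y ≤ κ) (x : Euc n) :
    discreteLaplacian s (convexEnvelope K C U) x ≤ κ := by
  have hslope := convexEnvelope_add_le (U := U) hK hne hC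
  have hconv := convexOn_convexEnvelope (U := U) hK hne hC
  obtain ⟨R, hR⟩ := exists_forall_lipschitzWith_of_le_add_anisoNorm hK hne
  obtain ⟨p, hp⟩ := exists_isSubgradientAt hconv (hR _ hslope).continuous x
  have hpK : p ∈ K := mem_of_isSubgradientAt hK hcv hne hslope hp
  obtain ⟨l, hl, hx⟩ := exists_convexEnvelope_eq (U := U) hK hne hC x
  set φ := convexEnvelope K C U
  have htouch (y : C) (hy : l y ≠ 0) : φ x + ⟪p, (y : Euc n) - x⟫ = U y :=
    convexEnvelope_add_inner_eq_of_mem_support hK hpK hp hl hx hy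
  have hφU (y : C) (hy : l y ≠ 0) : φ y = U y :=
    (convexEnvelope_le hK hne y.2).antisymm (htouch y hy ▸ hp y)
  have hnode (y : C) (hy : l y ≠ 0) : discreteLaplacian s φ y ≤ κ := by
    obtain ⟨hnbr, hle⟩ := hcontact y y.2 p hpK fun z hz => by
      have := (hp z).trans (convexEnvelope_le hK hne hz)
      rwa [← htouch y hy, add_assoc, ← inner_add_right, add_comm ((y : Euc n) - x),
        sub_add_sub_cancel]
    refine le_trans (Finset.sum_le_sum fun j _ => ?_) hle
    rw [hφU y hy]
    exact sub_le_sub_right (convexEnvelope_le hK hne (hnbr j)) _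
  calc discreteLaplacian s φ x ≤ ∑ y : C, l y * discreteLaplacian s φ y :=
        discreteLaplacian_convexEnvelope_le_sum s hK hne hC hl hx hφU
    _ ≤ ∑ y : C, l y * κ := Finset.sum_le_sum fun y _ => by
        rcases eq_or_ne (l y) 0 with hy | hy
        · simp [hy]
        · exact mul_le_mul_of_nonneg_left (hnode y hy) (hl.1 y)
    _ = κ := by rw [← Finset.sum_mul, hl.2, one_mul]

end ConvexEnvelope

/-! ### Discrete couplings -/

section DiscreteCoupling

variable {n : ℕ} {J : Type*} [Fintype J]

/-- The discrete counterpart of the anisotropic coupling: a convex function with slopes in `K`,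
each of which is attained on `A`, whose discrete Laplacian for the steps `s` is at most `κ`.
That the slopes lie in `K` is expressed by `add_le`. -/
structure IsDiscreteCoupling (K A : Set (Euc n)) (s : J → Euc n) (κ : ℝ) (φ : Euc n → ℝ) :
    Prop where
  convexOn : ConvexOn ℝ univ φ
  add_le : ∀ x v, φ (x + v) ≤ φ x + anisoNorm K v
  exists_isSubgradientAt : ∀ p ∈ K, ∃ y ∈ A, IsSubgradientAt φ p y
  discreteLaplacian_le : ∀ x, discreteLaplacian s φ x ≤ κ

/-- The finite-difference counterpart of the vector field `-∇(w ^ 2)`, up to normalisation. -/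
def discreteField (s : J → Euc n) (w : Euc n → ℝ) (x : Euc n) : Euc n :=
  -(w x • ∑ j, w (x + s j) • s j)

lemma pos_and_sum_le_of_sum_mul_le {a D : J → ℝ} {W κ τ : ℝ} (hκ : 0 < κ) (hτ : 0 < τ)
    (ha0 : ∀ j, 0 ≤ a j) (haW : ∀ j, W - τ / 2 ≤ a j) (hD : ∀ j, 0 < a j → 0 ≤ D j)
    (hsum : ∑ j, a j * D j ≤ κ * (W - τ)) : (∀ j, 0 < a j) ∧ ∑ j, D j ≤ κ := by
  have hnonneg : 0 ≤ ∑ j, a j * D j := Finset.sum_nonneg fun j _ => by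
    rcases (ha0 j).eq_or_lt with hj | hj
    · simp [← hj]
    · exact mul_nonneg hj.le (hD j hj)
  have hτW : 0 ≤ W - τ := nonneg_of_mul_nonneg_right (hnonneg.trans hsum) hκ
  have hpos (j : J) : 0 < a j := by linarith [haW j]
  refine ⟨hpos, le_of_mul_le_mul_left (a := W - τ / 2) ?_ (by linarith)⟩
  calc (W - τ / 2) * ∑ j, D j ≤ ∑ j, a j * D j := by
        rw [Finset.mul_sum]
        exact Finset.sum_le_sum fun j _ => mul_le_mul_of_nonneg_right (haW j) (hD j (hpos j))
    _ ≤ κ * (W - τ) := hsum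
    _ ≤ (W - τ / 2) * κ := by nlinarith

variable {K : Set (Euc n)} {s : J → Euc n} {w U : Euc n → ℝ}

-- Adding `⟪p, discreteField s w x⟫ ≤ anisoNorm K (discreteField s w x)` to the equation cancels
-- the field and turns the increments of `U` into its excess over the touching affine function.
lemma discreteLaplacian_le_of_touching {p x : Euc n} {κ τ : ℝ} (hK : IsCompact K) (hp : p ∈ K)
    (hs : ∑ j, s j = 0) (hκ : 0 < κ) (hτ : 0 < τ) (hw : ∀ x, 0 ≤ w x) (hx : 0 < w x)
    (hosc : ∀ j, w x - τ / 2 ≤ w (x + s j))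
    (heq : w x * ∑ j, w (x + s j) * (U (x + s j) - U x) ≤
      κ * (w x * (w x - τ)) - anisoNorm K (discreteField s w x))
    (htouch : ∀ j, 0 < w (x + s j) → U x + ⟪p, s j⟫ ≤ U (x + s j)) :
    (∀ j, 0 < w (x + s j)) ∧ discreteLaplacian s U x ≤ κ := by
  have hexcess : ∑ j, w (x + s j) * (U (x + s j) - U x - ⟪p, s j⟫) ≤ κ * (w x - τ) := by
    refine le_of_mul_le_mul_left ?_ hx
    have hfield := inner_le_anisoNorm hK (discreteField s w x) hp
    rw [discreteField, inner_neg_left, real_inner_smul_left, sum_inner] at hfield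
    simp only [real_inner_comm p, real_inner_smul_right] at hfield
    rw [discreteField] at heq
    simp only [mul_sub _ _ ⟪p, s _⟫, Finset.sum_sub_distrib]
    linarith
  obtain ⟨hpos, hle⟩ := pos_and_sum_le_of_sum_mul_le hκ hτ (fun j => hw _) hosc
    (fun j hj => by linarith [htouch j hj]) hexcess
  refine ⟨hpos, ?_⟩
  rwa [Finset.sum_sub_distrib, ← inner_sum, hs, inner_zero_right, sub_zero] at hle

theorem exists_isDiscreteCoupling {κ τ : ℝ} (hK : IsCompact K) (hcv : Convex ℝ K)
    (hne : K.Nonempty) (σ : Equiv.Perm J) (hσ : ∀ j, s (σ j) = -s j) (hκ : 0 < κ) (hτ : 0 < τ)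
    (hw : ∀ x, 0 ≤ w x) (hosc : ∀ x j, w x - τ / 2 ≤ w (x + s j)) {S : Finset (Euc n)}
    (hSne : S.Nonempty) (hSw : ∀ x ∈ S, 0 < w x)
    (hS : ∀ x ∈ S, ∀ j, x + s j ∉ S → w (x + s j) = 0)
    (hsum : 0 ≤ ∑ x ∈ S, (κ * (w x * (w x - τ)) - anisoNorm K (discreteField s w x))) :
    ∃ φ, IsDiscreteCoupling K {x | 0 < w x} s κ φ := by
  obtain ⟨C, U, hCS, hC, hedge, hU⟩ :=
    exists_stepLaplacian_le_of_sum_nonneg σ hσ hw hSne hSw hS _ hsum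
  have hs : ∑ j, s j = 0 := by
    have : ∑ j, s j = -∑ j, s j := by
      rw [← Finset.sum_neg_distrib, ← Equiv.sum_comp σ]
      simp only [hσ]
    have : (2 : ℝ) • ∑ j, s j = 0 := by
      rw [two_smul]
      nth_rw 1 [this]
      exact neg_add_cancel _
    exact (smul_eq_zero.1 this).resolve_left two_ne_zero
  refine ⟨convexEnvelope K C U, convexOn_convexEnvelope hK hne hC,
    convexEnvelope_add_le hK hne hC, fun p hp => ?_, ?_⟩
  · obtain ⟨y, hy, hpy⟩ := exists_isSubgradientAt_convexEnvelope (U := U) hK hC hp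
    exact ⟨y, hSw y (hCS hy), hpy⟩
  · refine discreteLaplacian_convexEnvelope_le hK hcv hne hC fun x hx p hp htouch => ?_
    obtain ⟨hpos, hle⟩ := discreteLaplacian_le_of_touching hK hp hs hκ hτ hw (hSw x (hCS hx))
      (hosc x) (hU x hx) fun j hj => by simpa using htouch _ (hedge x hx j hj)
    exact ⟨fun j => hedge x hx j (hpos j), hle⟩

end DiscreteCoupling

/-! ### Riemann sums over grids -/

section Grid

open Filter
open scoped Pointwise

variable {n : ℕ}

/-- The grid `hℤⁿ` of mesh `h`. -/
def grid (n : ℕ) (h : ℝ) : Set (Euc n) := {x | ∀ i, ∃ z : ℤ, x i = h * z}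

/-- The steps from a point of the grid of mesh `h` to its neighbours: forward along the coordinate
axes for `Sum.inl`, backward for `Sum.inr`. -/
def gridStep (h : ℝ) : Fin n ⊕ Fin n → Euc n :=
  Sum.elim (fun i => h • EuclideanSpace.single i 1) fun i => -(h • EuclideanSpace.single i 1)

lemma gridStep_sumComm (h : ℝ) (j : Fin n ⊕ Fin n) :
    gridStep h (Equiv.sumComm _ _ j) = -gridStep h j := by
  rcases j with i | i <;> simp [gridStep]

lemma norm_gridStep (h : ℝ) (j : Fin n ⊕ Fin n) : ‖gridStep h j‖ = |h| := by
  rcases j with i | i <;> simp [gridStep, norm_smul]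

lemma add_gridStep_mem_grid {h : ℝ} {x : Euc n} (hx : x ∈ grid n h) (j : Fin n ⊕ Fin n) :
    x + gridStep h j ∈ grid n h := by
  intro k
  obtain ⟨z, hz⟩ := hx k
  rcases j with i | i
  · refine ⟨z + if k = i then 1 else 0, ?_⟩
    simp [gridStep, hz, mul_add]
  · refine ⟨z - if k = i then 1 else 0, ?_⟩
    simp [gridStep, hz, mul_sub, ← sub_eq_add_neg]

lemma image_grid (h : ℝ) : EuclideanSpace.equiv (Fin n) ℝ '' grid n h =
    h • (Submodule.span ℤ (range (Pi.basisFun ℝ (Fin n))) : Set (Fin n → ℝ)) := by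
  ext x
  simp only [(EuclideanSpace.equiv (Fin n) ℝ).image_eq_preimage_symm, mem_preimage, mem_smul_set,
    SetLike.mem_coe, Module.Basis.mem_span_iff_repr_mem, Pi.basisFun_repr]
  constructor
  · intro hx
    choose z hz using hx
    exact ⟨fun i => z i, fun i => ⟨z i, rfl⟩, funext fun i => (hz i).symm⟩
  · rintro ⟨y, hy, rfl⟩ i
    obtain ⟨z, hz⟩ := hy i
    exact ⟨z, congrArg (h * ·) hz.symm⟩

lemma finite_grid_inter {h : ℝ} (hh : h ≠ 0) {A : Set (Euc n)} (hA : IsCompact A) :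
    (grid n h ∩ A).Finite := by
  set e := EuclideanSpace.equiv (Fin n) ℝ
  refine Finite.of_finite_image ?_ e.injective.injOn
  have hbdd : Bornology.IsBounded (h⁻¹ • e '' A) :=
    ((hA.image e.continuous).isBounded).smul₀ h⁻¹
  refine ((ZSpan.setFinite_inter (Pi.basisFun ℝ (Fin n)) hbdd).smul_set (a := h)).subset ?_
  rw [image_inter e.injective, image_grid, smul_set_inter₀ hh, smul_inv_smul₀ hh, inter_comm]

lemma exists_finset_coe_eq_grid_inter {A : Set (Euc n)} (hA : IsCompact A) :
    ∃ T : ℕ → Finset (Euc n), ∀ N ≠ 0, (T N : Set (Euc n)) = grid n (N : ℝ)⁻¹ ∩ A := by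
  choose T hT using fun N : {N : ℕ // N ≠ 0} =>
    (finite_grid_inter (inv_ne_zero (Nat.cast_ne_zero (R := ℝ).2 N.2)) hA).exists_finset_coe
  exact ⟨fun N => if hN : N ≠ 0 then T ⟨N, hN⟩ else ∅, fun N hN => by simp [hN, hT]⟩

lemma tendsto_sum_grid_div_pow {A : Set (Euc n)} (hA : IsCompact A) (hAcv : Convex ℝ A)
    {T : ℕ → Finset (Euc n)} (hT : ∀ᶠ N : ℕ in atTop, (T N : Set (Euc n)) = grid n (N : ℝ)⁻¹ ∩ A)
    {G : Euc n → ℝ} (hG : Continuous G) :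
    Tendsto (fun N : ℕ => (∑ x ∈ T N, G x) / (N : ℝ) ^ n) atTop (𝓝 (∫ x in A, G x)) := by
  set e := EuclideanSpace.equiv (Fin n) ℝ
  have hcpt : IsCompact (e '' A) := hA.image e.continuous
  have hriemann := tendsto_tsum_div_pow_atTop_integral (e '' A) (fun x => G (e.symm x))
    (by fun_prop) hcpt.isBounded hcpt.measurableSet
    ((hAcv.linear_image e.toLinearMap).addHaar_frontier volume)
  have hint : ∫ x in e '' A, G (e.symm x) = ∫ x in A, G x := by
    have := (PiLp.volume_preserving_toLp (Fin n)).setIntegral_preimage_emb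
      (MeasurableEquiv.toLp 2 (Fin n → ℝ)).measurableEmbedding G A
    rwa [e.image_eq_preimage_symm]
  rw [hint, Fintype.card_fin] at hriemann
  refine hriemann.congr' ?_
  filter_upwards [hT] with N hN
  rw [inter_comm, ← image_grid, ← image_inter e.injective, ← hN,
    tsum_image (fun x => G (e.symm x)) e.injective.injOn]
  simp [Finset.sum_attach]

lemma tendsto_sum_grid_div_pow_of_tendstoUniformly {A : Set (Euc n)} (hA : IsCompact A)
    (hAcv : Convex ℝ A) {T : ℕ → Finset (Euc n)}
    (hT : ∀ᶠ N : ℕ in atTop, (T N : Set (Euc n)) = grid n (N : ℝ)⁻¹ ∩ A)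
    {F : ℕ → Euc n → ℝ} {G : Euc n → ℝ} (hG : Continuous G) (hF : TendstoUniformly F G atTop) :
    Tendsto (fun N : ℕ => (∑ x ∈ T N, F N x) / (N : ℝ) ^ n) atTop (𝓝 (∫ x in A, G x)) := by
  have hcard := tendsto_sum_grid_div_pow hA hAcv hT (continuous_const (y := (1 : ℝ)))
  set V := ∫ _ in A, (1 : ℝ)
  have hdiff : Tendsto (fun N : ℕ => (∑ x ∈ T N, (F N x - G x)) / (N : ℝ) ^ n) atTop (𝓝 0) := by
    refine Metric.tendsto_nhds.2 fun ε hε => ?_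
    have hV : 0 < |V| + 1 := by positivity
    filter_upwards [Metric.tendstoUniformly_iff.1 hF (ε / (|V| + 1)) (by positivity),
      hcard.eventually (gt_mem_nhds ((le_abs_self V).trans_lt (lt_add_one _)))] with N hN hNV
    rw [dist_zero_right, norm_div, Real.norm_of_nonneg (by positivity : (0 : ℝ) ≤ (N : ℝ) ^ n)]
    calc ‖∑ x ∈ T N, (F N x - G x)‖ / (N : ℝ) ^ n
        ≤ (∑ x ∈ T N, ε / (|V| + 1) * 1) / (N : ℝ) ^ n := by
          gcongr
          refine norm_sum_le_of_le _ fun x _ => ?_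
          rw [mul_one, ← dist_eq_norm, dist_comm]
          exact (hN x).le
      _ = ε / (|V| + 1) * ((∑ x ∈ T N, 1) / (N : ℝ) ^ n) := by
          rw [← Finset.mul_sum, mul_div_assoc]
      _ < ε / (|V| + 1) * (|V| + 1) := by gcongr
      _ = ε := div_mul_cancel₀ ε hV.ne'
  have hsum := (tendsto_sum_grid_div_pow hA hAcv hT hG).add hdiff
  rw [add_zero] at hsum
  refine hsum.congr fun N => ?_
  rw [← add_div, ← Finset.sum_add_distrib]
  simp

end Grid

/-! ### Finite differences -/

section FiniteDifference

open Filter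

variable {n : ℕ} {w : Euc n → ℝ}

lemma gradient_eq_sum_smul (w : Euc n → ℝ) (x : Euc n) :
    gradient w x = ∑ i, fderiv ℝ w x (EuclideanSpace.single i 1) • EuclideanSpace.single i 1 := by
  rw [← (EuclideanSpace.basisFun (Fin n) ℝ).sum_repr' (gradient w x)]
  simp [real_inner_comm (gradient w x)]

lemma continuous_gradient (hw : ContDiff ℝ 1 w) : Continuous (gradient w) :=
  (LinearIsometryEquiv.continuous _).comp (hw.continuous_fderiv one_ne_zero)

lemma exists_forall_abs_sub_fderiv_le {F : Type*} [NormedAddCommGroup F] [NormedSpace ℝ F]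
    {w : F → ℝ} (hw : ContDiff ℝ 1 w) (hc : HasCompactSupport w) {ε : ℝ} (hε : 0 < ε) :
    ∃ δ > 0, ∀ x v, ‖v‖ < δ → |w (x + v) - w x - fderiv ℝ w x v| ≤ ε * ‖v‖ := by
  have hu : UniformContinuous (fderiv ℝ w) :=
    (hc.fderiv (𝕜 := ℝ)).uniformContinuous_of_continuous (hw.continuous_fderiv one_ne_zero)
  obtain ⟨δ, hδ, h⟩ := Metric.uniformContinuous_iff.1 hu ε hε
  refine ⟨δ, hδ, fun x v hv => ?_⟩
  have := (convex_ball x δ).norm_image_sub_le_of_norm_fderiv_le' (𝕜 := ℝ) (f := w)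
    (C := ε) (φ := fderiv ℝ w x) (x := x) (y := x + v)
    (fun y _ => hw.differentiable one_ne_zero y)
    (fun y hy => by rw [← dist_eq_norm]; exact (h (mem_ball.1 hy)).le)
    (mem_ball_self hδ) (by simpa [mem_ball, dist_eq_norm] using hv)
  simpa using this

lemma tendstoUniformly_centeredDifference (hw : ContDiff ℝ 1 w) (hc : HasCompactSupport w)
    (v : Euc n) : TendstoUniformly (fun (h : ℝ) x => h⁻¹ * (w (x + h • v) - w (x - h • v)))
      (fun x => 2 * fderiv ℝ w x v) (𝓝[>] 0) := by
  refine Metric.tendstoUniformly_iff.2 fun ε hε => ?_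
  obtain ⟨δ, hδ, hdiff⟩ := exists_forall_abs_sub_fderiv_le hw hc
    (by positivity : 0 < ε / (2 * (‖v‖ + 1)))
  have hsmall : ∀ᶠ h : ℝ in 𝓝[>] 0, ‖h • v‖ < δ := by
    refine nhdsWithin_le_nhds ((continuous_id.smul continuous_const).norm.tendsto' 0 0 (by simp)
      |>.eventually (gt_mem_nhds hδ))
  filter_upwards [hsmall, self_mem_nhdsWithin] with h hh (hpos : 0 < h) x
  have hfwd := hdiff x (h • v) hh
  have hbwd := hdiff x (-(h • v)) (by rwa [norm_neg])
  rw [← sub_eq_add_neg, norm_neg, map_neg] at hbwd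
  simp only [map_smul, smul_eq_mul, norm_smul, Real.norm_of_nonneg hpos.le] at hfwd hbwd
  have hε' : h⁻¹ * (2 * (ε / (2 * (‖v‖ + 1)) * (h * ‖v‖))) < ε := by
    field_simp
    linarith [norm_nonneg v]
  refine lt_of_le_of_lt ?_ hε'
  rw [dist_comm, Real.dist_eq]
  calc |h⁻¹ * (w (x + h • v) - w (x - h • v)) - 2 * fderiv ℝ w x v|
      = h⁻¹ * |(w (x + h • v) - w x - h * fderiv ℝ w x v) -
          (w (x - h • v) - w x - -(h * fderiv ℝ w x v))| := by
        rw [← abs_of_pos (inv_pos.2 hpos), ← abs_mul, abs_of_pos (inv_pos.2 hpos)]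
        congr 1
        field_simp
        ring
    _ ≤ h⁻¹ * (2 * (ε / (2 * (‖v‖ + 1)) * (h * ‖v‖))) := by
        gcongr
        exact (abs_sub _ _).trans (by linarith)

lemma inv_sq_smul_discreteField_gridStep {h : ℝ} (hh : h ≠ 0) (w : Euc n → ℝ) (x : Euc n) :
    (h⁻¹ ^ 2) • discreteField (gridStep h) w x = -(w x • ∑ i,
      (h⁻¹ * (w (x + h • EuclideanSpace.single i 1) - w (x - h • EuclideanSpace.single i 1))) •
        EuclideanSpace.single i 1) := by
  rw [discreteField, smul_neg, smul_comm, Fintype.sum_sum_type, ← Finset.sum_add_distrib,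
    Finset.smul_sum]
  congr! 3 with i
  simp only [gridStep, Sum.elim_inl, Sum.elim_inr, smul_neg, smul_smul, ← sub_eq_add_neg,
    ← sub_smul]
  congr 1
  field_simp

lemma tendstoUniformly_discreteField (hw : ContDiff ℝ 1 w) (hc : HasCompactSupport w) :
    TendstoUniformly (fun (h : ℝ) x => (h⁻¹ ^ 2) • discreteField (gridStep h) w x)
      (fun x => -((2 * w x) • gradient w x)) (𝓝[>] 0) := by
  obtain ⟨M, hM⟩ := hc.exists_bound_of_continuous hw.continuous
  have hM0 : 0 ≤ M := (norm_nonneg _).trans (hM 0)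
  refine Metric.tendstoUniformly_iff.2 fun ε hε => ?_
  have hdiff := eventually_all.2 fun i : Fin n => Metric.tendstoUniformly_iff.1
    (tendstoUniformly_centeredDifference hw hc (EuclideanSpace.single i 1))
    (ε / ((M + 1) * (n + 1))) (by positivity)
  filter_upwards [hdiff, self_mem_nhdsWithin] with h hh (hpos : 0 < h) x
  rw [dist_eq_norm, inv_sq_smul_discreteField_gridStep hpos.ne', gradient_eq_sum_smul,
    mul_comm 2, mul_smul, neg_sub_neg, ← smul_sub, Finset.smul_sum, ← Finset.sum_sub_distrib,
    norm_smul]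
  calc ‖w x‖ * ‖_‖ ≤ M * ∑ _ : Fin n, ε / ((M + 1) * (n + 1)) := by
        gcongr
        · exact hM x
        · refine norm_sum_le_of_le _ fun i _ => ?_
          have := (hh i x).le
          rw [dist_comm, dist_eq_norm] at this
          rwa [smul_smul, ← sub_smul, norm_smul, PiLp.norm_single, norm_one, mul_one]
    _ = M * n / ((M + 1) * (n + 1)) * ε := by
      simp
      ring
    _ < 1 * ε := by
        gcongr
        rw [div_lt_one (by positivity)]
        nlinarith
    _ = ε := one_mul ε

end FiniteDifference

/-! ### Discretisation -/

section Discretisation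

open Filter

variable {n : ℕ} {K : Set (Euc n)} {w : Euc n → ℝ} {c : ℝ}

lemma pos_of_integral_anisoNorm_lt (hK : IsCompact K) (h0 : 0 ∈ K)
    (hI : ∫ x, anisoNorm K (-((2 * w x) • gradient w x)) < c * ∫ x, w x ^ 2) : 0 < c := by
  have hsq : 0 ≤ ∫ x, w x ^ 2 := integral_nonneg fun x => sq_nonneg _
  have hflux : 0 ≤ ∫ x, anisoNorm K (-((2 * w x) • gradient w x)) :=
    integral_nonneg fun x => anisoNorm_nonneg hK h0 _
  exact pos_of_mul_pos_left (hflux.trans_lt hI) hsq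

lemma continuous_anisoNorm_neg_smul_gradient (hK : IsCompact K) (hne : K.Nonempty)
    (hw : ContDiff ℝ 1 w) : Continuous fun x => anisoNorm K (-((2 * w x) • gradient w x)) := by
  have := hw.continuous
  have := continuous_gradient hw
  exact (uniformContinuous_anisoNorm hK hne).continuous.comp (by fun_prop)

lemma exists_pos_integral_sub_anisoNorm (hK : IsCompact K) (hne : K.Nonempty)
    (hw : ContDiff ℝ 1 w) (hc : HasCompactSupport w)
    (hI : ∫ x, anisoNorm K (-((2 * w x) • gradient w x)) < c * ∫ x, w x ^ 2) :
    ∃ τ > 0, 0 < ∫ x, (c * (w x * (w x - τ)) - anisoNorm K (-((2 * w x) • gradient w x))) := by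
  obtain ⟨τ, hτ, hgap⟩ := exists_pos_mul_lt (sub_pos.2 hI) (c * ∫ x, w x)
  refine ⟨τ, hτ, ?_⟩
  have hwc := hw.continuous
  have hint : Integrable w := hwc.integrable_of_hasCompactSupport hc
  have hsq : Integrable fun x => w x ^ 2 := (hwc.pow 2).integrable_of_hasCompactSupport
    (hc.mono fun x hx hx0 => hx (by simp [hx0]))
  have hflux : Integrable fun x => anisoNorm K (-((2 * w x) • gradient w x)) :=
    (continuous_anisoNorm_neg_smul_gradient hK hne hw).integrable_of_hasCompactSupport
      (hc.mono fun x hx hx0 => hx (by simp [hx0, anisoNorm_zero]))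
  have hsplit (x : Euc n) : c * (w x * (w x - τ)) = c * w x ^ 2 - c * τ * w x := by ring
  simp only [hsplit]
  have hquad : Integrable fun x => c * w x ^ 2 - c * τ * w x :=
    (hsq.const_mul c).sub (hint.const_mul (c * τ))
  rw [integral_sub hquad hflux, integral_sub (hsq.const_mul c) (hint.const_mul _),
    integral_const_mul, integral_const_mul]
  linarith

lemma tendstoUniformly_sub_anisoNorm_discreteField (hK : IsCompact K) (hne : K.Nonempty)
    (hw : ContDiff ℝ 1 w) (hc : HasCompactSupport w) (g : Euc n → ℝ) :
    TendstoUniformly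
      (fun (h : ℝ) x => g x - anisoNorm K ((h⁻¹ ^ 2) • discreteField (gridStep h) w x))
      (fun x => g x - anisoNorm K (-((2 * w x) • gradient w x))) (𝓝[>] 0) := by
  have := (uniformContinuous_anisoNorm hK hne).comp_tendstoUniformly
    (tendstoUniformly_discreteField hw hc)
  simpa only [Metric.tendstoUniformly_iff, dist_sub_left, Function.comp_def] using this

lemma exists_isDiscreteCoupling_gridStep_of_sum_pos (hK : IsCompact K) (hcv : Convex ℝ K)
    (hne : K.Nonempty) (hw0 : ∀ x, 0 ≤ w x) (hcpos : 0 < c) {h τ : ℝ} (hh : 0 < h) (hτ : 0 < τ)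
    (hosc : ∀ x j, w x - τ / 2 ≤ w (x + gridStep h j)) {A : Set (Euc n)}
    (hA : Function.support w ⊆ A) {T : Finset (Euc n)} (hT : (T : Set (Euc n)) = grid n h ∩ A)
    (hsum : 0 < ∑ x ∈ T,
      (c * (w x * (w x - τ)) - anisoNorm K ((h⁻¹ ^ 2) • discreteField (gridStep h) w x))) :
    ∃ φ, IsDiscreteCoupling K {x | 0 < w x} (gridStep h) (c * h ^ 2) φ := by
  set F : Euc n → ℝ := fun x =>
    c * (w x * (w x - τ)) - anisoNorm K ((h⁻¹ ^ 2) • discreteField (gridStep h) w x)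
  have hF (x : Euc n) (hx : ¬0 < w x) : F x = 0 := by
    simp [F, (hw0 x).antisymm' (not_lt.1 hx), discreteField, anisoNorm_zero]
  have hscale (x : Euc n) : c * h ^ 2 * (w x * (w x - τ)) -
      anisoNorm K (discreteField (gridStep h) w x) = h ^ 2 * F x := by
    simp only [F, anisoNorm_smul K (by positivity : 0 ≤ h⁻¹ ^ 2)]
    field_simp
  have hfilter : ∑ x ∈ T with 0 < w x, F x = ∑ x ∈ T, F x :=
    Finset.sum_filter_of_ne fun x _ hx => by_contra fun hwx => hx (hF x hwx)
  have hTmem (x : Euc n) : x ∈ T ↔ x ∈ grid n h ∧ x ∈ A := by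
    rw [← Finset.mem_coe, hT, mem_inter_iff]
  refine exists_isDiscreteCoupling hK hcv hne (Equiv.sumComm _ _) (gridStep_sumComm h)
    (by positivity) hτ hw0 hosc (S := {x ∈ T | 0 < w x}) ?_ (by simp) ?_ ?_
  · exact Finset.nonempty_of_sum_ne_zero (hfilter ▸ hsum.ne')
  · intro x hx j hxj
    by_contra hne
    refine hxj (Finset.mem_filter.2 ⟨(hTmem _).2 ⟨?_, hA hne⟩, (hw0 _).lt_of_ne' hne⟩)
    exact add_gridStep_mem_grid ((hTmem x).1 (Finset.mem_filter.1 hx).1).1 j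
  · simp only [hscale, ← Finset.mul_sum, hfilter]
    positivity

theorem exists_isDiscreteCoupling_gridStep (hK : IsCompact K) (hcv : Convex ℝ K) (h0 : 0 ∈ K)
    (hw : ContDiff ℝ 1 w) (hc : HasCompactSupport w) (hw0 : ∀ x, 0 ≤ w x)
    (hI : ∫ x, anisoNorm K (-((2 * w x) • gradient w x)) < c * ∫ x, w x ^ 2) {ε : ℝ}
    (hε : 0 < ε) :
    ∃ h, 0 < h ∧ h < ε ∧
      ∃ φ, IsDiscreteCoupling K {x | 0 < w x} (gridStep h) (c * h ^ 2) φ := by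
  have hne : K.Nonempty := ⟨0, h0⟩
  have hwc := hw.continuous
  obtain ⟨τ, hτ, hpos⟩ := exists_pos_integral_sub_anisoNorm hK hne hw hc hI
  obtain ⟨ρ, hρ⟩ := hc.isCompact.isBounded.subset_closedBall (0 : Euc n)
  set A := closedBall (0 : Euc n) ρ
  have hsupp : Function.support w ⊆ A := (subset_tsupport w).trans hρ
  obtain ⟨T, hT⟩ := exists_finset_coe_eq_grid_inter (isCompact_closedBall (0 : Euc n) ρ)
  have hmesh : Tendsto (fun N : ℕ => (N : ℝ)⁻¹) atTop (𝓝[>] 0) :=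
    tendsto_inv_atTop_nhdsGT_zero.comp tendsto_natCast_atTop_atTop
  have hunif := tendstoUniformly_sub_anisoNorm_discreteField hK hne hw hc fun x =>
    c * (w x * (w x - τ))
  have hlim := tendsto_sum_grid_div_pow_of_tendstoUniformly (isCompact_closedBall 0 ρ)
    (convex_closedBall 0 ρ) ((eventually_ne_atTop 0).mono hT)
    ((by fun_prop : Continuous fun x => c * (w x * (w x - τ))).sub
      (continuous_anisoNorm_neg_smul_gradient hK hne hw))
    fun u hu => hmesh.eventually (hunif u hu)
  rw [setIntegral_eq_integral_of_forall_compl_eq_zero fun x hx => by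
    simp [Function.notMem_support.1 fun h => hx (hsupp h), anisoNorm_zero]] at hlim
  obtain ⟨δ, hδ, hosc⟩ := Metric.uniformContinuous_iff.1
    (hc.uniformContinuous_of_continuous hwc) (τ / 2) (by positivity)
  obtain ⟨N, hN, hNpos, hNε, hNδ, hNsum⟩ := ((eventually_ne_atTop 0).and
    ((hmesh.eventually self_mem_nhdsWithin).and ((hmesh.eventually (Ioo_mem_nhdsGT hε)).and
      ((hmesh.eventually (Ioo_mem_nhdsGT hδ)).and (hlim.eventually (lt_mem_nhds hpos)))))).exists
  refine ⟨(N : ℝ)⁻¹, hNpos, hNε.2, exists_isDiscreteCoupling_gridStep_of_sum_pos hK hcv hne hw0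
    (pos_of_integral_anisoNorm_lt hK h0 hI) hNpos hτ (fun x j => ?_) hsupp (hT N hN) ?_⟩
  · have := hosc (a := x) (b := x + gridStep (N : ℝ)⁻¹ j)
      (by simpa [norm_gridStep] using hNδ.2)
    linarith [(abs_lt.1 (Real.dist_eq _ _ ▸ this)).2]
  · exact (div_pos_iff_of_pos_right (by positivity)).1 hNsum

end Discretisation

/-! ### Second differences -/

/-- The symmetric second difference of `φ` at `x` in the direction `v`. -/
def secondDiff {F : Type*} [AddCommGroup F] (φ : F → ℝ) (x v : F) : ℝ :=
  φ (x + v) + φ (x - v) - 2 * φ x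

section SecondDiff

variable {F : Type*} [AddCommGroup F] {φ : F → ℝ}

lemma secondDiff_neg (φ : F → ℝ) (x v : F) : secondDiff φ x (-v) = secondDiff φ x v := by
  rw [secondDiff, secondDiff, sub_neg_eq_add, ← sub_eq_add_neg, add_comm (φ (x - v))]

lemma secondDiff_succ_nsmul_sub_le {v : F} {C : ℝ} (h : ∀ x, secondDiff φ x v ≤ C) (x : F)
    (m : ℕ) : secondDiff φ x ((m + 1) • v) - secondDiff φ x (m • v) ≤ (2 * m + 1) * C := by
  induction m with
  | zero => simpa [secondDiff, two_mul] using h x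
  | succ m ih =>
    have hfwd := h (x + (m + 1) • v)
    have hbwd := h (x - (m + 1) • v)
    have hf₁ : x + (m + 1) • v + v = x + (m + 1 + 1) • v := by rw [succ_nsmul v (m + 1)]; abel
    have hf₂ : x + (m + 1) • v - v = x + m • v := by rw [succ_nsmul]; abel
    have hb₁ : x - (m + 1) • v + v = x - m • v := by rw [succ_nsmul]; abel
    have hb₂ : x - (m + 1) • v - v = x - (m + 1 + 1) • v := by rw [succ_nsmul v (m + 1)]; abel
    rw [secondDiff, hf₁, hf₂] at hfwd
    rw [secondDiff, hb₁, hb₂] at hbwd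
    simp only [secondDiff] at ih ⊢
    push_cast
    linarith

lemma secondDiff_nsmul_le {v : F} {C : ℝ} (h : ∀ x, secondDiff φ x v ≤ C) (x : F) (m : ℕ) :
    secondDiff φ x (m • v) ≤ C * m ^ 2 := by
  induction m with
  | zero => simp [secondDiff, two_mul]
  | succ m ih =>
    push_cast
    linarith [secondDiff_succ_nsmul_sub_le h x m]

lemma convexOn_secondDiff [Module ℝ F] (hcv : ConvexOn ℝ univ φ) (x : F) :
    ConvexOn ℝ univ (secondDiff φ x) := by
  have hfwd : ConvexOn ℝ univ fun v => φ (x + v) := by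
    simpa [Function.comp_def] using hcv.translate_right x
  have hbwd : ConvexOn ℝ univ fun v => φ (x - v) := by
    simpa [Function.comp_def, ← sub_eq_add_neg] using hfwd.comp_linearMap (-LinearMap.id)
  exact (hfwd.add hbwd).add_const (-(2 * φ x))

lemma secondDiff_nonneg [Module ℝ F] (hcv : ConvexOn ℝ univ φ) (x v : F) :
    0 ≤ secondDiff φ x v := by
  have h := hcv.2 (mem_univ (x + v)) (mem_univ (x - v)) (by norm_num : (0 : ℝ) ≤ 1 / 2)
    (by norm_num : (0 : ℝ) ≤ 1 / 2) (by norm_num)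
  have hmid : (1 / 2 : ℝ) • (x + v) + (1 / 2 : ℝ) • (x - v) = x := by module
  rw [hmid, smul_eq_mul, smul_eq_mul] at h
  rw [secondDiff]
  linarith

lemma secondDiff_nonneg_of_isMinOn {A : Set F} {x v : F} (hx : IsMinOn φ A x)
    (hfwd : x + v ∈ A) (hbwd : x - v ∈ A) : 0 ≤ secondDiff φ x v := by
  rw [secondDiff]
  linarith [isMinOn_iff.1 hx _ hfwd, isMinOn_iff.1 hx _ hbwd]

end SecondDiff

-- Convexity of `secondDiff φ x`, applied to `v = (1 / d) • ∑ i, (d * ⟪b i, v⟫) • b i`.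
lemma secondDiff_le_of_orthonormalBasis {ι F : Type*} [Fintype ι] [NormedAddCommGroup F]
    [InnerProductSpace ℝ F] (b : OrthonormalBasis ι ℝ F) {φ : F → ℝ} (hcv : ConvexOn ℝ univ φ)
    {c : ℝ} {x : F} (hc : ∀ i t, secondDiff φ x (t • b i) ≤ c * t ^ 2) (v : F) :
    secondDiff φ x v ≤ (Fintype.card ι : ℝ) * c * ‖v‖ ^ 2 := by
  rcases isEmpty_or_nonempty ι with hι | hι
  · have hv : v = 0 := by simpa using (b.sum_repr' v).symm
    simp [hv, secondDiff, two_mul]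
  set d : ℝ := (Fintype.card ι : ℝ)
  have hd : d ≠ 0 := by positivity
  have hv : ∑ i, (1 / d) • (d * ⟪b i, v⟫) • b i = v := by
    simp_rw [smul_smul, ← mul_assoc, one_div_mul_cancel hd, one_mul]
    exact b.sum_repr' v
  calc secondDiff φ x v = secondDiff φ x (∑ i, (1 / d) • (d * ⟪b i, v⟫) • b i) := by rw [hv]
    _ ≤ ∑ i, (1 / d) • secondDiff φ x ((d * ⟪b i, v⟫) • b i) :=
        (convexOn_secondDiff hcv x).map_sum_le (fun i _ => by positivity)
          (by simp [d, hd]) fun i _ => mem_univ _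
    _ ≤ ∑ i, (1 / d) • (c * (d * ⟪b i, v⟫) ^ 2) := by gcongr with i; exact hc i _
    _ = d * c * ∑ i, ⟪b i, v⟫ ^ 2 := by
        rw [Finset.mul_sum]
        congr! 1 with i
        rw [smul_eq_mul]
        field_simp
    _ = d * c * ‖v‖ ^ 2 := by rw [← b.sum_sq_inner_right]

/-! ### Convex functions with bounded second differences are of class `C^{1,1}` -/

section Regularity

variable {F : Type*} [NormedAddCommGroup F] [InnerProductSpace ℝ F] {φ : F → ℝ} {M : ℝ}

lemma IsSubgradientAt.le_add_sq (hM : ∀ x v, secondDiff φ x v ≤ M * ‖v‖ ^ 2) {x p : F}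
    (hp : IsSubgradientAt φ p x) (y : F) : φ y ≤ φ x + ⟪p, y - x⟫ + M * ‖y - x‖ ^ 2 := by
  have hdiff := hM x (y - x)
  have hrefl := hp (x - (y - x))
  rw [secondDiff, add_sub_cancel] at hdiff
  rw [sub_sub_cancel_left, inner_neg_right] at hrefl
  linarith

lemma IsSubgradientAt.norm_sub_le (hM : ∀ x v, secondDiff φ x v ≤ M * ‖v‖ ^ 2) {x y p q : F}
    (hp : IsSubgradientAt φ p x) (hq : IsSubgradientAt φ q y) :
    ‖p - q‖ ≤ |2 * M| * ‖x - y‖ := by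
  have hinner (w : F) : ⟪p - q, w⟫ ≤ M * ‖w‖ ^ 2 + M * ‖x - y‖ ^ 2 := by
    have hlow := hp (y + w)
    have hup := hq.le_add_sq hM (y + w)
    have hxy := hp.le_add_sq hM y
    rw [add_sub_cancel_left] at hup
    rw [add_sub_right_comm, inner_add_right] at hlow
    rw [norm_sub_rev y x] at hxy
    rw [inner_sub_left]
    linarith
  have hdiscrim := discrim_le_zero (a := M * ‖p - q‖ ^ 2) (b := -‖p - q‖ ^ 2)
    (c := M * ‖x - y‖ ^ 2) fun t => by
      have := hinner (t • (p - q))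
      rw [inner_smul_right, real_inner_self_eq_norm_sq, norm_smul, mul_pow, Real.norm_eq_abs,
        sq_abs] at this
      linarith
  rcases (norm_nonneg (p - q)).eq_or_lt with h0 | hpos
  · rw [← h0]
    positivity
  · have hsq : ‖p - q‖ ^ 2 ≤ (2 * M * ‖x - y‖) ^ 2 := by
      refine le_of_mul_le_mul_left ?_ (pow_pos hpos 2)
      rw [discrim] at hdiscrim
      linarith
    simpa [abs_mul] using sq_le_sq.1 hsq

variable [CompleteSpace F]

lemma IsSubgradientAt.hasGradientAt (hM : ∀ x v, secondDiff φ x v ≤ M * ‖v‖ ^ 2) {x p : F}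
    (hp : IsSubgradientAt φ p x) : HasGradientAt φ p x := by
  rw [hasGradientAt_iff_isLittleO]
  have hquad : (fun y => φ y - φ x - ⟪p, y - x⟫) =O[𝓝 x] fun y => ‖y - x‖ ^ 2 := by
    refine Asymptotics.IsBigO.of_bound M (.of_forall fun y => ?_)
    rw [Real.norm_of_nonneg (by linarith [hp y]), Real.norm_of_nonneg (by positivity)]
    linarith [hp.le_add_sq hM y]
  refine hquad.trans_isLittleO ?_
  have hsq : (fun z : F => ‖z‖ ^ 2) =o[𝓝 0] fun z => z :=
    Asymptotics.isLittleO_norm_pow_id one_lt_two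
  exact hsq.comp_tendsto ((continuous_sub_right x).tendsto' x 0 (sub_self x))

lemma isSubgradientAt_gradient (hcv : ConvexOn ℝ univ φ) (hc : Continuous φ)
    (hM : ∀ x v, secondDiff φ x v ≤ M * ‖v‖ ^ 2) (x : F) :
    IsSubgradientAt φ (gradient φ x) x := by
  obtain ⟨p, hp⟩ := exists_isSubgradientAt hcv hc x
  rwa [(hp.hasGradientAt hM).gradient]

lemma lipschitzWith_gradient (hcv : ConvexOn ℝ univ φ) (hc : Continuous φ)
    (hM : ∀ x v, secondDiff φ x v ≤ M * ‖v‖ ^ 2) :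
    LipschitzWith (Real.nnabs (2 * M)) (gradient φ) :=
  LipschitzWith.of_dist_le_mul fun x y => by
    simpa only [dist_eq_norm, Real.coe_nnabs] using
      (isSubgradientAt_gradient hcv hc hM x).norm_sub_le hM (isSubgradientAt_gradient hcv hc hM y)

lemma lipschitzWith_fderiv_of_gradient {L : NNReal} (hL : LipschitzWith L (gradient φ)) :
    LipschitzWith L (fderiv ℝ φ) := by
  have : fderiv ℝ φ = InnerProductSpace.toDual ℝ F ∘ gradient φ := by
    ext x : 1
    simp [gradient]
  rw [this, ← one_mul L]
  exact (InnerProductSpace.toDual ℝ F).lipschitz.comp hL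

lemma contDiff_one_of_secondDiff_le (hcv : ConvexOn ℝ univ φ) (hc : Continuous φ)
    (hM : ∀ x v, secondDiff φ x v ≤ M * ‖v‖ ^ 2) : ContDiff ℝ 1 φ :=
  contDiff_one_iff_fderiv.2
    ⟨fun x => ((isSubgradientAt_gradient hcv hc hM x).hasGradientAt hM).differentiableAt,
      (lipschitzWith_fderiv_of_gradient (lipschitzWith_gradient hcv hc hM)).continuous⟩

end Regularity

/-! ### Ultralimits of Lipschitz functions -/

lemma exists_mem_tendsto_of_isCompact {ι X : Type*} [TopologicalSpace X] {A : Set X}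
    (hA : IsCompact A) (l : Ultrafilter ι) {u : ι → X} (hu : ∀ k, u k ∈ A) :
    ∃ x ∈ A, Filter.Tendsto u l (𝓝 x) :=
  hA.ultrafilter_le_nhds (l.map u)
    (Filter.le_principal_iff.2 (Filter.mem_map.2 (Filter.univ_mem' hu)))

lemma exists_forall_tendsto_of_lipschitzWith {ι X : Type*} [PseudoMetricSpace X]
    (l : Ultrafilter ι) {R : NNReal} {F : ι → X → ℝ} (hF : ∀ k, LipschitzWith R (F k)) {x₀ : X}
    (h₀ : ∀ k, F k x₀ = 0) : ∃ φ : X → ℝ, ∀ x, Filter.Tendsto (fun k => F k x) l (𝓝 (φ x)) := by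
  have hmem (x : X) (k : ι) : F k x ∈ closedBall (0 : ℝ) (R * dist x x₀) := by
    simpa [h₀] using (hF k).dist_le_mul x x₀
  choose φ _ hφ using fun x =>
    exists_mem_tendsto_of_isCompact (isCompact_closedBall _ _) l (hmem x)
  exact ⟨φ, hφ⟩

lemma convexOn_of_tendsto {ι F : Type*} [AddCommGroup F] [Module ℝ F] {l : Filter ι} [l.NeBot]
    {s : Set F} {f : ι → F → ℝ} {φ : F → ℝ} (hs : Convex ℝ s) (hf : ∀ k, ConvexOn ℝ s (f k))
    (hφ : ∀ x, Filter.Tendsto (fun k => f k x) l (𝓝 (φ x))) : ConvexOn ℝ s φ :=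
  ⟨hs, fun x hx y hy a b ha hb hab =>
    le_of_tendsto_of_tendsto' (hφ _) (((hφ x).const_mul a).add ((hφ y).const_mul b))
      fun k => (hf k).2 hx hy ha hb hab⟩

section UltraLimit

variable {ι : Type*} {l : Filter ι} {R : NNReal}

lemma tendsto_apply_of_lipschitzWith {X : Type*} [PseudoMetricSpace X] {F : ι → X → ℝ}
    {φ : X → ℝ} (hF : ∀ k, LipschitzWith R (F k))
    (hφ : ∀ x, Filter.Tendsto (fun k => F k x) l (𝓝 (φ x))) {u : ι → X} {x : X}
    (hu : Filter.Tendsto u l (𝓝 x)) : Filter.Tendsto (fun k => F k (u k)) l (𝓝 (φ x)) := by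
  refine (hφ x).congr_dist (squeeze_zero (fun _ => dist_nonneg)
    (fun k => (hF k).dist_le_mul x (u k)) ?_)
  simpa using ((tendsto_const_nhds (x := x)).dist hu).const_mul (R : ℝ)

variable {F : Type*} [NormedAddCommGroup F] {f : ι → F → ℝ} {φ : F → ℝ}

lemma tendsto_secondDiff (hf : ∀ k, LipschitzWith R (f k))
    (hφ : ∀ x, Filter.Tendsto (fun k => f k x) l (𝓝 (φ x))) {u v : ι → F} {x y : F}
    (hu : Filter.Tendsto u l (𝓝 x)) (hv : Filter.Tendsto v l (𝓝 y)) :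
    Filter.Tendsto (fun k => secondDiff (f k) (u k) (v k)) l (𝓝 (secondDiff φ x y)) :=
  ((tendsto_apply_of_lipschitzWith hf hφ (hu.add hv)).add
    (tendsto_apply_of_lipschitzWith hf hφ (hu.sub hv))).sub
      ((tendsto_apply_of_lipschitzWith hf hφ hu).const_mul 2)

lemma secondDiff_smul_le_of_tendsto [l.NeBot] [NormedSpace ℝ F]
    (hf : ∀ k, LipschitzWith R (f k)) (hφ : ∀ x, Filter.Tendsto (fun k => f k x) l (𝓝 (φ x)))
    {h d : ι → ℝ} {c : ℝ} {e : F} (hpos : ∀ k, 0 < h k) (hh : Filter.Tendsto h l (𝓝 0))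
    (hd : Filter.Tendsto d l (𝓝 c)) (hstep : ∀ k x, secondDiff (f k) x (h k • e) ≤ d k * h k ^ 2)
    (x : F) (t : ℝ) : secondDiff φ x (t • e) ≤ c * t ^ 2 := by
  have habs : secondDiff φ x (t • e) = secondDiff φ x (|t| • e) := by
    rcases abs_choice t with ht | ht <;> rw [ht]
    rw [neg_smul, secondDiff_neg]
  have hm : Filter.Tendsto (fun k => (⌊|t| * (h k)⁻¹⌋₊ : ℝ) * h k) l (𝓝 |t|) := by
    have hinv : Filter.Tendsto (fun k => (h k)⁻¹) l Filter.atTop :=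
      Filter.Tendsto.inv_tendsto_nhdsGT_zero
        (tendsto_nhdsWithin_iff.2 ⟨hh, .of_forall hpos⟩)
    simpa [Function.comp_def] using (tendsto_nat_floor_mul_div_atTop (abs_nonneg t)).comp hinv
  rw [habs, ← sq_abs]
  refine le_of_tendsto_of_tendsto'
    (tendsto_secondDiff hf hφ (tendsto_const_nhds (x := x)) (hm.smul_const e))
    (hd.mul (hm.pow 2)) fun k => ?_
  have := secondDiff_nsmul_le (hstep k) x ⌊|t| * (h k)⁻¹⌋₊
  rw [← Nat.cast_smul_eq_nsmul ℝ, smul_smul] at this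
  linarith

lemma isSubgradientAt_of_tendsto [l.NeBot] [InnerProductSpace ℝ F]
    (hf : ∀ k, LipschitzWith R (f k)) (hφ : ∀ x, Filter.Tendsto (fun k => f k x) l (𝓝 (φ x)))
    {p x : F} {u : ι → F} (hp : ∀ k, IsSubgradientAt (f k) p (u k))
    (hu : Filter.Tendsto u l (𝓝 x)) : IsSubgradientAt φ p x := fun y =>
  le_of_tendsto_of_tendsto' ((tendsto_apply_of_lipschitzWith hf hφ hu).add
    (Filter.Tendsto.inner (𝕜 := ℝ) tendsto_const_nhds (hu.const_sub y))) (hφ y) fun k => hp k y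

end UltraLimit

/-! ### The Laplacian of the limit -/

lemma isLittleO_taylor_two {F G : Type*} [NormedAddCommGroup F] [NormedSpace ℝ F]
    [NormedAddCommGroup G] [NormedSpace ℝ G] {f : F → G} (hf : Differentiable ℝ f) {x : F}
    (hx : DifferentiableAt ℝ (fderiv ℝ f) x) :
    (fun z => f (x + z) - f x - fderiv ℝ f x z - (1 / 2 : ℝ) • fderiv ℝ (fderiv ℝ f) x z z)
      =o[𝓝 0] fun z => ‖z‖ ^ 2 := by
  set B := fderiv ℝ (fderiv ℝ f) x
  rw [Asymptotics.isLittleO_iff]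
  intro η hη
  obtain ⟨r, hr, hB⟩ := Metric.eventually_nhds_iff.1 (hx.hasFDerivAt.isLittleO.def hη)
  filter_upwards [ball_mem_nhds (0 : F) hr] with z hz
  let ψ : ℝ → G := fun s => f (x + s • z) - s • fderiv ℝ f x z - (s ^ 2 / 2) • B z z
  have hψ (s : ℝ) :
      HasDerivAt ψ (fderiv ℝ f (x + s • z) z - fderiv ℝ f x z - s • B z z) s := by
    have hline : HasDerivAt (fun s : ℝ => x + s • z) z s := by
      simpa using ((hasDerivAt_id s).smul_const z).const_add x
    have hsq : HasDerivAt (fun s : ℝ => s ^ 2 / 2) s s := by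
      simpa using ((hasDerivAt_id s).pow 2).div_const 2
    have hlin := (hasDerivAt_id s).smul_const (fderiv ℝ f x z)
    rw [one_smul] at hlin
    exact (((hf _).hasFDerivAt.comp_hasDerivAt s hline).sub hlin).sub (hsq.smul_const (B z z))
  have hbound : ∀ s ∈ Ico (0 : ℝ) 1,
      ‖fderiv ℝ f (x + s • z) z - fderiv ℝ f x z - s • B z z‖ ≤ η * ‖z‖ ^ 2 := by
    intro s hs
    have hsz : ‖s • z‖ ≤ ‖z‖ := by
      rw [norm_smul, Real.norm_of_nonneg hs.1]
      exact mul_le_of_le_one_left (norm_nonneg z) hs.2.le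
    have hBs := hB (y := x + s • z) (by
      simpa [dist_eq_norm] using hsz.trans_lt (mem_ball_zero_iff.1 hz))
    rw [add_sub_cancel_left] at hBs
    calc _ = ‖(fderiv ℝ f (x + s • z) - fderiv ℝ f x - B (s • z)) z‖ := by simp
      _ ≤ η * ‖s • z‖ * ‖z‖ := (ContinuousLinearMap.le_opNorm _ _).trans (by gcongr)
      _ ≤ η * ‖z‖ * ‖z‖ := by gcongr
      _ = η * ‖z‖ ^ 2 := by ring
  have hmean := norm_image_sub_le_of_norm_deriv_le_segment_01'
    (fun s _ => (hψ s).hasDerivWithinAt) hbound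
  rw [norm_pow, norm_norm]
  convert hmean using 2
  simp only [ψ, one_smul, zero_smul, add_zero, one_pow, ne_eq, OfNat.ofNat_ne_zero,
    not_false_eq_true, zero_pow, zero_div, sub_zero]
  abel

lemma secondDiff_quadratic {F : Type*} [NormedAddCommGroup F] [InnerProductSpace ℝ F]
    (L : F →L[ℝ] ℝ) (B : F →L[ℝ] F →L[ℝ] ℝ) (η : ℝ) (z v : F) :
    secondDiff (fun z => L z + 1 / 2 * B z z - η * ‖z‖ ^ 2) z v = B v v - 2 * η * ‖v‖ ^ 2 := by
  have hpar := parallelogram_law_with_norm ℝ z v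
  simp only [secondDiff, map_add, map_sub, _root_.add_apply, _root_.sub_apply]
  linear_combination (-η) * hpar

lemma eventually_add_quadratic_lt {F : Type*} [NormedAddCommGroup F] [NormedSpace ℝ F]
    {φ : F → ℝ} (hφ : Differentiable ℝ φ) {x : F} (hx : DifferentiableAt ℝ (fderiv ℝ φ) x)
    {η : ℝ} (hη : 0 < η) : ∀ᶠ z in 𝓝[≠] 0,
      φ x + (fderiv ℝ φ x z + 1 / 2 * fderiv ℝ (fderiv ℝ φ) x z z - η * ‖z‖ ^ 2) < φ (x + z) := by
  have htaylor := (isLittleO_taylor_two hφ hx).def (half_pos hη)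
  filter_upwards [nhdsWithin_le_nhds htaylor, self_mem_nhdsWithin] with z hz hz0
  rw [Real.norm_eq_abs, norm_pow, norm_norm, smul_eq_mul] at hz
  have := mul_pos hη (pow_pos (norm_pos_iff.2 hz0) 2)
  linarith [(abs_le.1 hz).1]

lemma exists_isMinOn_tendsto {ι X : Type*} [TopologicalSpace X] {l : Ultrafilter ι} {A : Set X}
    (hA : IsCompact A) {G : ι → X → ℝ} {g : X → ℝ} {a : X} (ha : a ∈ A)
    (hG : ∀ k, ContinuousOn (G k) A)
    (hg : ∀ u z, Filter.Tendsto u l (𝓝 z) → Filter.Tendsto (fun k => G k (u k)) l (𝓝 (g z)))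
    (hmin : ∀ z ∈ A, z ≠ a → g a < g z) :
    ∃ u : ι → X, (∀ k, IsMinOn (G k) A (u k)) ∧ Filter.Tendsto u l (𝓝 a) := by
  choose u huA hu using fun k => hA.exists_isMinOn ⟨a, ha⟩ (hG k)
  obtain ⟨z, hzA, hz⟩ := exists_mem_tendsto_of_isCompact hA l huA
  have hle : g z ≤ g a :=
    le_of_tendsto_of_tendsto' (hg u z hz) (hg _ a tendsto_const_nhds) fun k => hu k ha
  obtain rfl : z = a := by
    by_contra hne
    exact hle.not_gt (hmin z hzA hne)
  exact ⟨u, hu, hz⟩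

section Viscosity

variable {ι : Type*} {l : Ultrafilter ι} {R : NNReal}

-- Minimise `f k (x + ·) - P` over a small ball: the minimisers tend to the strict minimum `0`.
lemma eventually_exists_secondDiff_le {F : Type*} [NormedAddCommGroup F] [ProperSpace F]
    {f : ι → F → ℝ} {φ : F → ℝ} (hf : ∀ k, LipschitzWith R (f k))
    (hφ : ∀ x, Filter.Tendsto (fun k => f k x) l (𝓝 (φ x))) {P : F → ℝ} (hP : Continuous P)
    {x : F} (hx : ∀ᶠ z in 𝓝[≠] 0, φ x - P 0 < φ (x + z) - P z) {h : ι → ℝ}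
    (hh : Filter.Tendsto h l (𝓝 0)) :
    ∀ᶠ k in l, ∃ z, ∀ v, ‖v‖ ≤ h k → secondDiff P z v ≤ secondDiff (f k) (x + z) v := by
  obtain ⟨r, hr, hxr⟩ := Metric.nhds_basis_closedBall.eventually_iff.1
    (eventually_nhdsWithin_iff.1 hx)
  obtain ⟨u, hu, hu0⟩ := exists_isMinOn_tendsto (l := l) (G := fun k z => f k (x + z) - P z)
    (g := fun z => φ (x + z) - P z) (isCompact_closedBall (0 : F) r) (mem_closedBall_self hr.le)
    (fun k => ((hf k).continuous.comp (continuous_const_add x)).continuousOn.sub hP.continuousOn)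
    (fun u z hu => (tendsto_apply_of_lipschitzWith hf hφ (hu.const_add x)).sub
      ((hP.tendsto z).comp hu))
    (fun z hz hz0 => by simpa using hxr hz hz0)
  have hsmall : ∀ᶠ k in l, ‖u k‖ + h k < r := by
    have : Filter.Tendsto (fun k => ‖u k‖ + h k) l (𝓝 0) := by simpa using hu0.norm.add hh
    exact this.eventually (gt_mem_nhds hr)
  filter_upwards [hsmall] with k hk
  refine ⟨u k, fun v hv => ?_⟩
  have hmin := secondDiff_nonneg_of_isMinOn (hu k) (v := v)
    (mem_closedBall_zero_iff.2 ((norm_add_le _ _).trans (by linarith)))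
    (mem_closedBall_zero_iff.2 ((norm_sub_le _ _).trans (by linarith)))
  simp only [secondDiff, ← add_assoc, ← add_sub_assoc] at hmin ⊢
  linarith

variable {n : ℕ}

lemma discreteLaplacian_gridStep (h : ℝ) (φ : Euc n → ℝ) (x : Euc n) :
    discreteLaplacian (gridStep h) φ x =
      ∑ i, secondDiff φ x (h • EuclideanSpace.single i 1) := by
  rw [discreteLaplacian, Fintype.sum_sum_type, ← Finset.sum_add_distrib]
  refine Finset.sum_congr rfl fun i _ => ?_
  simp only [gridStep, Sum.elim_inl, Sum.elim_inr, secondDiff, ← sub_eq_add_neg]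
  ring

lemma discreteLaplacian_gridStep_quadratic (L : Euc n →L[ℝ] ℝ) (B : Euc n →L[ℝ] Euc n →L[ℝ] ℝ)
    (η h : ℝ) (z : Euc n) :
    discreteLaplacian (gridStep h) (fun z => L z + 1 / 2 * B z z - η * ‖z‖ ^ 2) z =
      (∑ i, B (EuclideanSpace.single i 1) (EuclideanSpace.single i 1) - n * (2 * η)) * h ^ 2 := by
  have hterm (i : Fin n) : secondDiff (fun z => L z + 1 / 2 * B z z - η * ‖z‖ ^ 2) z
      (h • EuclideanSpace.single i 1) =
        (B (EuclideanSpace.single i 1) (EuclideanSpace.single i 1) - 2 * η) * h ^ 2 := by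
    rw [secondDiff_quadratic, norm_smul, PiLp.norm_single, norm_one, mul_one, Real.norm_eq_abs,
      sq_abs, map_smul, map_smul, _root_.smul_apply, smul_eq_mul, smul_eq_mul]
    ring
  rw [discreteLaplacian_gridStep]
  simp only [hterm]
  rw [← Finset.sum_mul, Finset.sum_sub_distrib]
  simp

lemma lapl_le_of_tendsto {f : ι → Euc n → ℝ} {φ : Euc n → ℝ} (hf : ∀ k, LipschitzWith R (f k))
    (hφ : ∀ x, Filter.Tendsto (fun k => f k x) l (𝓝 (φ x))) {h d : ι → ℝ} {c : ℝ}
    (hpos : ∀ k, 0 < h k) (hh : Filter.Tendsto h l (𝓝 0)) (hd : Filter.Tendsto d l (𝓝 c))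
    (hlap : ∀ k x, discreteLaplacian (gridStep (h k)) (f k) x ≤ d k * h k ^ 2)
    (hdiff : Differentiable ℝ φ) {x : Euc n} (hx : DifferentiableAt ℝ (fderiv ℝ φ) x) :
    lapl φ x ≤ c := by
  have hη (η : ℝ) (hη : 0 < η) : lapl φ x - n * (2 * η) ≤ c := by
    let P : Euc n → ℝ := fun z =>
      fderiv ℝ φ x z + 1 / 2 * fderiv ℝ (fderiv ℝ φ) x z z - η * ‖z‖ ^ 2
    have hP : Continuous P := by fun_prop
    have htouch : ∀ᶠ z in 𝓝[≠] 0, φ x - P 0 < φ (x + z) - P z := by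
      filter_upwards [eventually_add_quadratic_lt hdiff hx hη] with z hz
      have hP0 : P 0 = 0 := by simp [P]
      rw [hP0, sub_zero, lt_sub_iff_add_lt]
      exact hz
    refine ge_of_tendsto hd ?_
    filter_upwards [eventually_exists_secondDiff_le hf hφ hP htouch hh] with k ⟨z, hz⟩
    refine le_of_mul_le_mul_right ?_ (pow_pos (hpos k) 2)
    calc (lapl φ x - n * (2 * η)) * h k ^ 2 = discreteLaplacian (gridStep (h k)) P z :=
          (discreteLaplacian_gridStep_quadratic _ _ _ _ _).symm
      _ ≤ discreteLaplacian (gridStep (h k)) (f k) (x + z) := by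
          simp only [discreteLaplacian_gridStep]
          refine Finset.sum_le_sum fun i _ => hz _ ?_
          simp [norm_smul, abs_of_pos (hpos k)]
      _ ≤ d k * h k ^ 2 := hlap k (x + z)
  refine le_of_tendsto (f := fun η : ℝ => lapl φ x - n * (2 * η)) (x := 𝓝[>] 0) ?_
    (eventually_mem_nhdsWithin.mono hη)
  exact (Continuous.tendsto' (by fun_prop) 0 _ (by simp)).mono_left nhdsWithin_le_nhds

end Viscosity

/-! ### Limits of discrete couplings -/

section DiscreteCouplingLimit

variable {n : ℕ} {J : Type*} [Fintype J] {K A A' : Set (Euc n)} {s : J → Euc n} {κ : ℝ}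
  {φ : Euc n → ℝ}

lemma IsDiscreteCoupling.mono (hφ : IsDiscreteCoupling K A s κ φ) (hA : A ⊆ A') :
    IsDiscreteCoupling K A' s κ φ where
  __ := hφ
  exists_isSubgradientAt p hp := (hφ.exists_isSubgradientAt p hp).imp fun _ h => ⟨hA h.1, h.2⟩

lemma IsDiscreteCoupling.sub_const (hφ : IsDiscreteCoupling K A s κ φ) (a : ℝ) :
    IsDiscreteCoupling K A s κ fun x => φ x - a where
  convexOn := (hφ.convexOn.add_const (-a)).congr fun x _ => (sub_eq_add_neg (φ x) a).symm
  add_le x v := by linarith [hφ.add_le x v]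
  exists_isSubgradientAt p hp := by
    obtain ⟨y, hy, hpy⟩ := hφ.exists_isSubgradientAt p hp
    exact ⟨y, hy, fun x => by linarith [hpy x]⟩
  discreteLaplacian_le x := by simpa [discreteLaplacian] using hφ.discreteLaplacian_le x

lemma secondDiff_le_discreteLaplacian_gridStep (hφ : ConvexOn ℝ univ φ) (h : ℝ) (x : Euc n)
    (i : Fin n) : secondDiff φ x (h • EuclideanSpace.single i 1) ≤
      discreteLaplacian (gridStep h) φ x := by
  rw [discreteLaplacian_gridStep]
  exact Finset.single_le_sum (f := fun i => secondDiff φ x (h • EuclideanSpace.single i 1))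
    (fun i _ => secondDiff_nonneg hφ _ _) (Finset.mem_univ i)

lemma exists_forall_tendsto_isDiscreteCoupling {ι : Type*} (l : Ultrafilter ι) (hK : IsCompact K)
    (hne : K.Nonempty) {s : ι → J → Euc n} {κ : ι → ℝ} {F : ι → Euc n → ℝ}
    (hF : ∀ k, IsDiscreteCoupling K A (s k) (κ k) (F k)) :
    ∃ (R : NNReal) (f : ι → Euc n → ℝ) (φ : Euc n → ℝ),
      (∀ k, IsDiscreteCoupling K A (s k) (κ k) (f k)) ∧ (∀ k, LipschitzWith R (f k)) ∧
      ∀ x, Filter.Tendsto (fun k => f k x) l (𝓝 (φ x)) := by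
  obtain ⟨R, hR⟩ := exists_forall_lipschitzWith_of_le_add_anisoNorm hK hne
  have hf (k : ι) := (hF k).sub_const (F k 0)
  have hlip (k : ι) := hR (fun x => F k x - F k 0) (hf k).add_le
  obtain ⟨φ, hφ⟩ := exists_forall_tendsto_of_lipschitzWith l hlip (x₀ := 0) fun k => sub_self _
  exact ⟨R, _, φ, hf, hlip, hφ⟩

lemma secondDiff_le_of_tendsto_isDiscreteCoupling {ι : Type*} {l : Ultrafilter ι} {R : NNReal}
    {f : ι → Euc n → ℝ} {h d : ι → ℝ} {c : ℝ}
    (hf : ∀ k, IsDiscreteCoupling K A (gridStep (h k)) (d k * h k ^ 2) (f k))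
    (hlip : ∀ k, LipschitzWith R (f k)) (hφ : ∀ x, Filter.Tendsto (fun k => f k x) l (𝓝 (φ x)))
    (hpos : ∀ k, 0 < h k) (hh : Filter.Tendsto h l (𝓝 0)) (hd : Filter.Tendsto d l (𝓝 c))
    (x v : Euc n) : secondDiff φ x v ≤ n * c * ‖v‖ ^ 2 := by
  have hconv := convexOn_of_tendsto convex_univ (fun k => (hf k).convexOn) hφ
  have hstep (i : Fin n) (k : ι) (x : Euc n) :
      secondDiff (f k) x (h k • EuclideanSpace.single i 1) ≤ d k * h k ^ 2 :=
    (secondDiff_le_discreteLaplacian_gridStep (hf k).convexOn _ _ _).trans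
      ((hf k).discreteLaplacian_le x)
  have := secondDiff_le_of_orthonormalBasis (EuclideanSpace.basisFun (Fin n) ℝ) hconv
    (c := c) (x := x) (fun i t => by
      rw [EuclideanSpace.basisFun_apply]
      exact secondDiff_smul_le_of_tendsto hlip hφ hpos hh hd (hstep i) x t) v
  rwa [Fintype.card_fin] at this

theorem exists_convexOn_lapl_le_of_isDiscreteCoupling (hK : IsCompact K) (hcv : Convex ℝ K)
    (hne : K.Nonempty) (hA : IsCompact A) {F : ℕ → Euc n → ℝ} {h d : ℕ → ℝ} {c : ℝ}
    (hF : ∀ k, IsDiscreteCoupling K A (gridStep (h k)) (d k * h k ^ 2) (F k))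
    (hpos : ∀ k, 0 < h k) (hh : Filter.Tendsto h Filter.atTop (𝓝 0))
    (hd : Filter.Tendsto d Filter.atTop (𝓝 c)) :
    ∃ φ : Euc n → ℝ, ConvexOn ℝ univ φ ∧ ContDiff ℝ 1 φ ∧
      (∃ L : NNReal, LipschitzWith L (fun x => gradient φ x)) ∧
      (fun x => gradient φ x) '' univ = K ∧ (fun x => gradient φ x) '' A = K ∧
      ∀ᵐ x ∂(volume : Measure (Euc n)),
        DifferentiableAt ℝ (fderiv ℝ φ) x ∧ lapl φ x ≤ c := by
  let l : Ultrafilter ℕ := Filter.hyperfilter ℕ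
  have hl : (l : Filter ℕ) ≤ Filter.atTop := Nat.hyperfilter_le_atTop
  replace hh := hh.mono_left hl
  replace hd := hd.mono_left hl
  obtain ⟨R, f, φ, hf, hlip, hφ⟩ := exists_forall_tendsto_isDiscreteCoupling l hK hne hF
  have hconv : ConvexOn ℝ univ φ := convexOn_of_tendsto convex_univ (fun k => (hf k).convexOn) hφ
  have hslope (x v : Euc n) : φ (x + v) ≤ φ x + anisoNorm K v :=
    le_of_tendsto_of_tendsto' (hφ _) ((hφ x).add_const _) fun k => (hf k).add_le x v
  have hcont : Continuous φ := by
    obtain ⟨L, hL⟩ := exists_forall_lipschitzWith_of_le_add_anisoNorm hK hne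
    exact (hL φ hslope).continuous
  have hM := secondDiff_le_of_tendsto_isDiscreteCoupling hf hlip hφ hpos hh hd
  have hC1 := contDiff_one_of_secondDiff_le hconv hcont hM
  have hLip := lipschitzWith_gradient hconv hcont hM
  have hmem (x : Euc n) : gradient φ x ∈ K :=
    mem_of_isSubgradientAt hK hcv hne hslope (isSubgradientAt_gradient hconv hcont hM x)
  have hsurj : ∀ p ∈ K, ∃ y ∈ A, gradient φ y = p := fun p hp => by
    choose u huA hu using fun k => (hf k).exists_isSubgradientAt p hp
    obtain ⟨y, hy, hlim⟩ := exists_mem_tendsto_of_isCompact hA l huA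
    exact ⟨y, hy, ((isSubgradientAt_of_tendsto hlip hφ hu hlim).hasGradientAt hM).gradient⟩
  refine ⟨φ, hconv, hC1, ⟨_, hLip⟩, ?_, ?_, ?_⟩
  · exact (image_subset_iff.2 fun x _ => hmem x).antisymm fun p hp =>
      (hsurj p hp).imp fun y hy => ⟨mem_univ y, hy.2⟩
  · exact (image_subset_iff.2 fun x _ => hmem x).antisymm hsurj
  · filter_upwards [(lipschitzWith_fderiv_of_gradient hLip).ae_differentiableAt (μ := volume)]
      with x hx
    exact ⟨hx, lapl_le_of_tendsto hlip hφ hpos hh hd (fun k => (hf k).discreteLaplacian_le)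
      (hC1.differentiable one_ne_zero) hx⟩

end DiscreteCouplingLimit

/-! ### Slicing along a direction -/

section Slicing

variable {m : ℕ} (b : OrthonormalBasis (Fin (m + 1)) ℝ (Euc (m + 1)))

/-- The orthogonal projection along `b 0`, in the coordinates given by the other basis vectors.
Its target carries the sup norm, for which `μH[m]` is the Lebesgue measure. -/
def tailCoords (x : Euc (m + 1)) : Fin m → ℝ := fun j => ⟪b j.succ, x⟫

/-- The coordinates of the basis `b`, with the first one split off. -/
def sliceEquiv : ℝ × (Fin m → ℝ) ≃ᵐ Euc (m + 1) :=
  (MeasurableEquiv.piFinSuccAbove (fun _ => ℝ) 0).symm.trans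
    ((MeasurableEquiv.toLp 2 _).trans b.measurableEquiv.symm)

lemma measurePreserving_sliceEquiv : MeasurePreserving (sliceEquiv b) :=
  b.measurePreserving_measurableEquiv.symm.comp
    ((PiLp.volume_preserving_toLp (Fin (m + 1))).comp
      (volume_preserving_piFinSuccAbove (fun _ : Fin (m + 1) => ℝ) 0).symm)

lemma sliceEquiv_apply (t : ℝ) (y : Fin m → ℝ) :
    sliceEquiv b (t, y) = ∑ j, y j • b j.succ + t • b 0 := by
  have : sliceEquiv b (t, y) = b.repr.symm (WithLp.toLp 2 (Fin.cons t y)) := by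
    simp [sliceEquiv, MeasurableEquiv.piFinSuccAbove, OrthonormalBasis.measurableEquiv]
    rfl
  rw [this, ← b.sum_repr_symm, Fin.sum_univ_succ]
  simp [add_comm]

lemma tailCoords_sliceEquiv (t : ℝ) (y : Fin m → ℝ) : tailCoords b (sliceEquiv b (t, y)) = y := by
  ext j
  have hsucc (i : Fin m) : ⟪b j.succ, b i.succ⟫ = if i = j then 1 else 0 := by
    rw [b.inner_eq_ite]
    simp [eq_comm]
  have hzero : ⟪b j.succ, b 0⟫ = 0 := by simp [b.inner_eq_ite]
  simp [tailCoords, sliceEquiv_apply, inner_add_right, inner_sum, inner_smul_right, hsucc, hzero]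

lemma abs_inner_sub_le_dist_tailCoords (x y : Euc (m + 1)) (j : Fin m) :
    |⟪b j.succ, x - y⟫| ≤ dist (tailCoords b x) (tailCoords b y) := by
  rw [inner_sub_right, ← Real.dist_eq]
  exact dist_le_pi_dist (tailCoords b x) (tailCoords b y) j

lemma lipschitzWith_tailCoords : LipschitzWith 1 (tailCoords b) :=
  LipschitzWith.of_dist_le_mul fun x y => by
    rw [NNReal.coe_one, one_mul, dist_pi_le_iff dist_nonneg]
    intro j
    rw [tailCoords, tailCoords, Real.dist_eq, ← inner_sub_right, dist_eq_norm]
    simpa using abs_real_inner_le_norm (b j.succ) (x - y)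

lemma hausdorffMeasure_pi_fin : (μH[(m : ℝ)] : Measure (Fin m → ℝ)) = volume := by
  simpa using hausdorffMeasure_pi_real (ι := Fin m)

lemma volume_image_tailCoords_le (A : Set (Euc (m + 1))) :
    volume (tailCoords b '' A) ≤ μH[(m : ℝ)] A := by
  simpa [hausdorffMeasure_pi_fin] using
    (lipschitzWith_tailCoords b).hausdorffMeasure_image_le (Nat.cast_nonneg m) A

lemma exists_orthonormalBasis_norm_smul_eq {g : Euc (m + 1)} (hg : g ≠ 0) :
    ∃ b : OrthonormalBasis (Fin (m + 1)) ℝ (Euc (m + 1)), ‖g‖ • b 0 = g := by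
  have hg0 : ‖g‖ ≠ 0 := norm_ne_zero_iff.2 hg
  have hunit : ‖‖g‖⁻¹ • g‖ = 1 := by rw [norm_smul, norm_inv, norm_norm, inv_mul_cancel₀ hg0]
  obtain ⟨b, hb⟩ := Orthonormal.exists_orthonormalBasis_extension_of_card_eq (𝕜 := ℝ)
    (ι := Fin (m + 1)) (by simp) (v := fun _ => ‖g‖⁻¹ • g) (s := {0})
    (orthonormal_iff_ite.2 fun i j => by simp [hunit, Subsingleton.elim i j])
  exact ⟨b, by rw [hb 0 rfl, smul_inv_smul₀ hg0]⟩

end Slicing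

/-! ### Level sets have locally finite Hausdorff measure -/

section LevelSet

variable {m : ℕ} {f : Euc (m + 1) → ℝ}

lemma norm_sub_le_of_abs_inner_le (b : OrthonormalBasis (Fin (m + 1)) ℝ (Euc (m + 1)))
    {x y : Euc (m + 1)} (hxy : |⟪b 0, x - y⟫| ≤ 1 / 2 * ‖x - y‖) :
    ‖x - y‖ ≤ 2 * (m + 1) * dist (tailCoords b x) (tailCoords b y) := by
  set d := dist (tailCoords b x) (tailCoords b y)
  have htail : ∑ j : Fin m, ⟪b j.succ, x - y⟫ ^ 2 ≤ m * d ^ 2 := by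
    calc ∑ j : Fin m, ⟪b j.succ, x - y⟫ ^ 2 ≤ ∑ _j : Fin m, d ^ 2 :=
          Finset.sum_le_sum fun j _ => sq_le_sq.2 <|
            (abs_inner_sub_le_dist_tailCoords b x y j).trans (le_abs_self d)
      _ = m * d ^ 2 := by simp
  have hhead : ⟪b 0, x - y⟫ ^ 2 ≤ (1 / 2 * ‖x - y‖) ^ 2 :=
    sq_le_sq' (neg_le_of_abs_le hxy) (le_of_abs_le hxy)
  have hsum := b.sum_sq_inner_right (x - y)
  rw [Fin.sum_univ_succ] at hsum
  have hm : (m : ℝ) * d ^ 2 ≤ (m + 1) ^ 2 * d ^ 2 := by gcongr; nlinarith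
  refine le_of_sq_le_sq ?_ (by positivity)
  calc ‖x - y‖ ^ 2 ≤ 4 * (m * d ^ 2) := by linarith [sq_nonneg ‖x - y‖]
    _ ≤ 4 * ((m + 1) ^ 2 * d ^ 2) := by linarith
    _ = (2 * (m + 1) * d) ^ 2 := by ring

lemma hausdorffMeasure_lt_top_of_abs_inner_le
    (b : OrthonormalBasis (Fin (m + 1)) ℝ (Euc (m + 1))) {A : Set (Euc (m + 1))}
    (hA : Bornology.IsBounded A) (h : ∀ x ∈ A, ∀ y ∈ A, |⟪b 0, x - y⟫| ≤ 1 / 2 * ‖x - y‖) :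
    μH[(m : ℝ)] A < ⊤ := by
  have hanti : AntilipschitzWith (2 * (m + 1)) fun x : A => tailCoords b x :=
    AntilipschitzWith.of_le_mul_dist fun x y => by
      simpa [Subtype.dist_eq, dist_eq_norm] using
        norm_sub_le_of_abs_inner_le b (h x x.2 y y.2)
  have hle := hanti.le_hausdorffMeasure_image (d := (m : ℝ)) (Nat.cast_nonneg m) univ
  have hA' := (isometry_subtype_coe (s := A)).hausdorffMeasure_image (d := (m : ℝ))
    (Or.inl (Nat.cast_nonneg m)) univ
  rw [image_univ, Subtype.range_coe] at hA'
  have himage : (fun x : A => tailCoords b x) '' univ = tailCoords b '' A := by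
    rw [image_univ, image_eq_range]
  rw [hausdorffMeasure_pi_fin, himage] at hle
  rw [hA']
  exact hle.trans_lt (ENNReal.mul_lt_top
    (ENNReal.rpow_lt_top_of_nonneg (Nat.cast_nonneg m) ENNReal.coe_ne_top)
    ((lipschitzWith_tailCoords b).isBounded_image hA).measure_lt_top)

lemma finiteAtFilter_hausdorffMeasure_levelSet {x₀ : Euc (m + 1)}
    (hf : HasStrictFDerivAt f (fderiv ℝ f x₀) x₀) (hg : gradient f x₀ ≠ 0) (a : ℝ) :
    (μH[(m : ℝ)] : Measure (Euc (m + 1))).FiniteAtFilter (𝓝[f ⁻¹' {a}] x₀) := by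
  set g := gradient f x₀ with hgdef
  have hg0 : 0 < ‖g‖ := norm_pos_iff.2 hg
  obtain ⟨b, hb⟩ := exists_orthonormalBasis_norm_smul_eq hg
  have hstrict := hf.isLittleO.def (c := 1 / 2 * ‖g‖) (by positivity)
  rw [nhds_prod_eq] at hstrict
  obtain ⟨U, hU, hUx⟩ := Filter.eventually_prod_self_iff'.1 hstrict
  refine ⟨U ∩ ball x₀ 1 ∩ f ⁻¹' {a}, Filter.inter_mem (mem_nhdsWithin_of_mem_nhds
    (Filter.inter_mem hU (ball_mem_nhds x₀ one_pos))) self_mem_nhdsWithin, ?_⟩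
  refine hausdorffMeasure_lt_top_of_abs_inner_le b
    (isBounded_ball.subset (inter_subset_left.trans inter_subset_right)) ?_
  rintro x ⟨⟨hx, -⟩, hfx : f x = a⟩ y ⟨⟨hy, -⟩, hfy : f y = a⟩
  have hxy := hUx x hx y hy
  have hfd : fderiv ℝ f x₀ (x - y) = ‖g‖ * ⟪b 0, x - y⟫ := by
    rw [← real_inner_smul_left, hb, hgdef, gradient, InnerProductSpace.toDual_symm_apply]
  simp only at hxy
  rw [hfx, hfy, sub_self, zero_sub, norm_neg, hfd, Real.norm_eq_abs, abs_mul, abs_of_pos hg0] at hxy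
  refine le_of_mul_le_mul_left ?_ hg0
  linarith

end LevelSet

/-! ### Integration over lines -/

lemma setLIntegral_line_neg_deriv_mul_inner_le_one {n : ℕ} {f : Euc n → ℝ}
    (hf : Differentiable ℝ f) {X : ℝ → ℝ} (hX : Differentiable ℝ X) (hanti : Antitone X)
    (hX01 : ∀ s, X s ∈ Icc (0 : ℝ) 1) {B D : Set (Euc n)} (hB : Convex ℝ B) (hDB : D ⊆ B)
    (hD : MeasurableSet D) {v : Euc n} (hv : ∀ x ∈ B, 0 ≤ ⟪gradient f x, v⟫) (a : Euc n) :
    ∫⁻ t in (fun t : ℝ => a + t • v) ⁻¹' D,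
      ENNReal.ofReal (-deriv X (f (a + t • v)) * ⟪gradient f (a + t • v), v⟫) ≤ 1 := by
  set ℓ : ℝ → Euc n := fun t => a + t • v
  have hℓ (t : ℝ) : HasDerivAt (f ∘ ℓ) ⟪gradient f (ℓ t), v⟫ t := by
    have hline : HasDerivAt ℓ v t := by
      simpa [ℓ] using ((hasDerivAt_id t).smul_const v).const_add a
    simpa [gradient, InnerProductSpace.toDual_symm_apply] using
      (hf (ℓ t)).hasFDerivAt.comp_hasDerivAt t hline
  have hconv : Convex ℝ (ℓ ⁻¹' B) := by
    have : ℓ = AffineMap.lineMap a (a + v) := by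
      ext1 t
      simp [ℓ, AffineMap.lineMap_apply, add_comm]
    rw [this]
    exact hB.affine_preimage _
  have hmono : MonotoneOn (f ∘ ℓ) (ℓ ⁻¹' B) :=
    monotoneOn_of_deriv_nonneg hconv (fun t _ => (hℓ t).continuousAt.continuousWithinAt)
      (fun t _ => (hℓ t).differentiableAt.differentiableWithinAt) fun t ht => by
        rw [(hℓ t).deriv]
        exact hv _ (interior_subset (s := ℓ ⁻¹' B) ht)
  have hderiv (t : ℝ) : HasDerivAt (X ∘ f ∘ ℓ) (deriv X (f (ℓ t)) * ⟪gradient f (ℓ t), v⟫) t :=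
    (hX _).hasDerivAt.comp t (hℓ t)
  have hvol := lintegral_deriv_eq_volume_image_of_antitoneOn
    (hD.preimage (by fun_prop : Measurable ℓ)) (fun t _ => (hderiv t).hasDerivWithinAt)
    ((hanti.comp_monotoneOn hmono).mono (preimage_mono hDB))
  calc _ = volume ((X ∘ f ∘ ℓ) '' (ℓ ⁻¹' D)) := by simp only [neg_mul, ← hvol, ℓ]
    _ ≤ volume (Icc (0 : ℝ) 1) := measure_mono (image_subset_iff.2 fun t _ => hX01 _)
    _ = 1 := by simp

lemma lintegral_eq_lintegral_sliceEquiv {m : ℕ}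
    (b : OrthonormalBasis (Fin (m + 1)) ℝ (Euc (m + 1))) {g : Euc (m + 1) → ℝ≥0∞}
    (hg : Measurable g) : ∫⁻ x, g x = ∫⁻ y, ∫⁻ t, g (sliceEquiv b (t, y)) := by
  rw [← (measurePreserving_sliceEquiv b).lintegral_comp hg, Measure.volume_eq_prod]
  exact lintegral_prod_symm' _ (hg.comp (sliceEquiv b).measurable)

lemma setLIntegral_neg_deriv_mul_inner_le {m : ℕ}
    (b : OrthonormalBasis (Fin (m + 1)) ℝ (Euc (m + 1))) {f : Euc (m + 1) → ℝ}
    (hf : ContDiff ℝ 1 f) {X : ℝ → ℝ} (hX : ContDiff ℝ 1 X) (hanti : Antitone X)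
    (hX01 : ∀ s, X s ∈ Icc (0 : ℝ) 1) {B D : Set (Euc (m + 1))} (hB : Convex ℝ B) (hDB : D ⊆ B)
    (hD : IsCompact D) (hv : ∀ x ∈ B, 0 ≤ ⟪gradient f x, b 0⟫) :
    ∫⁻ x in D, ENNReal.ofReal (-deriv X (f x) * ⟪gradient f x, b 0⟫) ≤
      volume (tailCoords b '' D) := by
  set g : Euc (m + 1) → ℝ≥0∞ := fun x => ENNReal.ofReal (-deriv X (f x) * ⟪gradient f x, b 0⟫)
  have hg : Measurable g := by
    have := continuous_gradient hf
    have := hX.continuous_deriv le_rfl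
    have := hf.continuous
    exact (Continuous.measurable (by fun_prop)).ennreal_ofReal
  have hslice (y : Fin m → ℝ) : ∫⁻ t, D.indicator g (sliceEquiv b (t, y)) ≤
      (tailCoords b '' D).indicator 1 y := by
    by_cases hy : y ∈ tailCoords b '' D
    · rw [indicator_of_mem hy, Pi.one_apply]
      have hline := setLIntegral_line_neg_deriv_mul_inner_le_one (hf.differentiable one_ne_zero)
        (hX.differentiable one_ne_zero) hanti hX01 hB hDB hD.measurableSet hv
        (∑ j, y j • b j.succ)
      rw [← lintegral_indicator (hD.measurableSet.preimage (by fun_prop))] at hline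
      simp_rw [sliceEquiv_apply]
      exact hline
    · rw [indicator_of_notMem hy, nonpos_iff_eq_zero]
      refine (lintegral_congr fun t => indicator_of_notMem (fun ht => hy ?_) g).trans lintegral_zero
      exact ⟨_, ht, tailCoords_sliceEquiv b t y⟩
  have himage : MeasurableSet (tailCoords b '' D) :=
    (hD.image (lipschitzWith_tailCoords b).continuous).measurableSet
  calc ∫⁻ x in D, g x = ∫⁻ y, ∫⁻ t, D.indicator g (sliceEquiv b (t, y)) := by
        rw [← lintegral_indicator hD.measurableSet,
          lintegral_eq_lintegral_sliceEquiv b (hg.indicator hD.measurableSet)]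
    _ ≤ ∫⁻ y, (tailCoords b '' D).indicator 1 y := lintegral_mono hslice
    _ = volume (tailCoords b '' D) := lintegral_indicator_one himage

/-! ### Boundary layers -/

/-- A cutoff in the variable `s = f x`: it is `1` for `s ≤ -δ` and `0` for `s ≥ 0`. -/
def cutoffProfile (δ s : ℝ) : ℝ := Real.smoothTransition (-s / δ)

/-- The density, concentrated on `[-δ, 0]` and of total mass one, by which the squared cutoff
decreases. -/
def layerWeight (δ s : ℝ) : ℝ := -deriv (fun s => cutoffProfile δ s ^ 2) s

section CutoffProfile

variable {δ s : ℝ}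

lemma contDiff_cutoffProfile (δ : ℝ) : ContDiff ℝ 1 (cutoffProfile δ) :=
  Real.smoothTransition.contDiff.comp (contDiff_neg.div_const δ)

lemma cutoffProfile_nonneg (δ s : ℝ) : 0 ≤ cutoffProfile δ s := Real.smoothTransition.nonneg _

lemma cutoffProfile_le_one (δ s : ℝ) : cutoffProfile δ s ≤ 1 := Real.smoothTransition.le_one _

lemma cutoffProfile_of_nonneg (hδ : 0 < δ) (hs : 0 ≤ s) : cutoffProfile δ s = 0 :=
  Real.smoothTransition.zero_of_nonpos
    (div_nonpos_of_nonpos_of_nonneg (neg_nonpos.2 hs) hδ.le)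

lemma cutoffProfile_of_le_neg (hδ : 0 < δ) (hs : s ≤ -δ) : cutoffProfile δ s = 1 :=
  Real.smoothTransition.one_of_one_le ((one_le_div₀ hδ).2 (le_neg.1 hs))

lemma antitone_cutoffProfile_sq (hδ : 0 < δ) : Antitone fun s => cutoffProfile δ s ^ 2 :=
  fun _ _ hst => pow_le_pow_left₀ (cutoffProfile_nonneg _ _)
    (Real.smoothTransition.monotone (by gcongr)) 2

lemma layerWeight_nonneg (hδ : 0 < δ) (s : ℝ) : 0 ≤ layerWeight δ s :=
  neg_nonneg.2 (antitone_cutoffProfile_sq hδ).deriv_nonpos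

lemma layerWeight_eq (δ s : ℝ) :
    layerWeight δ s = -(2 * cutoffProfile δ s * deriv (cutoffProfile δ) s) := by
  rw [layerWeight, (((contDiff_cutoffProfile δ).differentiable one_ne_zero s).hasDerivAt.fun_pow
    2).deriv]
  norm_num

lemma layerWeight_eq_zero (hδ : 0 < δ) (hs : s ∉ Icc (-δ) 0) : layerWeight δ s = 0 := by
  have hconst : ∃ a, (fun s => cutoffProfile δ s ^ 2) =ᶠ[𝓝 s] fun _ => a := by
    rcases lt_or_ge s (-δ) with hlt | hge
    · refine ⟨1, Filter.mem_of_superset (Iio_mem_nhds hlt) fun t ht => ?_⟩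
      simp [cutoffProfile_of_le_neg hδ (le_of_lt ht)]
    · refine ⟨0, Filter.mem_of_superset
        (Ioi_mem_nhds (lt_of_not_ge fun h => hs ⟨hge, h⟩)) fun t ht => ?_⟩
      simp [cutoffProfile_of_nonneg hδ (le_of_lt ht)]
  obtain ⟨a, ha⟩ := hconst
  simp [layerWeight, ha.deriv_eq]

lemma continuous_layerWeight (δ : ℝ) : Continuous (layerWeight δ) :=
  (((contDiff_cutoffProfile δ).pow 2).continuous_deriv le_rfl).neg

end CutoffProfile

lemma eventually_inter_preimage_Icc_subset {α : Type*} [TopologicalSpace α] {f : α → ℝ}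
    (hf : Continuous f) {D U : Set α} (hD : IsCompact D) (hU : IsOpen U)
    (hDU : D ∩ f ⁻¹' {0} ⊆ U) : ∀ᶠ δ : ℝ in 𝓝[>] 0, D ∩ f ⁻¹' Icc (-δ) 0 ⊆ U := by
  have hclosed : IsClosed (f '' (D \ U)) := ((hD.diff hU).image hf).isClosed
  have h0 : (0 : ℝ) ∉ f '' (D \ U) := by
    rintro ⟨x, ⟨hxD, hxU⟩, hfx⟩
    exact hxU (hDU ⟨hxD, hfx⟩)
  obtain ⟨ε, hε, hball⟩ := Metric.isOpen_iff.1 hclosed.isOpen_compl 0 h0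
  filter_upwards [Ioo_mem_nhdsGT hε] with δ hδ x hx
  by_contra hxU
  refine hball ?_ ⟨x, ⟨hx.1, hxU⟩, rfl⟩
  rw [mem_ball_zero_iff, Real.norm_eq_abs, abs_of_nonpos hx.2.2]
  linarith [hx.2.1, hδ.2]

lemma setLIntegral_inter_layer {n : ℕ} {f : Euc n → ℝ} (hf : Continuous f) (ψ : Euc n → ℝ)
    {δ : ℝ} (hδ : 0 < δ) (D : Set (Euc n)) :
    ∫⁻ x in D ∩ f ⁻¹' Icc (-δ) 0, ENNReal.ofReal (layerWeight δ (f x) * ψ x) =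
      ∫⁻ x in D, ENNReal.ofReal (layerWeight δ (f x) * ψ x) := by
  rw [inter_comm, ← Measure.restrict_restrict (isClosed_Icc.preimage hf).measurableSet]
  refine setLIntegral_eq_of_support_subset fun x hx => ?_
  by_contra hxδ
  exact hx (by simp [layerWeight_eq_zero hδ hxδ])

/-- The integrals of `ψ` over `D` against the layer densities `layerWeight δ ∘ f` have upper limit
at most `a` as the layer `{-δ ≤ f ≤ 0}` collapses to `{f = 0}`. -/
def IsLayerBound {n : ℕ} (f ψ : Euc n → ℝ) (D : Set (Euc n)) (a : ℝ≥0∞) : Prop :=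
  ∀ ε ≠ 0, ∀ᶠ δ in 𝓝[>] 0, ∫⁻ x in D, ENNReal.ofReal (layerWeight δ (f x) * ψ x) ≤ a + ε

namespace IsLayerBound

variable {n : ℕ} {f ψ : Euc n → ℝ} {D D' : Set (Euc n)} {a a' : ℝ≥0∞}

lemma mono (h : IsLayerBound f ψ D a) (ha : a ≤ a') : IsLayerBound f ψ D a' := fun ε hε =>
  (h ε hε).mono fun _ hδ => hδ.trans (by gcongr)

lemma union (h : IsLayerBound f ψ D a) (h' : IsLayerBound f ψ D' a') :
    IsLayerBound f ψ (D ∪ D') (a + a') := fun ε hε => by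
  filter_upwards [h (ε / 2) (ENNReal.half_pos hε).ne', h' (ε / 2) (ENNReal.half_pos hε).ne']
    with δ hδ hδ'
  calc _ ≤ (a + ε / 2) + (a' + ε / 2) := (lintegral_union_le _ _ _).trans (add_le_add hδ hδ')
    _ = a + a' + ε := by rw [add_add_add_comm, ENNReal.add_halves]

lemma of_forall_add (h : ∀ η ≠ 0, IsLayerBound f ψ D (a + η)) : IsLayerBound f ψ D a :=
  fun ε hε => by
    filter_upwards [h (ε / 2) (ENNReal.half_pos hε).ne' (ε / 2) (ENNReal.half_pos hε).ne'] with δ hδ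
    rwa [add_assoc, ENNReal.add_halves] at hδ

lemma univ_of_subset (h : IsLayerBound f ψ D a) (hf : Continuous f) (hL : IsCompact {x | f x ≤ 0})
    (hD : f ⁻¹' {0} ⊆ interior D) : IsLayerBound f ψ univ a := fun ε hε => by
  filter_upwards [h ε hε, self_mem_nhdsWithin, eventually_inter_preimage_Icc_subset hf hL
    isOpen_interior (inter_subset_right.trans hD)] with δ hδ hδ0 hlayer
  rw [← setLIntegral_inter_layer hf ψ hδ0]
  exact (lintegral_mono_set fun x hx => interior_subset (hlayer ⟨hx.2.2, hx.2⟩)).trans hδ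

end IsLayerBound

lemma exists_isCompact_union_eq_of_subset_union {α : Type*} [PseudoMetricSpace α]
    [MeasurableSpace α] [BorelSpace α] (μ : Measure α) [SFinite μ] {D U V : Set α}
    (hD : IsCompact D) (hU : IsOpen U) (hV : IsOpen V) (hDUV : D ⊆ U ∪ V) :
    ∃ D₁ D₂, IsCompact D₁ ∧ IsCompact D₂ ∧ D₁ ⊆ U ∧ D₂ ⊆ V ∧ D₁ ∪ D₂ = D ∧ AEDisjoint μ D₁ D₂ := by
  obtain ⟨ρ, hρ, hρV⟩ := (hD.diff hU).exists_cthickening_subset_open hV (sdiff_subset_iff.2 hDUV)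
  obtain ⟨r, hr, hnull⟩ := exists_null_frontiers_thickening μ (D \ U)
  obtain ⟨k, hk⟩ := (hr.eventually (gt_mem_nhds hρ)).exists
  set W := thickening (r k) (D \ U)
  have hWo : IsOpen W := isOpen_thickening
  have hDW : D \ U ⊆ W := self_subset_thickening (hnull k).1 _
  have hWV : closure W ⊆ V :=
    (closure_thickening_subset_cthickening _ _).trans ((cthickening_mono hk.le _).trans hρV)
  refine ⟨D \ W, D ∩ closure W, hD.diff hWo, hD.inter_right isClosed_closure, ?_,
    inter_subset_right.trans hWV, ?_, ?_⟩
  · exact sdiff_subset_comm.1 hDW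
  · refine subset_antisymm (union_subset sdiff_subset inter_subset_left) fun x hx => ?_
    by_cases hxW : x ∈ W
    exacts [Or.inr ⟨hx, subset_closure hxW⟩, Or.inl ⟨hx, hxW⟩]
  · refine measure_mono_null ?_ (hnull k).2
    rw [hWo.frontier_eq]
    exact fun x hx => ⟨hx.2.2, hx.1.2⟩

lemma IsLayerBound.exists_isOpen_of_forall_nhds {n : ℕ} {f ψ : Euc n → ℝ} {g : Euc n → ℝ≥0∞}
    {μ : Measure (Euc n)} [SFinite μ] {Z : Set (Euc n)} (hZ : IsCompact Z)
    (h : ∀ x ∈ Z, ∃ U ∈ 𝓝 x, ∀ D ⊆ U, IsCompact D → IsLayerBound f ψ D (∫⁻ x in D, g x ∂μ)) :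
    ∃ U, IsOpen U ∧ Z ⊆ U ∧ ∀ D ⊆ U, IsCompact D → IsLayerBound f ψ D (∫⁻ x in D, g x ∂μ) := by
  refine hZ.induction_on (p := fun S => ∃ U, IsOpen U ∧ S ⊆ U ∧ ∀ D ⊆ U, IsCompact D →
    IsLayerBound f ψ D (∫⁻ x in D, g x ∂μ)) ?_ ?_ ?_ ?_
  · refine ⟨∅, isOpen_empty, subset_rfl, fun D hD _ ε _ => ?_⟩
    simp [subset_empty_iff.1 hD]
  · exact fun S T hST ⟨U, hU, hTU, hbound⟩ => ⟨U, hU, hST.trans hTU, hbound⟩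
  · rintro S T ⟨U, hU, hSU, hUbound⟩ ⟨V, hV, hTV, hVbound⟩
    refine ⟨U ∪ V, hU.union hV, union_subset_union hSU hTV, fun D hDUV hD => ?_⟩
    obtain ⟨D₁, D₂, hD₁, hD₂, hD₁U, hD₂V, rfl, hdisj⟩ :=
      exists_isCompact_union_eq_of_subset_union μ hD hU hV hDUV
    rw [Measure.restrict_union₀ hdisj hD₂.measurableSet.nullMeasurableSet, lintegral_add_measure]
    exact (hUbound D₁ hD₁U hD₁).union (hVbound D₂ hD₂V hD₂)
  · intro x hx
    obtain ⟨U, hU, hbound⟩ := h x hx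
    exact ⟨interior U, mem_nhdsWithin_of_mem_nhds (interior_mem_nhds.2 hU), interior U,
      isOpen_interior, subset_rfl, fun D hD => hbound D (hD.trans interior_subset)⟩

section LayerLimit

variable {m : ℕ} {f ψ : Euc (m + 1) → ℝ}

lemma setLIntegral_layerWeight_mul_le (b : OrthonormalBasis (Fin (m + 1)) ℝ (Euc (m + 1)))
    (hf : ContDiff ℝ 1 f) {M δ : ℝ} {B D : Set (Euc (m + 1))} (hB : Convex ℝ B) (hDB : D ⊆ B)
    (hD : IsCompact D) (hv : ∀ x ∈ B, 0 ≤ ⟪gradient f x, b 0⟫)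
    (hψ : ∀ x ∈ D, ψ x ≤ M * ⟪gradient f x, b 0⟫) (hM : 0 ≤ M) (hδ : 0 < δ) :
    ∫⁻ x in D, ENNReal.ofReal (layerWeight δ (f x) * ψ x) ≤
      ENNReal.ofReal M * volume (tailCoords b '' (D ∩ f ⁻¹' Icc (-δ) 0)) := by
  have hlayer : IsCompact (D ∩ f ⁻¹' Icc (-δ) 0) :=
    hD.inter_right (isClosed_Icc.preimage hf.continuous)
  calc ∫⁻ x in D, ENNReal.ofReal (layerWeight δ (f x) * ψ x)
      ≤ ∫⁻ x in D ∩ f ⁻¹' Icc (-δ) 0, ENNReal.ofReal M *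
          ENNReal.ofReal (layerWeight δ (f x) * ⟪gradient f x, b 0⟫) := by
        rw [← setLIntegral_inter_layer hf.continuous ψ hδ]
        refine setLIntegral_mono' hlayer.measurableSet fun x hx => ?_
        rw [← ENNReal.ofReal_mul hM, mul_left_comm]
        exact ENNReal.ofReal_le_ofReal
          (mul_le_mul_of_nonneg_left (hψ x hx.1) (layerWeight_nonneg hδ _))
    _ = ENNReal.ofReal M * ∫⁻ x in D ∩ f ⁻¹' Icc (-δ) 0,
          ENNReal.ofReal (layerWeight δ (f x) * ⟪gradient f x, b 0⟫) :=
        lintegral_const_mul' _ _ ENNReal.ofReal_ne_top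
    _ ≤ ENNReal.ofReal M * volume (tailCoords b '' (D ∩ f ⁻¹' Icc (-δ) 0)) := by
        gcongr
        exact setLIntegral_neg_deriv_mul_inner_le b hf ((contDiff_cutoffProfile δ).pow 2)
          (antitone_cutoffProfile_sq hδ)
          (fun s => ⟨sq_nonneg _,
            pow_le_one₀ (cutoffProfile_nonneg _ _) (cutoffProfile_le_one _ _)⟩)
          hB (inter_subset_left.trans hDB) hlayer hv

lemma isLayerBound_of_le_mul_inner (b : OrthonormalBasis (Fin (m + 1)) ℝ (Euc (m + 1)))
    (hf : ContDiff ℝ 1 f) {M : ℝ} {B D : Set (Euc (m + 1))} (hB : Convex ℝ B) (hDB : D ⊆ B)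
    (hD : IsCompact D) (hv : ∀ x ∈ B, 0 ≤ ⟪gradient f x, b 0⟫)
    (hψ : ∀ x ∈ D, ψ x ≤ M * ⟪gradient f x, b 0⟫) (hM : 0 ≤ M) :
    IsLayerBound f ψ D (ENNReal.ofReal M * μH[(m : ℝ)] (D ∩ f ⁻¹' {0})) := fun ε hε => by
  have htail := (lipschitzWith_tailCoords b).continuous
  have hcompact : IsCompact (tailCoords b '' (D ∩ f ⁻¹' {0})) :=
    (hD.inter_right (isClosed_singleton.preimage hf.continuous)).image htail
  obtain ⟨ε', hε', hε'ε⟩ := ENNReal.exists_nnreal_pos_mul_lt (a := ENNReal.ofReal M)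
    ENNReal.ofReal_ne_top hε
  obtain ⟨U, hU, hUo, hUv⟩ := hcompact.exists_isOpen_lt_add (μ := volume)
    (ENNReal.coe_ne_zero.2 hε'.ne')
  filter_upwards [self_mem_nhdsWithin, eventually_inter_preimage_Icc_subset hf.continuous hD
    (hUo.preimage htail) (image_subset_iff.1 hU)] with δ hδ hδU
  calc ∫⁻ x in D, ENNReal.ofReal (layerWeight δ (f x) * ψ x)
      ≤ ENNReal.ofReal M * volume (tailCoords b '' (D ∩ f ⁻¹' Icc (-δ) 0)) :=
        setLIntegral_layerWeight_mul_le b hf hB hDB hD hv hψ hM hδ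
    _ ≤ ENNReal.ofReal M * (volume (tailCoords b '' (D ∩ f ⁻¹' {0})) + ε') := by
        gcongr
        exact (measure_mono (image_subset_iff.2 hδU)).trans hUv.le
    _ ≤ ENNReal.ofReal M * (μH[(m : ℝ)] (D ∩ f ⁻¹' {0}) + ε') := by
        gcongr
        exact volume_image_tailCoords_le b _
    _ ≤ ENNReal.ofReal M * μH[(m : ℝ)] (D ∩ f ⁻¹' {0}) + ε := by
        rw [mul_add, mul_comm _ (ε' : ℝ≥0∞)]
        gcongr

lemma exists_nhds_isLayerBound (hf : ContDiff ℝ 1 f) (hψ : Continuous ψ) (hψ0 : ∀ x, 0 ≤ ψ x)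
    {x₀ : Euc (m + 1)} (hg : gradient f x₀ ≠ 0) {η : NNReal} (hη : 0 < η) :
    ∃ U ∈ 𝓝 x₀, ∀ D ⊆ U, IsCompact D → IsLayerBound f ψ D
      (∫⁻ x in D ∩ f ⁻¹' {0}, (ENNReal.ofReal (ψ x / ‖gradient f x‖) + η) ∂μH[(m : ℝ)]) := by
  have hgrad := continuous_gradient hf
  have hg0 : 0 < ‖gradient f x₀‖ := norm_pos_iff.2 hg
  obtain ⟨b, hb⟩ := exists_orthonormalBasis_norm_smul_eq hg
  have hinner : ⟪gradient f x₀, b 0⟫ = ‖gradient f x₀‖ := by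
    nth_rw 1 [← hb]
    simp [real_inner_smul_left]
  set M := ψ x₀ / ‖gradient f x₀‖ + η / 2 with hM
  have hη' : (0 : ℝ) < η := hη
  have hM0 : 0 ≤ M := add_nonneg (div_nonneg (hψ0 x₀) hg0.le) (half_pos hη').le
  have hpos : ∀ᶠ x in 𝓝 x₀, 0 < ⟪gradient f x, b 0⟫ :=
    (hgrad.inner continuous_const).continuousAt.eventually (lt_mem_nhds (hg0.trans_eq hinner.symm))
  have hψM : ∀ᶠ x in 𝓝 x₀, ψ x < M * ⟪gradient f x, b 0⟫ := by
    refine hψ.continuousAt.eventually_lt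
      (continuous_const.mul (hgrad.inner continuous_const)).continuousAt ?_
    rw [hinner, hM, add_mul, div_mul_cancel₀ _ hg0.ne']
    exact lt_add_of_pos_right _ (by positivity)
  have hMη : ∀ᶠ x in 𝓝 x₀, M < ψ x / ‖gradient f x‖ + η :=
    continuousAt_const.eventually_lt ((hψ.continuousAt.div hgrad.norm.continuousAt hg0.ne').add
      continuousAt_const) (by rw [hM]; linarith)
  obtain ⟨r, hr, hball⟩ := Metric.nhds_basis_ball.eventually_iff.1 ((hpos.and hψM).and hMη)
  refine ⟨ball x₀ r, ball_mem_nhds x₀ hr, fun D hDr hD => ?_⟩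
  refine (isLayerBound_of_le_mul_inner b hf (convex_ball x₀ r) hDr hD
    (fun x hx => (hball hx).1.1.le) (fun x hx => (hball (hDr hx)).1.2.le) hM0).mono ?_
  rw [← setLIntegral_const]
  refine setLIntegral_mono' (hD.inter_right
    (isClosed_singleton.preimage hf.continuous)).measurableSet fun x hx => ?_
  rw [← ENNReal.ofReal_coe_nnreal, ← ENNReal.ofReal_add (div_nonneg (hψ0 x) (norm_nonneg _))
    η.coe_nonneg]
  exact ENNReal.ofReal_le_ofReal (hball (hDr hx.1)).2.le

lemma hausdorffMeasure_levelSet_lt_top (hf : ContDiff ℝ 1 f) {a : ℝ} (hZ : IsCompact (f ⁻¹' {a}))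
    (hg : ∀ x, f x = a → gradient f x ≠ 0) : μH[(m : ℝ)] (f ⁻¹' {a}) < ⊤ :=
  hZ.measure_lt_top_of_nhdsWithin fun x hx => finiteAtFilter_hausdorffMeasure_levelSet
    (hf.contDiffAt.hasStrictFDerivAt one_ne_zero) (hg x hx) a

theorem isLayerBound_univ (hf : ContDiff ℝ 1 f) (hL : IsCompact {x | f x ≤ 0})
    (hg : ∀ x, f x = 0 → gradient f x ≠ 0) (hψ : Continuous ψ) (hψ0 : ∀ x, 0 ≤ ψ x) :
    IsLayerBound f ψ univ
      (∫⁻ x in f ⁻¹' {0}, ENNReal.ofReal (ψ x / ‖gradient f x‖) ∂μH[(m : ℝ)]) := by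
  set Z := f ⁻¹' {0}
  have hZc : IsClosed Z := isClosed_singleton.preimage hf.continuous
  have hZ : IsCompact Z := hL.of_isClosed_subset hZc fun x (hx : f x = 0) => hx.le
  have hZfin := hausdorffMeasure_levelSet_lt_top hf hZ hg
  have : IsFiniteMeasure (μH[(m : ℝ)].restrict Z) := ⟨by rwa [Measure.restrict_apply_univ]⟩
  refine IsLayerBound.of_forall_add fun ε hε => ?_
  obtain ⟨η, hη, hηε⟩ := ENNReal.exists_nnreal_pos_mul_lt hZfin.ne hε
  obtain ⟨U, hU, hZU, hbound⟩ := IsLayerBound.exists_isOpen_of_forall_nhds (f := f) (ψ := ψ)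
    (g := fun x => ENNReal.ofReal (ψ x / ‖gradient f x‖) + η) (μ := μH[(m : ℝ)].restrict Z) hZ
    fun x hx => by
      obtain ⟨U, hU, hbound⟩ := exists_nhds_isLayerBound hf hψ hψ0 (hg x hx) hη
      refine ⟨U, hU, fun D hDU hD => ?_⟩
      rw [Measure.restrict_restrict hD.measurableSet]
      exact hbound D hDU hD
  obtain ⟨D, hD, hZD, hDU⟩ := exists_compact_between hZ hU hZU
  refine ((hbound D hDU hD).univ_of_subset hf.continuous hL hZD).mono ?_
  calc _ ≤ ∫⁻ x in Z, (ENNReal.ofReal (ψ x / ‖gradient f x‖) + η) ∂μH[(m : ℝ)] :=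
        lintegral_mono' Measure.restrict_le_self le_rfl
    _ = (∫⁻ x in Z, ENNReal.ofReal (ψ x / ‖gradient f x‖) ∂μH[(m : ℝ)]) + η * μH[(m : ℝ)] Z := by
        rw [lintegral_add_right _ measurable_const, setLIntegral_const]
    _ ≤ _ := by gcongr

end LayerLimit

/-! ### A cutoff with small anisotropic total variation -/

section Cutoff

lemma gradient_cutoffProfile_comp {n : ℕ} {f : Euc n → ℝ} {x : Euc n} (hf : DifferentiableAt ℝ f x)
    (δ : ℝ) : gradient (fun x => cutoffProfile δ (f x)) x =
      deriv (cutoffProfile δ) (f x) • gradient f x := by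
  have hcomp : HasFDerivAt (fun x => cutoffProfile δ (f x))
      (deriv (cutoffProfile δ) (f x) • fderiv ℝ f x) x :=
    ((contDiff_cutoffProfile δ).differentiable one_ne_zero _).hasDerivAt.comp_hasFDerivAt x
      hf.hasFDerivAt
  rw [gradient, hcomp.fderiv, map_smul, gradient]

lemma anisoNorm_neg_smul_gradient_cutoffProfile_comp {n : ℕ} (K : Set (Euc n)) {f : Euc n → ℝ}
    {x : Euc n} (hf : DifferentiableAt ℝ f x) {δ : ℝ} (hδ : 0 < δ) :
    anisoNorm K (-((2 * cutoffProfile δ (f x)) • gradient (fun x => cutoffProfile δ (f x)) x)) =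
      layerWeight δ (f x) * anisoNorm K (gradient f x) := by
  rw [gradient_cutoffProfile_comp hf, smul_smul, ← neg_smul, ← layerWeight_eq,
    anisoNorm_smul K (layerWeight_nonneg hδ _)]

lemma tendsto_cutoffProfile (s : ℝ) :
    Filter.Tendsto (fun δ => cutoffProfile δ s) (𝓝[>] 0) (𝓝 ((Iio 0).indicator 1 s)) := by
  refine tendsto_const_nhds.congr' ?_
  rcases lt_or_ge s 0 with hs | hs
  · filter_upwards [Ioo_mem_nhdsGT (neg_pos.2 hs)] with δ hδ
    rw [indicator_of_mem (mem_Iio.2 hs), cutoffProfile_of_le_neg hδ.1 (le_neg.1 hδ.2.le),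
      Pi.one_apply]
  · filter_upwards [self_mem_nhdsWithin] with δ hδ
    rw [indicator_of_notMem (notMem_Iio.2 hs), cutoffProfile_of_nonneg hδ hs]

lemma tendsto_integral_cutoffProfile_sq {n : ℕ} {f : Euc n → ℝ} (hf : Continuous f)
    (hL : IsCompact {x | f x ≤ 0}) :
    Filter.Tendsto (fun δ : ℝ => ∫ x, cutoffProfile δ (f x) ^ 2) (𝓝[>] 0)
      (𝓝 (volume {x | f x < 0}).toReal) := by
  have hE : MeasurableSet {x | f x < 0} := (isOpen_lt hf continuous_const).measurableSet
  have hvol : (volume {x | f x < 0}).toReal = ∫ x, ((Iio 0).indicator 1 (f x) : ℝ) ^ 2 := by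
    rw [← Measure.real, ← integral_indicator_one hE]
    congr 1 with x
    by_cases hx : f x < 0 <;> simp [indicator, hx]
  rw [hvol]
  refine tendsto_integral_filter_of_dominated_convergence ({x | f x ≤ 0}.indicator 1)
    (.of_forall fun δ => ?_) ?_
    ((integrableOn_const hL.measure_lt_top.ne).integrable_indicator hL.measurableSet)
    (.of_forall fun x => (tendsto_cutoffProfile (f x)).pow 2)
  · exact (((contDiff_cutoffProfile δ).continuous.comp hf).pow 2).aestronglyMeasurable
  · filter_upwards [self_mem_nhdsWithin] with δ hδ
    refine .of_forall fun x => ?_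
    rw [Real.norm_eq_abs, abs_of_nonneg (sq_nonneg _)]
    by_cases hx : f x ≤ 0
    · rw [indicator_of_mem (by exact hx), Pi.one_apply]
      exact pow_le_one₀ (cutoffProfile_nonneg _ _) (cutoffProfile_le_one _ _)
    · rw [cutoffProfile_of_nonneg hδ (not_le.1 hx).le]
      simp [hx]

lemma lintegral_anisoNorm_gradient_div_norm_eq {n : ℕ} {K : Set (Euc n)} (hK : IsCompact K)
    (h0 : 0 ∈ K) {f : Euc n → ℝ} (hf : ContDiff ℝ 1 f) {Z : Set (Euc n)} (hZ : MeasurableSet Z)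
    {μ : Measure (Euc n)} (hZfin : μ Z < ⊤) (hg : ∀ x ∈ Z, gradient f x ≠ 0) :
    ∫⁻ x in Z, ENNReal.ofReal (anisoNorm K (gradient f x) / ‖gradient f x‖) ∂μ =
      ENNReal.ofReal (∫ x in Z, anisoNorm K (‖gradient f x‖⁻¹ • gradient f x) ∂μ) := by
  have hgrad := continuous_gradient hf
  have : IsFiniteMeasure (μ.restrict Z) := ⟨by rwa [Measure.restrict_apply_univ]⟩
  have hnormal : ContinuousOn (fun x => ‖gradient f x‖⁻¹ • gradient f x) Z :=
    (hgrad.norm.continuousOn.inv₀ fun x hx => norm_ne_zero_iff.2 (hg x hx)).smul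
      hgrad.continuousOn
  obtain ⟨R, hR⟩ := exists_anisoNorm_le_mul_norm hK ⟨0, h0⟩
  have hint : IntegrableOn (fun x => anisoNorm K (‖gradient f x‖⁻¹ • gradient f x)) Z μ := by
    refine Integrable.of_bound (C := R) (((uniformContinuous_anisoNorm hK
      ⟨0, h0⟩).continuous.comp_continuousOn hnormal).aestronglyMeasurable hZ) ?_
    filter_upwards [ae_restrict_mem hZ] with x hx
    rw [Real.norm_eq_abs, abs_of_nonneg (anisoNorm_nonneg hK h0 _)]
    refine (hR _).trans_eq ?_
    rw [norm_smul, norm_inv, norm_norm, inv_mul_cancel₀ (norm_ne_zero_iff.2 (hg x hx)), mul_one]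
  rw [ofReal_integral_eq_lintegral_ofReal hint (.of_forall fun x => anisoNorm_nonneg hK h0 _)]
  refine lintegral_congr fun x => ?_
  rw [anisoNorm_smul K (by positivity), div_eq_inv_mul]

theorem exists_cutoff {m : ℕ} {K : Set (Euc (m + 1))} (hK : IsCompact K) (h0 : 0 ∈ K)
    {f : Euc (m + 1) → ℝ} (hf : ContDiff ℝ 1 f) (hL : IsCompact {x | f x ≤ 0})
    (hg : ∀ x, f x = 0 → gradient f x ≠ 0) {c : ℝ}
    (hc : ∫ y in {x | f x = 0}, anisoNorm K (‖gradient f y‖⁻¹ • gradient f y) ∂μH[(m : ℝ)] <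
      c * (volume {x | f x < 0}).toReal) :
    ∃ w : Euc (m + 1) → ℝ, ContDiff ℝ 1 w ∧ HasCompactSupport w ∧ (∀ x, 0 ≤ w x) ∧
      (∀ x, 0 < w x → f x < 0) ∧
      ∫ x, anisoNorm K (-((2 * w x) • gradient w x)) < c * ∫ x, w x ^ 2 := by
  have hN : Continuous fun x => anisoNorm K (gradient f x) :=
    (uniformContinuous_anisoNorm hK ⟨0, h0⟩).continuous.comp (continuous_gradient hf)
  have hZ : IsClosed {x | f x = 0} := isClosed_eq hf.continuous continuous_const
  set P := ∫ y in {x | f x = 0}, anisoNorm K (‖gradient f y‖⁻¹ • gradient f y) ∂μH[(m : ℝ)]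
  have hP0 : 0 ≤ P := integral_nonneg fun y => anisoNorm_nonneg hK h0 _
  obtain ⟨q, hPq, hq⟩ := exists_between hc
  have hlayer := isLayerBound_univ hf hL hg hN fun x => anisoNorm_nonneg hK h0 _
  change IsLayerBound _ _ _ (∫⁻ x in {x | f x = 0}, _ ∂_) at hlayer
  rw [lintegral_anisoNorm_gradient_div_norm_eq hK h0 hf hZ.measurableSet
    (hausdorffMeasure_levelSet_lt_top hf (hL.of_isClosed_subset hZ fun x hx => hx.le) hg) hg]
    at hlayer
  obtain ⟨δ, ⟨hδP, hδq⟩, hδ⟩ := (((hlayer (ENNReal.ofReal (q - P)) (by simpa using hPq)).and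
    (((tendsto_integral_cutoffProfile_sq hf.continuous hL).const_mul c).eventually
      (lt_mem_nhds hq))).and self_mem_nhdsWithin).exists
  rw [Measure.restrict_univ, ← ENNReal.ofReal_add hP0 (sub_nonneg.2 hPq.le), add_sub_cancel] at hδP
  have hzero (x : Euc (m + 1)) (hx : 0 ≤ f x) : cutoffProfile δ (f x) = 0 :=
    cutoffProfile_of_nonneg hδ hx
  refine ⟨fun x => cutoffProfile δ (f x), (contDiff_cutoffProfile δ).comp hf,
    HasCompactSupport.intro hL fun x hx => hzero x (not_le.1 hx).le,
    fun x => cutoffProfile_nonneg _ _, fun x hx => ?_, lt_of_le_of_lt ?_ hδq⟩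
  · by_contra hfx
    exact hx.ne' (hzero x (not_lt.1 hfx))
  · simp_rw [anisoNorm_neg_smul_gradient_cutoffProfile_comp K
      (hf.differentiable one_ne_zero _) hδ]
    rw [integral_eq_lintegral_of_nonneg_ae (.of_forall fun x => mul_nonneg
      (layerWeight_nonneg hδ _) (anisoNorm_nonneg hK h0 _))
      (((continuous_layerWeight δ).comp hf.continuous).mul hN).aestronglyMeasurable]
    exact ENNReal.toReal_le_of_le_ofReal (hP0.trans hPq.le) hδP

end Cutoff

/-! ### The theorem -/

lemma closure_eq_of_frontier_eq {α : Type*} [TopologicalSpace α] {E : Set α} {f : α → ℝ}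
    (hE : E = {x | f x < 0}) (hfr : frontier E = {x | f x = 0}) : closure E = {x | f x ≤ 0} := by
  rw [closure_eq_self_union_frontier, hfr, hE]
  ext x
  exact (le_iff_lt_or_eq (a := f x)).symm

lemma exists_isDiscreteCoupling_closure {m : ℕ} {K : Set (Euc (m + 1))} (hK : IsCompact K)
    (hKcv : Convex ℝ K) (h0 : 0 ∈ K) {f : Euc (m + 1) → ℝ} (hf : ContDiff ℝ 1 f)
    (hL : IsCompact {x | f x ≤ 0}) (hg : ∀ x, f x = 0 → gradient f x ≠ 0) {c : ℝ}
    (hc : ∫ y in {x | f x = 0}, anisoNorm K (‖gradient f y‖⁻¹ • gradient f y) ∂μH[(m : ℝ)] <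
      c * (volume {x | f x < 0}).toReal) {ε : ℝ} (hε : 0 < ε) :
    ∃ h, 0 < h ∧ h < ε ∧ ∃ φ, IsDiscreteCoupling K {x | f x ≤ 0} (gridStep h) (c * h ^ 2) φ := by
  obtain ⟨w, hw, hwc, hw0, hwE, hwI⟩ := exists_cutoff hK h0 hf hL hg hc
  obtain ⟨h, hpos, hlt, φ, hφ⟩ :=
    exists_isDiscreteCoupling_gridStep hK hKcv h0 hw hwc hw0 hwI hε
  exact ⟨h, hpos, hlt, φ, hφ.mono fun x hx => (hwE x hx).le⟩

theorem stmt_9_general {n : ℕ} (hn : 1 ≤ n) {K : Set (Euc n)} (hK : IsCompact K)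
    (hKcv : Convex ℝ K) (h0 : 0 ∈ K) {E : Set (Euc n)} (hEb : Bornology.IsBounded E)
    (hEne : E.Nonempty) {f : Euc n → ℝ} (hf : ContDiff ℝ 1 f) (hEf : E = {x | f x < 0})
    (hfr : frontier E = {x | f x = 0}) (hfd : ∀ x ∈ frontier E, gradient f x ≠ 0) :
    ∃ φ : Euc n → ℝ, ConvexOn ℝ univ φ ∧
      ContDiff ℝ 1 φ ∧ (∃ L : NNReal, LipschitzWith L (fun x => gradient φ x)) ∧
      (fun x => gradient φ x) '' univ = K ∧
      (fun x => gradient φ x) '' closure E = K ∧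
      ∀ᵐ x ∂(volume : Measure (Euc n)),
        DifferentiableAt ℝ (fderiv ℝ φ) x ∧
        lapl φ x ≤
          (∫ y in frontier E, anisoNorm K (‖gradient f y‖⁻¹ • gradient f y)
              ∂(μH[(n : ℝ) - 1])) / (volume E).toReal := by
  obtain ⟨m, rfl⟩ := Nat.exists_eq_add_of_le' hn
  have hcl := closure_eq_of_frontier_eq hEf hfr
  have hL : IsCompact {x | f x ≤ 0} := hcl ▸ hEb.isCompact_closure
  have hEo : IsOpen E := hEf ▸ isOpen_lt hf.continuous continuous_const
  have hvol : 0 < (volume E).toReal :=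
    ENNReal.toReal_pos (hEo.measure_pos volume hEne).ne' hEb.measure_lt_top.ne
  rw [Nat.cast_add_one, add_sub_cancel_right, hcl]
  set c := (∫ y in frontier E, anisoNorm K (‖gradient f y‖⁻¹ • gradient f y) ∂μH[(m : ℝ)]) /
    (volume E).toReal with hc
  have hcoupling (k : ℕ) := exists_isDiscreteCoupling_closure hK hKcv h0 hf hL
    (fun x hx => hfd x (by rw [hfr]; exact hx))
    (c := c + 1 / ((k : ℝ) + 1)) (by
      rw [← hfr, ← hEf, ← div_lt_iff₀ hvol, ← hc]
      exact lt_add_of_pos_right c Nat.one_div_pos_of_nat) (Nat.one_div_pos_of_nat (n := k))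
  choose h hpos hlt φ hφ using hcoupling
  have hlim := tendsto_one_div_add_atTop_nhds_zero_nat (𝕜 := ℝ)
  exact exists_convexOn_lapl_le_of_isDiscreteCoupling hK hKcv ⟨0, h0⟩ hL hφ hpos
    (squeeze_zero (fun k => (hpos k).le) (fun k => (hlt k).le) hlim)
    (by simpa using hlim.const_add c)

/-- Existence of the "anisotropic coupling": a `C^{1,1}` convex function whose
gradient maps `ℝⁿ` (and `cl E`) onto `K` and whose Laplacian is bounded by
`Per_K(E)/|E|`. Here the bounded connected open set `E` has smooth boundary
given by a defining function `f`, whose normalized gradient on `∂E` is the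
outer unit normal. -/
theorem stmt_9 {n : ℕ} (hn : 1 ≤ n)
    (K : Set (Euc n)) (hKcp : IsCompact K) (hKcv : Convex ℝ K)
    (hK0 : (0 : Euc n) ∈ interior K)
    (E : Set (Euc n)) (hEo : IsOpen E) (hEb : Bornology.IsBounded E) (hEc : IsConnected E)
    (f : Euc n → ℝ) (hf : ContDiff ℝ (⊤ : ℕ∞) f) (hEf : E = {x | f x < 0})
    (hfr : frontier E = {x | f x = 0}) (hfd : ∀ x ∈ frontier E, gradient f x ≠ 0) :
    ∃ φ : Euc n → ℝ, ConvexOn ℝ univ φ ∧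
      ContDiff ℝ 1 φ ∧ (∃ L : NNReal, LipschitzWith L (fun x => gradient φ x)) ∧
      (fun x => gradient φ x) '' univ = K ∧
      (fun x => gradient φ x) '' closure E = K ∧
      ∀ᵐ x ∂(volume : Measure (Euc n)),
        DifferentiableAt ℝ (fderiv ℝ φ) x ∧
        lapl φ x ≤
          (∫ y in frontier E, anisoNorm K (‖gradient f y‖⁻¹ • gradient f y)
              ∂(μH[(n : ℝ) - 1])) / (volume E).toReal := by
  exact stmt_9_general hn hKcp hKcv (interior_subset hK0) hEb hEc.nonempty
    (hf.of_le (by exact_mod_cast le_top)) hEf hfr hfd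
end
end
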